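/- Let W : U ⊂ ℝᵏ → ℝ be real analytic near 0 with ∇W(0) = 0. Then there exist a neighborhood of 0 and an exponent α ∈ (1, 2) such that |∇W(x)|² ≥ |W(x) - W(0)|^α on that neighborhood. -/

import Mathlib

open Filter Real
set_option linter.unusedSectionVars false
set_option linter.unusedVariables false


namespace Loj
open Polynomial

section Abstract
variable {K : Type*} [Field K] [LinearOrder K] [IsStrictOrderedRing K] (O : ValuationSubring K)

/-- convexity of the valuation ring -/
def Conv : Prop := ∀ x y : K, |x| ≤ |y| → y ∈ O → x ∈ O

/-- intermediate value property for polynomials -/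
def IVP (K : Type*) [Field K] [LinearOrder K] : Prop :=
  ∀ (Q : K[X]) (s t : K), Q.eval s * Q.eval t ≤ 0 → ∃ w ∈ Set.uIcc s t, Q.eval w = 0

variable {O}

lemma Conv.val_le (h : Conv O) {x y : K} (hxy : |x| ≤ |y|) : O.valuation x ≤ O.valuation y := by
  by_cases hy : y = 0
  · subst hy
    have : x = 0 := by simpa using hxy
    simp [this]
  · have hm : x / y ∈ O := by
      apply h _ 1 _ O.one_mem
      rw [abs_div, abs_one]
      exact div_le_one_of_le₀ hxy (abs_nonneg _)
    have := (O.valuation_le_one_iff _).2 hm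
    rw [map_div₀] at this
    have hy' : 0 < O.valuation y := by
      simpa [zero_lt_iff] using hy
    exact (div_le_one₀ hy').1 this

lemma Conv.abs_lt_one (h : Conv O) {x : K} (hx : O.valuation x < 1) : |x| < 1 := by
  by_contra hc
  push Not at hc
  have := h.val_le (x := 1) (y := x) (by simpa using hc)
  rw [map_one] at this
  exact absurd hx (not_lt.2 this)

lemma val_sub_field {k : Subfield K} (hk : ∀ x ∈ k, x ∈ O) {x : K} (hx : x ∈ k) (h0 : x ≠ 0) :
    O.valuation x = 1 := by
  apply le_antisymm ((O.valuation_le_one_iff _).2 (hk x hx))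
  have := (O.valuation_le_one_iff _).2 (hk x⁻¹ (k.inv_mem hx))
  rw [map_inv₀] at this
  have hy' : 0 < O.valuation x := by simpa [zero_lt_iff] using h0
  exact (inv_le_one₀ hy').1 this

/-- inclusion of k into O -/
def incl {k : Subfield K} (hk : ∀ x ∈ k, x ∈ O) : k →+* O where
  toFun x := ⟨x, hk x x.2⟩
  map_one' := rfl
  map_mul' _ _ := rfl
  map_zero' := rfl
  map_add' _ _ := rfl

lemma aeval_coe {k : Subfield K} (hk : ∀ x ∈ k, x ∈ O) (u : O) (Q : k[X]) :
    aeval (u : K) Q = ((Q.map (incl hk)).eval u : O) := by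
  rw [eval_map, aeval_def]
  have := Polynomial.hom_eval₂ Q (incl hk) (O.subtype) u
  rw [show ((eval₂ (incl hk) u Q : O) : K) = O.subtype (eval₂ (incl hk) u Q) from rfl, this]
  rfl

lemma aeval_mem {k : Subfield K} (hk : ∀ x ∈ k, x ∈ O) {u : K} (hu : u ∈ O) (Q : k[X]) :
    aeval u Q ∈ O := by
  have := aeval_coe hk ⟨u, hu⟩ Q
  simp only at this
  rw [this]; exact Subtype.property _

lemma val_algebraic {k : Subfield K} (hk : ∀ x ∈ k, x ∈ O) {x : K} (hx : IsAlgebraic k x) :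
    x ∈ O := by
  have hi : IsIntegral O x := by
    rw [isAlgebraic_iff_isIntegral] at hx
    obtain ⟨p, hp, h0⟩ := hx
    refine ⟨p.map (incl hk), hp.map _, ?_⟩
    rw [eval₂_map]
    exact h0
  obtain ⟨y, hy⟩ := (IsIntegrallyClosed.isIntegral_iff (R := O) (K := K)).1 hi
  rw [← hy]
  exact y.2

/-- Hensel-type lemma. -/
lemma hensel (hc : Conv O) (hivt : IVP K) {k : Subfield K} (hk : ∀ x ∈ k, x ∈ O) {u : K}
    (hu : u ∈ O) {Q : k[X]} (hQ : Q ≠ 0) (hQu : O.valuation (aeval u Q) < 1) :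
    ∃ w : K, aeval w Q = 0 ∧ O.valuation (u - w) < 1 := by
  classical
  have hex : ∃ n, ∃ p : k[X], p ≠ 0 ∧ O.valuation (aeval u p) < 1 ∧ p.natDegree = n :=
    ⟨_, Q, hQ, hQu, rfl⟩
  obtain ⟨p, hp0, hpu, hpn⟩ := Nat.find_spec hex
  have hmin : ∀ q : k[X], O.valuation (aeval u q) < 1 → q.natDegree < p.natDegree → q = 0 := by
    intro q hq hlt
    by_contra h0
    exact Nat.find_min hex (hpn ▸ hlt) ⟨q, h0, hq, rfl⟩
  have hpd : p.natDegree ≠ 0 := by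
    intro h
    obtain ⟨a, ha⟩ := natDegree_eq_zero.1 h
    subst ha
    rw [aeval_C] at hpu
    have : O.valuation (algebraMap k K a) = 1 :=
      val_sub_field hk a.2 (by
        intro h
        apply hp0
        have : a = 0 := Subtype.ext h
        simp [this])
    exact absurd hpu (by rw [this]; exact lt_irrefl _)
  have hdvd : p ∣ Q := by
    rw [← EuclideanDomain.mod_eq_zero]
    apply hmin
    · have : Q % p = Q - p * (Q / p) := by
        rw [eq_sub_iff_add_eq, add_comm]; exact EuclideanDomain.div_add_mod Q p
      rw [this, map_sub, map_mul]
      refine lt_of_le_of_lt (Valuation.map_sub _ _ _) (max_lt hQu ?_)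
      rw [map_mul]
      exact mul_lt_one_of_lt_of_le hpu ((O.valuation_le_one_iff _).2 (aeval_mem hk hu _))
    · exact natDegree_mod_lt Q hpd
  have hpw : ∃ w : K, aeval w p = 0 ∧ O.valuation (u - w) < 1 := by
    have hder : O.valuation (aeval u (derivative p)) = 1 := by
      apply le_antisymm ((O.valuation_le_one_iff _).2 (aeval_mem hk hu _))
      by_contra hlt
      push Not at hlt
      have h1 := hmin _ hlt (natDegree_derivative_lt hpd)
      exact hpd (Polynomial.derivative_eq_zero.1 h1)
    set α := aeval u p with hα
    set β := aeval u (derivative p) with hβ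
    have hβ0 : β ≠ 0 := by
      intro h; rw [h] at hder; simp at hder
    set s : K := -2 * α / β with hs
    have hvs : O.valuation s < 1 := by
      rw [hs, map_div₀, hder, div_one, map_mul]
      rw [mul_comm]; refine mul_lt_one_of_lt_of_le hpu ?_
      rw [O.valuation_le_one_iff]
      have : (-2 : K) = -(1 + 1) := by norm_num
      rw [this]
      exact O.neg_mem _ (O.add_mem _ _ O.one_mem O.one_mem)
    have hsO : s ∈ O := (O.valuation_le_one_iff _).1 hvs.le
    obtain ⟨κ, hκ⟩ := Polynomial.binomExpansion (p.map (incl hk)) ⟨u, hu⟩ ⟨s, hsO⟩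
    have e1 : aeval (u + s) p = α + β * s + (κ : K) * s ^ 2 := by
      have h1 := aeval_coe hk (⟨u, hu⟩ + ⟨s, hsO⟩) p
      rw [hκ] at h1
      have h2 := aeval_coe hk ⟨u, hu⟩ p
      have h3 := aeval_coe hk ⟨u, hu⟩ (derivative p)
      rw [← derivative_map] at h3
      push_cast at h1
      rw [← h2, ← h3] at h1
      exact h1
    have e2 : aeval (u + s) p = α * (-1 + 4 * κ * α / β ^ 2) := by
      rw [e1, hs]; field_simp; ring
    have e3 : |4 * κ * α / β ^ 2| < 1 := by
      apply hc.abs_lt_one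
      rw [map_div₀, map_pow, hder, one_pow, div_one, map_mul]
      rw [mul_comm]; refine mul_lt_one_of_lt_of_le hpu ?_
      rw [O.valuation_le_one_iff]
      apply O.mul_mem _ _ _ κ.2
      have : (4 : K) = (1 + 1) + (1 + 1) := by norm_num
      rw [this]
      exact O.add_mem _ _ (O.add_mem _ _ O.one_mem O.one_mem) (O.add_mem _ _ O.one_mem O.one_mem)
    have e4 : aeval u p * aeval (u + s) p ≤ 0 := by
      rw [e2, ← hα]
      have : α * (α * (-1 + 4 * κ * α / β ^ 2)) = -(α ^ 2 * (1 - 4 * κ * α / β ^ 2)) := by ring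
      rw [this, neg_nonpos]
      apply mul_nonneg (sq_nonneg _)
      have := (abs_lt.1 e3).2
      linarith
    have hmapeval : ∀ x : K, (p.map (algebraMap k K)).eval x = aeval x p := by
      intro x; rw [eval_map, aeval_def]
    obtain ⟨w, hw, hw0⟩ := hivt (p.map (algebraMap k K)) u (u + s) (by
      rw [hmapeval, hmapeval]; exact e4)
    refine ⟨w, by rw [← hmapeval]; exact hw0, ?_⟩
    refine lt_of_le_of_lt (hc.val_le ?_) hvs
    have := Set.abs_sub_left_of_mem_uIcc hw
    rw [abs_sub_comm]
    simpa using this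
  obtain ⟨w, hw, hw'⟩ := hpw
  obtain ⟨q, rfl⟩ := hdvd
  exact ⟨w, by rw [map_mul, hw, zero_mul], hw'⟩

end Abstract
end Loj

namespace Loj
open Polynomial

section Puiseux
variable {K : Type*} [Field K] [LinearOrder K] [IsStrictOrderedRing K] {O : ValuationSubring K}
variable {k : Subfield K}

/-- evaluation at two points -/
noncomputable def ev2 (ϖ h : K) (Q : k[X][X]) : K := Q.eval₂ (aeval ϖ : k[X] →ₐ[k] K).toRingHom h

lemma ev2_eq_sum (ϖ h : K) (Q : k[X][X]) :
    ev2 ϖ h Q = ∑ i ∈ Finset.range (Q.natDegree + 1), aeval ϖ (Q.coeff i) * h ^ i := by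
  rw [ev2, eval₂_eq_sum_range]; rfl

lemma val_aeval_le (hk : ∀ x ∈ k, x ∈ O) {ϖ : K} (hϖ : O.valuation ϖ ≤ 1) (p : k[X]) :
    O.valuation (aeval ϖ p) ≤ 1 :=
  (O.valuation_le_one_iff _).2 (aeval_mem hk ((O.valuation_le_one_iff _).1 hϖ) _)

lemma val_aeval_sub (hk : ∀ x ∈ k, x ∈ O) {ϖ : K} (hϖ : O.valuation ϖ < 1) (p : k[X]) :
    O.valuation (aeval ϖ p - p.coeff 0) < 1 := by
  have : aeval ϖ p - (p.coeff 0 : K) = ϖ * aeval ϖ p.divX := by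
    rw [sub_eq_iff_eq_add]
    conv_lhs => rw [← X_mul_divX_add p]
    rw [map_add, map_mul, aeval_X, aeval_C]
    rfl
  rw [this, map_mul]
  exact mul_lt_one_of_lt_of_le hϖ (val_aeval_le hk hϖ.le _)

lemma val_aeval_eq_one (hk : ∀ x ∈ k, x ∈ O) {ϖ : K} (hϖ : O.valuation ϖ < 1) {p : k[X]}
    (hp : p.coeff 0 ≠ 0) : O.valuation (aeval ϖ p) = 1 := by
  have h1 := val_aeval_sub hk hϖ p
  have h2 : O.valuation (p.coeff 0 : K) = 1 := val_sub_field hk (p.coeff 0).2 (by simpa using hp)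
  have h3 : aeval ϖ p = (aeval ϖ p - p.coeff 0) + p.coeff 0 := by ring
  rw [h3, Valuation.map_add_eq_of_lt_right _ (by rw [h2]; exact h1), h2]

lemma val_ev2_sub (hk : ∀ x ∈ k, x ∈ O) {ϖ u : K} (hϖ : O.valuation ϖ < 1)
    (hu : O.valuation u ≤ 1) (Q : k[X][X]) :
    O.valuation (ev2 ϖ u Q - aeval u (Q.map (evalRingHom (0 : k)))) < 1 := by
  have h2 : aeval u (Q.map (evalRingHom (0 : k))) =
      ∑ i ∈ Finset.range (Q.natDegree + 1), ((Q.coeff i).coeff 0 : K) * u ^ i := by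
    rw [aeval_eq_sum_range' (n := Q.natDegree + 1) (Nat.lt_succ_of_le (natDegree_map_le))]
    apply Finset.sum_congr rfl
    intro i _
    rw [coeff_map, coe_evalRingHom, ← coeff_zero_eq_eval_zero]
    rfl
  rw [ev2_eq_sum, h2, ← Finset.sum_sub_distrib]
  apply Valuation.map_sum_lt' _ one_pos
  intro i _
  rw [← sub_mul, map_mul, map_pow]
  exact mul_lt_one_of_lt_of_le (val_aeval_sub hk hϖ _) (pow_le_one' hu _)

lemma ev2_taylor (ϖ h : K) (ω : k) (Q : k[X][X]) :
    ev2 ϖ h (taylor (C ω) Q) = ev2 ϖ (h + ω) Q := by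
  rw [ev2, taylor_apply, eval₂_comp, ev2]
  congr 1
  simp [eval₂_add]
  rfl

lemma map_taylor (ω : k) (Q : k[X][X]) :
    (taylor (C ω) Q).map (evalRingHom (0 : k)) = taylor ω (Q.map (evalRingHom 0)) := by
  rw [taylor_apply, taylor_apply, Polynomial.map_comp]
  simp

/-- dominance -/
lemma dom (v : Valuation K O.ValueGroup) (s : Finset ℕ) (t : ℕ → K) (m : ℕ) (hm : m ∈ s)
    (h0 : ∑ i ∈ s, t i = 0) (hlt : ∀ i ∈ s, i ≠ m → v (t i) < v (t m)) (hpos : 0 < v (t m)) :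
    False := by
  rw [← Finset.add_sum_erase s t hm] at h0
  have : v (∑ i ∈ s.erase m, t i) < v (t m) := by
    apply Valuation.map_sum_lt' _ hpos
    intro i hi
    exact hlt i (Finset.mem_of_mem_erase hi) (Finset.ne_of_mem_erase hi)
  rw [← neg_eq_iff_add_eq_zero] at h0
  rw [← h0, Valuation.map_neg] at this
  exact lt_irrefl _ this

lemma exists_root (hivt : IVP K) {c : K} (hc : 0 < c) (hc1 : c ≤ 1) {b : ℕ} (hb : 0 < b) :
    ∃ ϖ : K, 0 < ϖ ∧ ϖ ^ b = c := by
  obtain ⟨w, hw, hw0⟩ := hivt (X ^ b - C c) 0 1 (by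
    simp only [eval_sub, eval_pow, eval_X, eval_C, one_pow, zero_pow hb.ne']
    nlinarith)
  rw [Set.uIcc_of_le zero_le_one] at hw
  simp only [eval_sub, eval_pow, eval_X, eval_C, sub_eq_zero] at hw0
  refine ⟨w, lt_of_le_of_ne hw.1 ?_, hw0⟩
  rintro rfl
  rw [zero_pow hb.ne'] at hw0
  exact hc.ne hw0

lemma newton_step (hc : Conv O) (hivt : IVP K) (hk : ∀ x ∈ k, x ∈ O)
    (halg : ∀ x : K, IsAlgebraic k x → x ∈ k) {ϖ ϖ' h : K} (hϖ0 : 0 < ϖ') 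
    (hϖ : O.valuation ϖ' < 1) (hh : O.valuation h < 1) (Q : k[X][X]) (h0 : ev2 ϖ h Q = 0)
    (μ a b : ℕ) (ha : 0 < a) (hb : 0 < b) (hpb : ϖ' ^ b = ϖ) (hμ : (Q.coeff μ).coeff 0 ≠ 0)
    (hdiv : ∀ i < μ, (X : k[X]) ^ (a * (μ - i)) ∣ expand k b (Q.coeff i)) :
    ∃ (ω : k) (h2 : K) (R : k[X]) (Q2 : k[X][X]), h = ϖ' ^ a * (ω + h2) ∧ O.valuation h2 < 1 ∧
      ev2 ϖ' h2 Q2 = 0 ∧ R.natDegree = μ ∧ R ≠ 0 ∧ Q2.map (evalRingHom 0) = taylor ω R ∧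
      ∀ i ≤ μ, R.coeff i = (expand k b (Q.coeff i)).coeff (a * (μ - i)) := by
  have hex : ∀ i, ∃ c : k[X], X ^ (a * μ) * c = X ^ (a * i) * expand k b (Q.coeff i) ∧
      (i ≤ μ → expand k b (Q.coeff i) = X ^ (a * (μ - i)) * c) ∧
      (μ < i → c = X ^ (a * (i - μ)) * expand k b (Q.coeff i)) := by
    intro i
    rcases le_or_gt i μ with hi | hi
    · have : (X : k[X]) ^ (a * (μ - i)) ∣ expand k b (Q.coeff i) := by
        rcases hi.lt_or_eq with h | h
        · exact hdiv i h
        · subst h; simp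
      obtain ⟨c, hc⟩ := this
      refine ⟨c, ?_, fun _ => hc, fun h => absurd h (not_lt.2 hi)⟩
      rw [hc, ← mul_assoc, ← pow_add, ← mul_add, Nat.add_sub_cancel' hi]
    · refine ⟨_, ?_, fun h => absurd hi (not_lt.2 h), fun _ => rfl⟩
      rw [← mul_assoc, ← pow_add, ← mul_add, Nat.add_sub_cancel' hi.le]
  choose c hc1 hc2 hc3 using hex
  set D := Q.natDegree with hD
  set Q1 : k[X][X] := ∑ i ∈ Finset.range (D + 1), monomial i (c i) with hQ1
  have hcz : ∀ i, D < i → c i = 0 := by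
    intro i hi
    have := hc1 i
    rw [coeff_eq_zero_of_natDegree_lt hi] at this
    simpa using this
  have hco : ∀ i, Q1.coeff i = c i := by
    intro i
    rw [hQ1, finsetSum_coeff]
    simp only [coeff_monomial]
    rw [Finset.sum_ite_eq' ]
    split_ifs with h
    · rfl
    · rw [hcz]; simpa using h
  have hQ1d : Q1.natDegree < D + 1 := by
    rw [Nat.lt_succ_iff, natDegree_le_iff_coeff_eq_zero]
    intro i hi
    rw [hco, hcz i hi]
  have hpa : ϖ' ^ a ≠ 0 := (pow_pos hϖ0 _).ne'
  set h1 := h / ϖ' ^ a with hh1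
  have hhh : h = ϖ' ^ a * h1 := by rw [hh1]; field_simp
  have hexp : ∀ q : k[X], aeval ϖ' (expand k b q) = aeval ϖ q := by
    intro q; rw [expand_aeval, hpb]
  have hce : ∀ i, ϖ' ^ (a * μ) * aeval ϖ' (c i) = ϖ' ^ (a * i) * aeval ϖ (Q.coeff i) := by
    intro i
    have := congrArg (aeval ϖ') (hc1 i)
    simpa [hexp] using this
  have hev1s : ev2 ϖ' h1 Q1 = ∑ i ∈ Finset.range (D + 1), aeval ϖ' (c i) * h1 ^ i := by
    rw [ev2, eval₂_eq_sum_range' _ hQ1d]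
    apply Finset.sum_congr rfl
    intro i _
    rw [hco]; rfl
  have hev1 : ev2 ϖ' h1 Q1 = 0 := by
    have : ϖ' ^ (a * μ) * ev2 ϖ' h1 Q1 = 0 := by
      rw [hev1s, Finset.mul_sum, ← h0, ev2_eq_sum]
      apply Finset.sum_congr rfl
      intro i _
      rw [← mul_assoc, hce, hhh, mul_pow, ← pow_mul]
      ring
    exact (mul_eq_zero.1 this).resolve_left (pow_pos hϖ0 _).ne'
  have hcμ : (c μ).coeff 0 ≠ 0 := by
    have := hc2 μ le_rfl
    rw [Nat.sub_self, mul_zero, pow_zero, one_mul] at this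
    rw [← this, coeff_expand hb]
    simpa using hμ
  have hμD : μ ∈ Finset.range (D + 1) := by
    rw [Finset.mem_range, Nat.lt_succ_iff]
    apply le_natDegree_of_ne_zero
    intro h; rw [h] at hμ; simp at hμ
  have hvμ := val_aeval_eq_one hk hϖ hcμ
  have hv1 : O.valuation h1 ≤ 1 := by
    by_contra hgt
    push Not at hgt
    have hpos : 0 < O.valuation h1 := lt_trans one_pos hgt
    refine dom O.valuation _ _ μ hμD (hev1s.symm.trans hev1) ?_ ?_
    · intro i hi hne
      rw [map_mul, map_mul, map_pow, map_pow, hvμ, one_mul]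
      rcases lt_or_gt_of_ne hne with hi' | hi'
      · calc _ ≤ 1 * O.valuation h1 ^ i := mul_le_mul_left (val_aeval_le hk hϖ.le _) _
          _ < _ := by rw [one_mul]; exact pow_lt_pow_right₀ hgt hi'
      · have e : aeval ϖ' (c i) * h1 ^ i = (h ^ (i - μ) * aeval ϖ (Q.coeff i)) * h1 ^ μ := by
          rw [hc3 i hi']
          simp only [map_mul, map_pow, aeval_X, hexp]
          rw [hhh, mul_pow, ← pow_mul]
          have : h1 ^ i = h1 ^ (i - μ) * h1 ^ μ := by rw [← pow_add, Nat.sub_add_cancel hi'.le]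
          rw [this]; ring
        rw [← map_pow, ← map_mul, e, map_mul, map_pow _ h1]
        refine (mul_lt_iff_lt_one_left (pow_pos hpos _)).2 ?_
        rw [map_mul, map_pow]
        refine mul_lt_one_of_lt_of_le (pow_lt_one₀ zero_le hh (by omega)) ?_
        rw [← hexp]
        exact val_aeval_le hk hϖ.le _
    · rw [map_mul, hvμ, one_mul, map_pow]
      exact pow_pos hpos _
  set R := Q1.map (evalRingHom (0 : k)) with hR
  have hRc : ∀ i, R.coeff i = (c i).coeff 0 := by
    intro i
    rw [hR, coeff_map, hco, coe_evalRingHom, coeff_zero_eq_eval_zero]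
  have hRμ : R.coeff μ ≠ 0 := by rw [hRc]; exact hcμ
  have hRd : R.natDegree = μ := by
    apply le_antisymm _ (le_natDegree_of_ne_zero hRμ)
    rw [natDegree_le_iff_coeff_eq_zero]
    intro i hi
    rw [hRc, hc3 i hi, mul_coeff_zero, coeff_X_pow, if_neg, zero_mul]
    have := Nat.mul_pos ha (Nat.sub_pos_of_lt hi)
    omega
  have hR0 : R ≠ 0 := by rintro h; rw [h] at hRμ; simp at hRμ
  have hvR : O.valuation (aeval h1 R) < 1 := by
    have := val_ev2_sub hk hϖ hv1 Q1
    rwa [hev1, zero_sub, Valuation.map_neg] at this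
  obtain ⟨w, hw, hvw⟩ := hensel hc hivt hk ((O.valuation_le_one_iff _).1 hv1) hR0 hvR
  refine ⟨⟨w, halg w ⟨R, hR0, hw⟩⟩, h1 - w, R, taylor (C ⟨w, halg w ⟨R, hR0, hw⟩⟩) Q1,
    ?_, hvw, ?_, hRd, hR0, ?_, ?_⟩
  · rw [hhh]; simp
  · rw [ev2_taylor]; simpa using hev1
  · rw [map_taylor]
  · intro i hi
    rw [hRc, hc2 i hi, coeff_X_pow_mul', if_pos le_rfl, Nat.sub_self]

end Puiseux
end Loj

namespace Loj
open Polynomial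

section Puiseux2
variable {K : Type*} [Field K] [LinearOrder K] [IsStrictOrderedRing K] {O : ValuationSubring K}
variable {k : Subfield K}

lemma slope_exists (μ : ℕ) (q : ℕ → k[X]) (hne : ∃ i < μ, ¬ (X : k[X]) ^ (μ - i) ∣ q i)
    (hX : ∀ i < μ, (X : k[X]) ∣ q i) :
    ∃ a b i0, 0 < a ∧ a < b ∧ i0 < μ ∧ b = μ - i0 ∧ (q i0).coeff a ≠ 0 ∧
      ∀ i < μ, ∀ j, b * j < a * (μ - i) → (q i).coeff j = 0 := by
  classical
  set S := (Finset.range μ).filter (fun i => q i ≠ 0) with hS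
  obtain ⟨i1, hi1, hnd⟩ := hne
  have hSne : S.Nonempty := by
    refine ⟨i1, ?_⟩
    rw [hS, Finset.mem_filter, Finset.mem_range]
    refine ⟨hi1, ?_⟩
    intro h; rw [h] at hnd; simp at hnd
  obtain ⟨i0, hi0, hmin⟩ := Finset.exists_min_image S
    (fun i => ((q i).natTrailingDegree : ℚ) / ((μ : ℚ) - i)) hSne
  have hkey : ∀ i ∈ S, (q i0).natTrailingDegree * (μ - i) ≤ (q i).natTrailingDegree * (μ - i0) := by
    intro i hi
    have h := hmin i hi
    rw [hS, Finset.mem_filter, Finset.mem_range] at hi hi0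
    have p1 : (0 : ℚ) < (μ : ℚ) - i := by
      rw [sub_pos]; exact_mod_cast hi.1
    have p2 : (0 : ℚ) < (μ : ℚ) - i0 := by
      rw [sub_pos]; exact_mod_cast hi0.1
    rw [div_le_div_iff₀ p2 p1] at h
    rw [← Nat.cast_sub hi.1.le, ← Nat.cast_sub hi0.1.le] at h
    exact_mod_cast h
  have hi0' := hi0
  rw [hS, Finset.mem_filter, Finset.mem_range] at hi0'
  refine ⟨(q i0).natTrailingDegree, μ - i0, i0, ?_, ?_, hi0'.1, rfl, ?_, ?_⟩
  · rw [Nat.pos_iff_ne_zero]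
    intro h
    rw [natTrailingDegree_eq_zero] at h
    rcases h with h | h
    · exact hi0'.2 h
    · exact h (X_dvd_iff.1 (hX i0 hi0'.1))
  · have hi1S : i1 ∈ S := by
      rw [hS, Finset.mem_filter, Finset.mem_range]
      refine ⟨hi1, ?_⟩
      intro h; rw [h] at hnd; simp at hnd
    have h := hkey i1 hi1S
    have h2 : (q i1).natTrailingDegree < μ - i1 := by
      by_contra hcon
      push Not at hcon
      apply hnd
      rw [X_pow_dvd_iff]
      intro d hd
      exact coeff_eq_zero_of_lt_natTrailingDegree (lt_of_lt_of_le hd hcon)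
    by_contra hcon
    push Not at hcon
    have h3 : 0 < μ - i0 := by omega
    have h4 : (μ - i0) * (μ - i1) ≤ (q i0).natTrailingDegree * (μ - i1) :=
      Nat.mul_le_mul_right _ hcon
    have h5 : (q i1).natTrailingDegree * (μ - i0) < (μ - i1) * (μ - i0) :=
      Nat.mul_lt_mul_of_pos_right h2 h3
    nlinarith
  · exact (trailingCoeff_nonzero_iff_nonzero).2 hi0'.2
  · intro i hi j hj
    by_cases h0 : q i = 0
    · rw [h0]; simp
    · apply coeff_eq_zero_of_lt_natTrailingDegree
      have h := hkey i (by rw [hS, Finset.mem_filter, Finset.mem_range]; exact ⟨hi, h0⟩)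
      by_contra hcon
      push Not at hcon
      have := Nat.mul_le_mul_right (μ - i0) hcon
      nlinarith

lemma order_drop (R : k[X]) (ω : k) (hR : R ≠ 0) (i0 μ : ℕ) (hd : R.natDegree = μ) (hi0 : i0 < μ)
    (h1 : R.coeff (μ - 1) = 0) (h2 : R.coeff i0 ≠ 0) :
    (taylor ω R).natTrailingDegree < μ := by
  have hle : (taylor ω R).natTrailingDegree ≤ μ := by
    rw [← hd, ← natDegree_taylor R ω]
    exact natTrailingDegree_le_natDegree _
  refine lt_of_le_of_ne hle ?_
  intro heq
  have hmon : taylor ω R = C ((taylor ω R).coeff μ) * X ^ μ := by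
    ext i : 1
    rw [coeff_C_mul, coeff_X_pow]
    split_ifs with h
    · rw [h, mul_one]
    · rw [mul_zero]
      rcases lt_or_gt_of_ne h with h | h
      · exact coeff_eq_zero_of_lt_natTrailingDegree (heq ▸ h)
      · apply coeff_eq_zero_of_natDegree_lt
        rw [natDegree_taylor, hd]; exact h
  set α := (taylor ω R).coeff μ with hα
  have hα0 : α ≠ 0 := by
    intro h
    rw [h, C_0, zero_mul] at hmon
    rw [← map_zero (taylor ω)] at hmon
    exact hR (taylor_injective ω hmon)
  have hR2 : R = C α * (X + C (-ω)) ^ μ := by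
    have := congrArg (taylor (-ω)) hmon
    rw [taylor_taylor] at this
    simpa [taylor_mul, taylor_pow] using this
  have hω : ω = 0 := by
    rw [hR2, coeff_C_mul, coeff_X_add_C_pow] at h1
    have hμ1 : μ - (μ - 1) = 1 := by omega
    rw [hμ1, pow_one] at h1
    have h3 : (μ.choose (μ - 1) : k) ≠ 0 := by
      rw [Nat.cast_ne_zero]
      exact (Nat.choose_pos (by omega)).ne'
    simpa [hα0, h3] using h1
  rw [hR2, hω] at h2
  simp [coeff_X_pow, hi0.ne] at h2

lemma puiseux_aux (hc : Conv O) (hivt : IVP K) (hk : ∀ x ∈ k, x ∈ O)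
    (halg : ∀ x : K, IsAlgebraic k x → x ∈ k) :
    ∀ (μ N : ℕ) (Q : k[X][X]) (ϖ h : K), 0 < ϖ → O.valuation ϖ < 1 → O.valuation h < 1 →
      ev2 ϖ h Q = 0 → (∀ i < μ, X ∣ Q.coeff i) → (Q.coeff μ).coeff 0 ≠ 0 →
      ∃ (b : ℕ) (ϖ' : K) (p : k[X]), 0 < b ∧ 0 < ϖ' ∧ ϖ' ^ b = ϖ ∧
        O.valuation (h - aeval ϖ' p) ≤ O.valuation ϖ ^ N := by
  intro μ
  induction μ using Nat.strong_induction_on with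
  | _ μ IH =>
  intro N
  induction N with
  | zero =>
    intro Q ϖ h h0 h1 hh hQ _ _
    refine ⟨1, ϖ, 0, one_pos, h0, pow_one _, ?_⟩
    simpa using hh.le
  | succ N ihN =>
    intro Q ϖ h h0 h1 hh hQ hX hμ
    have hfin : ∀ (Q2 : k[X][X]) (ω : k) (R : k[X]), R ≠ 0 →
        Q2.map (evalRingHom 0) = taylor ω R → 
        (∀ i < (taylor ω R).natTrailingDegree, X ∣ Q2.coeff i) ∧
        (Q2.coeff (taylor ω R).natTrailingDegree).coeff 0 ≠ 0 := by
      intro Q2 ω R hR hm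
      have hco : ∀ i, (Q2.coeff i).coeff 0 = (taylor ω R).coeff i := by
        intro i
        rw [← hm, coeff_map, coe_evalRingHom, coeff_zero_eq_eval_zero]
      constructor
      · intro i hi
        rw [X_dvd_iff, hco]
        exact coeff_eq_zero_of_lt_natTrailingDegree hi
      · rw [hco]
        apply (trailingCoeff_nonzero_iff_nonzero).2
        intro h
        rw [← map_zero (taylor ω)] at h
        exact hR (taylor_injective ω h)
    by_cases hA : ∃ i < μ, ¬ (X : k[X]) ^ (μ - i) ∣ Q.coeff i
    · obtain ⟨a, b, i0, ha, hab, hi0, hb, hai0, hj⟩ := slope_exists μ (Q.coeff) hA hX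
      have hbpos : 0 < b := by omega
      obtain ⟨ϖ', hp0, hpb⟩ := exists_root hivt h0
        (by have := (abs_lt.1 (hc.abs_lt_one h1)).2; exact this.le) hbpos
      have hv' : O.valuation ϖ' < 1 := by
        rw [← hpb, map_pow] at h1
        exact (pow_lt_one_iff_of_nonneg zero_le hbpos.ne').1 h1
      obtain ⟨ω, h2, R, Q2, e1, e2, e3, e4, e5, e6, e7⟩ :=
        newton_step hc hivt hk halg hp0 hv' hh Q hQ μ a b ha hbpos hpb hμ (by
          intro i hi
          rw [X_pow_dvd_iff]
          intro d hd
          rw [coeff_expand hbpos]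
          split_ifs with hdvd
          · apply hj i hi
            rw [Nat.mul_div_cancel' hdvd]; exact hd
          · rfl)
      have hdrop : (taylor ω R).natTrailingDegree < μ := by
        apply order_drop R ω e5 i0 μ e4 hi0
        · rw [e7 _ (by omega), coeff_expand hbpos, if_neg]
          have : μ - (μ - 1) = 1 := by omega
          rw [this, mul_one]
          intro hd
          have := Nat.le_of_dvd ha hd
          omega
        · rw [e7 _ hi0.le, coeff_expand hbpos, ← hb, if_pos (Dvd.intro_left a rfl),
            Nat.mul_div_cancel _ hbpos]
          exact hai0
      obtain ⟨f1, f2⟩ := hfin Q2 ω R e5 e6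
      obtain ⟨b', ϖ'', p, g1, g2, g3, g4⟩ := IH _ hdrop (b * (N + 1)) Q2 ϖ' h2 hp0 hv' e2 e3 f1 f2
      refine ⟨b' * b, ϖ'', X ^ (b' * a) * (C ω + p), Nat.mul_pos g1 hbpos, g2, ?_, ?_⟩
      · rw [pow_mul, g3, hpb]
      · have : h - aeval ϖ'' (X ^ (b' * a) * (C ω + p)) = ϖ' ^ a * (h2 - aeval ϖ'' p) := by
          rw [e1, map_mul, map_pow, aeval_X, map_add, aeval_C, pow_mul, g3,
            show (algebraMap k K) ω = (ω : K) from rfl]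
          ring
        rw [this, map_mul, map_pow]
        calc _ ≤ 1 * O.valuation (h2 - aeval ϖ'' p) :=
              mul_le_mul_left (pow_le_one' hv'.le _) _
          _ ≤ _ := by
            rw [one_mul, ← hpb, map_pow, ← pow_mul]; exact g4
    · push Not at hA
      obtain ⟨ω, h2, R, Q2, e1, e2, e3, e4, e5, e6, e7⟩ :=
        newton_step hc hivt hk halg h0 h1 hh Q hQ μ 1 1 one_pos one_pos (pow_one _) hμ (by
          intro i hi
          rw [one_mul, expand_one]
          exact hA i hi)
      obtain ⟨f1, f2⟩ := hfin Q2 ω R e5 e6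
      have hle : (taylor ω R).natTrailingDegree ≤ μ := by
        rw [← e4, ← natDegree_taylor R ω]
        exact natTrailingDegree_le_natDegree _
      have hrec : ∃ (b : ℕ) (ϖ' : K) (p : k[X]), 0 < b ∧ 0 < ϖ' ∧ ϖ' ^ b = ϖ ∧
          O.valuation (h2 - aeval ϖ' p) ≤ O.valuation ϖ ^ N := by
        rcases hle.lt_or_eq with hlt | heq
        · exact IH _ hlt N Q2 ϖ h2 h0 h1 e2 e3 f1 f2
        · rw [heq] at f1 f2
          exact ihN Q2 ϖ h2 h0 h1 e2 e3 f1 f2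
      obtain ⟨b, ϖ', p, g1, g2, g3, g4⟩ := hrec
      refine ⟨b, ϖ', X ^ b * (C ω + p), g1, g2, g3, ?_⟩
      have : h - aeval ϖ' (X ^ b * (C ω + p)) = ϖ * (h2 - aeval ϖ' p) := by
        rw [e1, map_mul, map_pow, aeval_X, map_add, aeval_C, g3,
          show (algebraMap k K) ω = (ω : K) from rfl]
        ring
      rw [this, map_mul, pow_succ, mul_comm]
      exact mul_le_mul_left g4 _

lemma puiseux (hc : Conv O) (hivt : IVP K) (hk : ∀ x ∈ k, x ∈ O)
    (halg : ∀ x : K, IsAlgebraic k x → x ∈ k) (c h : K) (hc0 : 0 < c) (hc1 : O.valuation c < 1)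
    (hh : O.valuation h ≤ 1) (Q : k[X][X]) (hQ : Q ≠ 0) (hQ0 : ev2 c h Q = 0) (N : ℕ) :
    ∃ (b : ℕ) (ϖ' : K) (p : k[X]), 0 < b ∧ 0 < ϖ' ∧ ϖ' ^ b = c ∧
        O.valuation (h - aeval ϖ' p) ≤ O.valuation c ^ N := by
  have hfm : FiniteMultiplicity (C (X : k[X])) Q := by
    apply FiniteMultiplicity.of_not_isUnit _ hQ
    rw [isUnit_C]
    exact not_isUnit_X
  obtain ⟨Q', hQ', hnd⟩ := hfm.exists_eq_pow_mul_and_not_dvd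
  have hQ'0 : ev2 c h Q' = 0 := by
    rw [hQ', ev2, eval₂_mul, eval₂_pow, eval₂_C] at hQ0
    refine (mul_eq_zero.1 hQ0).resolve_left ?_
    apply pow_ne_zero
    simp [hc0.ne']
  set R := Q'.map (evalRingHom (0 : k)) with hR
  have hR0 : R ≠ 0 := by
    intro h0
    apply hnd
    rw [C_dvd_iff_dvd_coeff]
    intro i
    have := congrArg (fun p => p.coeff i) h0
    simp only [hR, coeff_map, coe_evalRingHom, coeff_zero] at this
    rw [X_dvd_iff, coeff_zero_eq_eval_zero, this]
  have hvR : O.valuation (aeval h R) < 1 := by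
    have := val_ev2_sub hk hc1 hh Q'
    rwa [hQ'0, zero_sub, Valuation.map_neg] at this
  obtain ⟨w, hw, hvw⟩ := hensel hc hivt hk ((O.valuation_le_one_iff _).1 hh) hR0 hvR
  set ω : k := ⟨w, halg w ⟨R, hR0, hw⟩⟩ with hω
  have hco : ∀ i, ((taylor (C ω) Q').coeff i).coeff 0 = (taylor ω R).coeff i := by
    intro i
    rw [hR, ← map_taylor, coeff_map, coe_evalRingHom, coeff_zero_eq_eval_zero]
  obtain ⟨b, ϖ', p, g1, g2, g3, g4⟩ := puiseux_aux hc hivt hk halg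
    (taylor ω R).natTrailingDegree N (taylor (C ω) Q') c (h - w) hc0 hc1 hvw
    (by rw [ev2_taylor]; simpa [hω] using hQ'0)
    (by
      intro i hi
      rw [X_dvd_iff, hco]
      exact coeff_eq_zero_of_lt_natTrailingDegree hi)
    (by
      rw [hco]
      apply (trailingCoeff_nonzero_iff_nonzero).2
      intro h
      rw [← map_zero (taylor ω)] at h
      exact hR0 (taylor_injective ω h))
  refine ⟨b, ϖ', C ω + p, g1, g2, g3, ?_⟩
  rw [map_add, aeval_C, show (algebraMap k K) ω = w from rfl, ← sub_sub]
  exact g4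

end Puiseux2
end Loj

namespace Loj
open Polynomial

section Final
variable {K : Type*} [Field K] [LinearOrder K] [IsStrictOrderedRing K] {O : ValuationSubring K}
variable {k : Subfield K} {n : ℕ}

lemma mv_mem (hk : ∀ x ∈ k, x ∈ O) (g : MvPolynomial (Fin n) k) {z : Fin n → K}
    (hz : ∀ j, z j ∈ O) : MvPolynomial.aeval z g ∈ O := by
  induction g using MvPolynomial.induction_on with
  | C a => rw [MvPolynomial.aeval_C]; exact hk _ a.2
  | add p q hp hq => rw [map_add]; exact O.add_mem _ _ hp hq
  | mul_X p i hp => rw [map_mul, MvPolynomial.aeval_X]; exact O.mul_mem _ _ hp (hz i)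

lemma mv_lip (hk : ∀ x ∈ k, x ∈ O) (g : MvPolynomial (Fin n) k) {z z' : Fin n → K}
    (hz : ∀ j, z j ∈ O) (hz' : ∀ j, z' j ∈ O) {γ : O.ValueGroup}
    (h : ∀ j, O.valuation (z j - z' j) ≤ γ) :
    O.valuation (MvPolynomial.aeval z g - MvPolynomial.aeval z' g) ≤ γ := by
  induction g using MvPolynomial.induction_on with
  | C a => simp
  | add p q hp hq =>
    rw [map_add, map_add, add_sub_add_comm]
    exact (Valuation.map_add _ _ _).trans (max_le hp hq)
  | mul_X p i hp =>
    rw [map_mul, map_mul, MvPolynomial.aeval_X, MvPolynomial.aeval_X]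
    have : MvPolynomial.aeval z p * z i - MvPolynomial.aeval z' p * z' i =
      (MvPolynomial.aeval z p - MvPolynomial.aeval z' p) * z i + 
        (z i - z' i) * MvPolynomial.aeval z' p := by ring
    rw [this]
    refine (Valuation.map_add _ _ _).trans (max_le ?_ ?_)
    · rw [map_mul]
      exact mul_le_of_le_of_le_one hp ((O.valuation_le_one_iff _).2 (hz i))
    · rw [map_mul]
      exact mul_le_of_le_of_le_one (h i) ((O.valuation_le_one_iff _).2 (mv_mem hk _ hz'))

lemma val_trailing (hk : ∀ x ∈ k, x ∈ O) {ϖ : K} (h1 : O.valuation ϖ < 1) {A : k[X]} (hA : A ≠ 0) :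
    O.valuation (aeval ϖ A) = O.valuation ϖ ^ A.natTrailingDegree := by
  obtain ⟨B, hB⟩ : X ^ A.natTrailingDegree ∣ A := by
    rw [X_pow_dvd_iff]
    intro d hd
    exact coeff_eq_zero_of_lt_natTrailingDegree hd
  have hB0 : B.coeff 0 ≠ 0 := by
    have h2 : A.coeff A.natTrailingDegree ≠ 0 := (trailingCoeff_nonzero_iff_nonzero).2 hA
    have h3 : A.coeff A.natTrailingDegree = B.coeff 0 := by
      conv_lhs => rw [hB]
      rw [coeff_X_pow_mul', ← hB, if_pos le_rfl, Nat.sub_self]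
    rwa [h3] at h2
  have := val_aeval_eq_one hk h1 hB0
  conv_lhs => rw [hB]
  rw [map_mul, map_pow, aeval_X, map_mul, this, mul_one, map_pow]

lemma mv_chain {F : Type*} [Field F] (p : Fin n → F[X]) (g : MvPolynomial (Fin n) F) :
    derivative (MvPolynomial.aeval p g) =
      ∑ j, MvPolynomial.aeval p (MvPolynomial.pderiv j g) * derivative (p j) := by
  induction g using MvPolynomial.induction_on with
  | C a => simp
  | add p q hp hq => simp only [map_add, hp, hq, add_mul, Finset.sum_add_distrib]
  | mul_X q i hp =>
    have h : ∀ j, MvPolynomial.aeval p (MvPolynomial.pderiv j (q * MvPolynomial.X i)) =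
        MvPolynomial.aeval p (MvPolynomial.pderiv j q) * p i +
          if j = i then MvPolynomial.aeval p q else 0 := by
      intro j
      rw [MvPolynomial.pderiv_mul, map_add, map_mul, map_mul, MvPolynomial.aeval_X]
      congr 1
      split_ifs with h
      · rw [h, MvPolynomial.pderiv_X_self, map_one, mul_one]
      · rw [MvPolynomial.pderiv_X_of_ne (fun h' => h h'.symm), map_zero, mul_zero]
    simp only [h, add_mul, Finset.sum_add_distrib]
    rw [map_mul, MvPolynomial.aeval_X, derivative_mul, hp, Finset.sum_mul]
    simp only [ite_mul, zero_mul, Finset.sum_ite_eq', Finset.mem_univ, if_true]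
    have h3 : ∀ j, MvPolynomial.aeval p (MvPolynomial.pderiv j q) * derivative (p j) * p i =
      MvPolynomial.aeval p (MvPolynomial.pderiv j q) * p i * derivative (p j) :=
      fun j => mul_right_comm _ _ _
    simp only [h3]

lemma final_contra (hc : Conv O) (hivt : IVP K) (hk : ∀ x ∈ k, x ∈ O)
    (halg : ∀ x : K, IsAlgebraic k x → x ∈ k) (c : K) (hc0 : 0 < c) (hc1 : O.valuation c < 1)
    (z : Fin n → K) (hz : ∀ j, z j ∈ O) 
    (hQ : ∀ j, ∃ Q : k[X][X], Q ≠ 0 ∧ ev2 c (z j) Q = 0)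
    (g : MvPolynomial (Fin n) k)
    (hg : O.valuation (MvPolynomial.aeval z g - c) < O.valuation c)
    (hdg : ∀ j, O.valuation (MvPolynomial.aeval z (MvPolynomial.pderiv j g)) ≤ O.valuation c) :
    False := by
  have hvc : O.valuation c ≠ 0 := by simpa using hc0.ne'
  have hvcp : 0 < O.valuation c := zero_lt_iff.2 hvc
  have hsq : O.valuation c ^ 2 < O.valuation c := by
    rw [pow_two]; exact (mul_lt_iff_lt_one_left hvcp).2 hc1
  have hp : ∀ j, ∃ (b : ℕ) (ϖ' : K) (p : k[X]), 0 < b ∧ 0 < ϖ' ∧ ϖ' ^ b = c ∧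
        O.valuation (z j - aeval ϖ' p) ≤ O.valuation c ^ 2 := by
    intro j
    obtain ⟨Q, hQ0, hQ1⟩ := hQ j
    exact puiseux hc hivt hk halg c (z j) hc0 hc1 ((O.valuation_le_one_iff _).2 (hz j)) Q hQ0 hQ1 2
  choose b ϖ p hb hϖ0 hϖb hp using hp
  set E := ∏ j, b j with hE
  have hEpos : 0 < E := Finset.prod_pos (fun j _ => hb j)
  obtain ⟨ρ, hρ0, hρE⟩ := exists_root hivt hc0
        (by have := (abs_lt.1 (hc.abs_lt_one hc1)).2; exact this.le) hEpos
  have hvρ : O.valuation ρ < 1 := by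
    rw [← hρE, map_pow] at hc1
    exact (pow_lt_one_iff_of_nonneg zero_le hEpos.ne').1 hc1
  have hvρ0 : 0 < O.valuation ρ := by
    rw [zero_lt_iff]; simpa using hρ0.ne'
  have hρO : ρ ∈ O := (O.valuation_le_one_iff _).1 hvρ.le
  have hpow : ∀ j, ρ ^ (E / b j) = ϖ j := by
    intro j
    have hd : b j ∣ E := Finset.dvd_prod_of_mem b (Finset.mem_univ j)
    apply (pow_left_inj₀ (pow_nonneg hρ0.le _) (hϖ0 j).le (hb j).ne').1
    rw [← pow_mul, Nat.div_mul_cancel hd, hϖb, hρE]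
  set P : Fin n → k[X] := fun j => expand k (E / b j) (p j) with hP
  have hPe : ∀ j, aeval ρ (P j) = aeval (ϖ j) (p j) := by
    intro j
    rw [hP]; simp only
    rw [expand_aeval, hpow]
  have hclose : ∀ j, O.valuation (z j - aeval ρ (P j)) ≤ O.valuation c ^ 2 := by
    intro j; rw [hPe]; exact hp j
  have hcomp : ∀ q : MvPolynomial (Fin n) k, 
      aeval ρ (MvPolynomial.aeval P q) = MvPolynomial.aeval (fun j => aeval ρ (P j)) q := by
    intro q
    rw [MvPolynomial.comp_aeval_apply]
  have happ : ∀ q : MvPolynomial (Fin n) k, O.valuation (MvPolynomial.aeval z q -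
      aeval ρ (MvPolynomial.aeval P q)) ≤ O.valuation c ^ 2 := by
    intro q
    rw [hcomp]
    exact mv_lip hk q hz (fun j => aeval_mem hk hρO _) hclose
  set A := MvPolynomial.aeval P g with hA
  have hvA : O.valuation (aeval ρ A) = O.valuation c := by
    have h1 : aeval ρ A = -(MvPolynomial.aeval z g - aeval ρ A) + (MvPolynomial.aeval z g - c) + c
      := by ring
    rw [h1]
    apply Valuation.map_add_eq_of_lt_right
    refine lt_of_le_of_lt (Valuation.map_add _ _ _) (max_lt ?_ hg)
    rw [Valuation.map_neg]
    exact lt_of_le_of_lt (happ g) hsq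
  have hA0 : A ≠ 0 := by
    intro h; rw [h] at hvA; simp at hvA; exact hvc hvA.symm
  have hinj : ∀ s t : ℕ, O.valuation ρ ^ s ≤ O.valuation ρ ^ t → t ≤ s := by
    intro s t h
    exact (pow_le_pow_iff_right_of_lt_one₀ hvρ0 hvρ).1 h
  have hcE : O.valuation c = O.valuation ρ ^ E := by rw [← hρE, map_pow]
  have hAt : A.natTrailingDegree = E := by
    rw [val_trailing hk hvρ hA0, hcE] at hvA
    exact le_antisymm (hinj _ _ hvA.ge) (hinj _ _ hvA.le)
  have hB : ∀ j, X ^ E ∣ MvPolynomial.aeval P (MvPolynomial.pderiv j g) := by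
    intro j
    set B := MvPolynomial.aeval P (MvPolynomial.pderiv j g)
    by_cases hB0 : B = 0
    · rw [hB0]; exact dvd_zero _
    have hvB : O.valuation (aeval ρ B) ≤ O.valuation c := by
      have h1 : aeval ρ B = (MvPolynomial.aeval z (MvPolynomial.pderiv j g)) - 
        (MvPolynomial.aeval z (MvPolynomial.pderiv j g) - aeval ρ B) := by ring
      rw [h1]
      exact (Valuation.map_sub _ _ _).trans (max_le (hdg j) ((happ _).trans hsq.le))
    rw [val_trailing hk hvρ hB0, hcE] at hvB
    have := hinj _ _ hvB
    rw [X_pow_dvd_iff]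
    intro d hd
    exact coeff_eq_zero_of_lt_natTrailingDegree (lt_of_lt_of_le hd this)
  have hdA : X ^ E ∣ derivative A := by
    rw [hA, mv_chain]
    exact Finset.dvd_sum (fun j _ => (hB j).mul_right _)
  rw [X_pow_dvd_iff] at hdA
  have h1 := hdA (E - 1) (by omega)
  rw [coeff_derivative, Nat.sub_add_cancel hEpos] at h1
  have h2 : A.coeff E ≠ 0 := by
    rw [← hAt]; exact (trailingCoeff_nonzero_iff_nonzero).2 hA0
  have h3 : (((E - 1 : ℕ) : k) + 1) ≠ 0 := Nat.cast_add_one_ne_zero _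
  exact (mul_ne_zero h2 h3) h1

end Final
end Loj

namespace Loj
open Polynomial

section Generic
variable {K : Type} [Field K] [LinearOrder K] [IsStrictOrderedRing K] {O : ValuationSubring K}

lemma gen_exists (k : Subfield K) (hk : ∀ x ∈ k, x ∈ O) [Countable k]
    (hunc : Uncountable (IsLocalRing.ResidueField O)) (n : ℕ) :
    ∃ b : Fin n → K, (∀ j, b j ∈ O) ∧ ∀ p : MvPolynomial (Fin n) k, p ≠ 0 →
      O.valuation (MvPolynomial.aeval b p) = 1 := by
  let φ : k →+* IsLocalRing.ResidueField O := (IsLocalRing.residue O).comp (incl hk)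
  let _ : Algebra k (IsLocalRing.ResidueField O) := φ.toAlgebra
  obtain ⟨s, hs⟩ := exists_isTranscendenceBasis k (IsLocalRing.ResidueField O)
  have hinf : Infinite s := by
    by_contra hfin
    rw [not_infinite_iff_finite] at hfin
    have h1 := hs.isAlgebraic
    have h2 := Algebra.IsAlgebraic.cardinalMk_le_max
      (Algebra.adjoin k (Set.range ((↑) : s → IsLocalRing.ResidueField O)))
      (IsLocalRing.ResidueField O)
    have h3 : Countable (Algebra.adjoin k (Set.range ((↑) : s → IsLocalRing.ResidueField O))) := by
      rw [Algebra.adjoin_range_eq_range_aeval]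
      have : Countable (MvPolynomial s k) := by
        rw [← Cardinal.mk_le_aleph0_iff]
        refine MvPolynomial.cardinalMk_le_max_lift.trans ?_
        simp
      exact Set.countable_range (MvPolynomial.aeval (R := k) ((↑) : s → IsLocalRing.ResidueField O))
    rw [max_eq_right (Cardinal.mk_le_aleph0_iff.2 h3), Cardinal.mk_le_aleph0_iff] at h2
    exact not_countable h2
  let e : Fin n → s := fun j => Infinite.natEmbedding s j
  have he : Function.Injective e := fun i j h => Fin.ext ((Infinite.natEmbedding s).injective h)
  have hind := hs.1.comp e he
  have hlift : ∀ j, ∃ b : O, IsLocalRing.residue O b = (e j : IsLocalRing.ResidueField O) :=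
    fun j => IsLocalRing.residue_surjective _
  choose b hb using hlift
  refine ⟨fun j => b j, fun j => (b j).2, ?_⟩
  intro p hp
  have hcoe : MvPolynomial.aeval (fun j => (b j : K)) p =
      ((MvPolynomial.eval₂Hom (incl hk) b p : O) : K) := by
    have := MvPolynomial.hom_eval₂ p (incl hk) O.subtype b
    exact this.symm
  have hres : IsLocalRing.residue O (MvPolynomial.eval₂Hom (incl hk) b p) ≠ 0 := by
    have h1 := MvPolynomial.hom_eval₂ p (incl hk) (IsLocalRing.residue O) b
    have h2 : IsLocalRing.residue O (MvPolynomial.eval₂Hom (incl hk) b p) =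
        MvPolynomial.aeval (Subtype.val ∘ e) p := by
      refine h1.trans ?_
      have : (⇑(IsLocalRing.residue O) ∘ b) = Subtype.val ∘ e := funext hb
      rw [← this]
      rfl
    rw [h2]
    intro h0
    exact hp ((injective_iff_map_eq_zero _).1 hind p h0)
  rw [hcoe]
  apply (O.valuation_eq_one_iff (MvPolynomial.eval₂Hom (incl hk) b p)).1
  exact (IsLocalRing.residue_ne_zero_iff_isUnit _).1 hres

lemma trdeg_alg {n : ℕ} (k1 : Subfield K) (k : Subfield K) (hkk : k1 ≤ k) (c : K) (b z : Fin n → K)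
    (hbk : ∀ j, b j ∈ k)
    (hind : AlgebraicIndependent k1 (fun o : Option (Fin n) => o.elim c b))
    (hb : ∀ j, b j ∈ IntermediateField.adjoin k1
      (Set.range (fun o : Option (Fin n) => o.elim c z))) (j : Fin n) :
    ∃ Q : k[X][X], Q ≠ 0 ∧ ev2 c (z j) Q = 0 := by
  set y : Option (Fin n) → K := fun o => o.elim c z with hy
  set A := IntermediateField.adjoin k1 (Set.range y) with hA
  have hymem : ∀ o, y o ∈ A := fun o => IntermediateField.subset_adjoin _ _ ⟨o, rfl⟩
  have hxA : ∀ o : Option (Fin n), (o.elim c b : K) ∈ A := by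
    rintro (_ | j)
    · exact hymem none
    · exact hb j
  set x : Option (Fin n) → A := fun o => ⟨o.elim c b, hxA o⟩ with hx
  have hindA : AlgebraicIndependent k1 x := by
    apply AlgebraicIndependent.of_comp A.val
    exact hind
  let y' : Option (Fin n) → A := fun o => ⟨y o, hymem o⟩
  have halgA : Algebra.IsAlgebraic (Algebra.adjoin k1 (Set.range y')) A := by
    constructor
    rintro ⟨w, hw⟩
    obtain ⟨r, s, hrs⟩ := (IntermediateField.mem_adjoin_range_iff k1 y w).1 hw
    have hmem : ∀ p : MvPolynomial (Option (Fin n)) k1,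
        MvPolynomial.aeval y' p ∈ Algebra.adjoin k1 (Set.range y') := by
      intro p
      rw [Algebra.adjoin_range_eq_range_aeval]
      exact ⟨p, rfl⟩
    have hval : ∀ p : MvPolynomial (Option (Fin n)) k1,
        ((MvPolynomial.aeval y' p : A) : K) = MvPolynomial.aeval y p := by
      intro p
      exact MvPolynomial.comp_aeval_apply (B := K) y' A.val p
    have e1 : (⟨w, hw⟩ : A) = MvPolynomial.aeval y' r / MvPolynomial.aeval y' s := by
      apply Subtype.ext
      rw [IntermediateField.coe_div, hval, hval]
      exact hrs
    rw [e1, div_eq_mul_inv]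
    apply IsAlgebraic.mul
    · exact isAlgebraic_algebraMap (⟨_, hmem r⟩ : Algebra.adjoin k1 (Set.range y'))
    · apply IsAlgebraic.inv
      exact isAlgebraic_algebraMap (⟨_, hmem s⟩ : Algebra.adjoin k1 (Set.range y'))
  have htr : Algebra.trdeg k1 A ≤ Cardinal.mk (Option (Fin n)) := by
    have h1 := Algebra.IsAlgebraic.trdeg_le_cardinalMk k1 (Set.range y')
    exact h1.trans Cardinal.mk_range_le
  have hbasis := hindA.isTranscendenceBasis_of_trdeg_le_of_finite htr
  have halg := hbasis.isAlgebraic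
  obtain ⟨r, hr0, hr⟩ := halg.isAlgebraic (y' (some j))
  let φ : k[X] →+* K := (aeval c : k[X] →ₐ[k] K).toRingHom
  let ψ : Algebra.adjoin k1 (Set.range x) →+* K :=
    A.val.toRingHom.comp (Algebra.adjoin k1 (Set.range x)).val.toRingHom
  have hψ : Function.Injective ψ := fun s t h => Subtype.ext (Subtype.ext h)
  have hrange : ∀ s, ψ s ∈ Set.range φ := by
    rintro ⟨s, hs⟩
    rw [Algebra.adjoin_range_eq_range_aeval] at hs
    obtain ⟨p, rfl⟩ := hs
    refine ⟨MvPolynomial.eval₂ ((C : k →+* k[X]).comp (Subfield.inclusion hkk))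
      (fun o : Option (Fin n) => o.elim X (fun j => C ⟨b j, hbk j⟩)) p, ?_⟩
    have h1 := MvPolynomial.hom_eval₂ p ((C : k →+* k[X]).comp (Subfield.inclusion hkk)) φ
      (fun o : Option (Fin n) => o.elim X (fun j => C ⟨b j, hbk j⟩))
    refine h1.trans ?_
    have h2 := MvPolynomial.hom_eval₂ p (algebraMap k1 A) A.val.toRingHom x
    refine Eq.trans ?_ h2.symm
    congr 1
    · ext a
      simp [φ]
      rfl
    · funext o
      rcases o with _ | j
      · simp [φ, x]
      · simp [φ, x]
        rfl
  have hlift : r.map ψ ∈ lifts φ := by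
    rw [lifts_iff_coeff_lifts]
    intro i
    rw [coeff_map]
    exact hrange _
  obtain ⟨Q, hQ⟩ := (mem_lifts _).1 hlift
  refine ⟨Q, ?_, ?_⟩
  · rintro rfl
    rw [Polynomial.map_zero] at hQ
    exact hr0 ((Polynomial.map_eq_zero_iff hψ).1 hQ.symm)
  · have h1 : ev2 c (z j) Q = (Q.map φ).eval (z j) := by rw [eval_map]; rfl
    rw [h1, hQ, eval_map]
    have h2 := Polynomial.hom_eval₂ r (algebraMap (Algebra.adjoin k1 (Set.range x)) A)
      A.val.toRingHom (y' (some j))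
    have h3 : eval₂ (algebraMap (Algebra.adjoin k1 (Set.range x)) A) (y' (some j)) r = 0 := hr
    rw [h3, map_zero] at h2
    exact h2.symm

/-- The minimum principle for polynomials on boxes. -/
def MinP (K : Type) [Field K] [LinearOrder K] : Prop :=
  ∀ (n : ℕ) (G : MvPolynomial (Fin n) K), ∃ z : Fin n → K, (∀ j, |z j| ≤ 1) ∧
    ∀ y : Fin n → K, (∀ j, |y j| ≤ 1) → MvPolynomial.eval z G ≤ MvPolynomial.eval y G

lemma crit_one (q : K[X]) (ε : K) (hε : 0 < ε) (h : ∀ t, |t| ≤ ε → q.eval 0 ≤ q.eval t) :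
    q.coeff 1 = 0 := by
  by_contra hne
  set w := q.divX.divX with hw
  have hq : ∀ t, q.eval t = q.coeff 0 + t * (q.coeff 1 + t * w.eval t) := by
    intro t
    conv_lhs => rw [← divX_mul_X_add q, ← divX_mul_X_add q.divX]
    simp [coeff_divX]
    ring
  set M := ∑ i ∈ Finset.range (w.natDegree + 1), |w.coeff i| with hM
  have hM0 : 0 ≤ M := Finset.sum_nonneg (fun i _ => abs_nonneg _)
  have hwb : ∀ t, |t| ≤ 1 → |w.eval t| ≤ M := by
    intro t ht
    rw [eval_eq_sum_range]
    refine (Finset.abs_sum_le_sum_abs _ _).trans (Finset.sum_le_sum ?_)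
    intro i _
    rw [abs_mul, abs_pow]
    exact mul_le_of_le_one_right (abs_nonneg _) (pow_le_one₀ (abs_nonneg _) ht)
  set u := q.coeff 1 with hu
  have hup : 0 < |u| := abs_pos.2 hne
  set s := min (min ε 1) (|u| / (2 * (M + 1))) with hs
  have hs0 : 0 < s := by
    rw [hs]; apply lt_min (lt_min hε one_pos); positivity
  have hsε : s ≤ ε := (min_le_left _ _).trans (min_le_left _ _)
  have hs1 : s ≤ 1 := (min_le_left _ _).trans (min_le_right _ _)
  have hsu : s * (2 * (M + 1)) ≤ |u| := by
    rw [← le_div_iff₀ (by positivity)]; exact min_le_right _ _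
  have key : ∀ t, |t| = s → t * u = - (s * |u|) → False := by
    intro t ht htu
    have h1 := h t (by rw [ht]; exact hsε)
    rw [hq, hq t] at h1
    have h2 := hwb t (by rw [ht]; exact hs1)
    have h3 : t * t = s * s := by rw [← ht]; exact (abs_mul_abs_self t).symm
    have h4 : t * (u + t * w.eval t) = - (s * |u|) + s * s * w.eval t := by
      rw [mul_add, htu, ← mul_assoc, h3]
    rw [h4] at h1
    have h5 := (abs_le.1 h2).2
    have h6 : s * s * w.eval t ≤ s * s * M := mul_le_mul_of_nonneg_left h5 (by positivity)
    nlinarith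
  rcases lt_or_gt_of_ne hne with hlt | hgt
  · exact key s (abs_of_pos hs0) (by rw [abs_of_neg hlt]; ring)
  · exact key (-s) (by rw [abs_neg, abs_of_pos hs0]) (by rw [abs_of_pos hgt]; ring)

lemma crit_mv {n : ℕ} (G : MvPolynomial (Fin n) K) (z : Fin n → K) (hz : ∀ j, |z j| < 1)
    (hmin : ∀ y : Fin n → K, (∀ j, |y j| ≤ 1) → MvPolynomial.eval z G ≤ MvPolynomial.eval y G)
    (j : Fin n) : MvPolynomial.eval z (MvPolynomial.pderiv j G) = 0 := by
  classical
  set p : Fin n → K[X] := fun i => C (z i) + if i = j then X else 0 with hp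
  have hev : ∀ (t : K) (q : MvPolynomial (Fin n) K), (MvPolynomial.aeval p q).eval t =
      MvPolynomial.eval (fun i => z i + if i = j then t else 0) q := by
    intro t q
    induction q using MvPolynomial.induction_on with
    | C a => simp
    | add p q hp hq => simp [hp, hq]
    | mul_X q i hq =>
      rw [map_mul, eval_mul, hq, MvPolynomial.aeval_X, map_mul, MvPolynomial.eval_X, hp]
      simp only [eval_add, eval_C]
      split_ifs <;> simp
  have h0 : ∀ q : MvPolynomial (Fin n) K, (MvPolynomial.aeval p q).eval 0 = MvPolynomial.eval z q := by
    intro q; rw [hev]; simp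
  have h1 : (MvPolynomial.aeval p G).coeff 1 = 0 := by
    apply crit_one _ (1 - |z j|) (sub_pos.2 (hz j))
    intro t ht
    rw [h0, hev]
    apply hmin
    intro i
    split_ifs with hi
    · subst hi
      exact (abs_add_le _ _).trans (by linarith)
    · simpa using (hz i).le
  have h2 : (derivative (MvPolynomial.aeval p G)).eval 0 = (MvPolynomial.aeval p G).coeff 1 := by
    rw [← coeff_zero_eq_eval_zero, coeff_derivative]; simp
  have h3 : ∀ i, derivative (p i) = if i = j then 1 else 0 := by
    intro i; rw [hp]; simp only; split_ifs <;> simp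
  rw [h1, mv_chain] at h2
  simp only [h3, mul_ite, mul_one, mul_zero, Finset.sum_ite_eq', Finset.mem_univ, if_true] at h2
  rw [← h0]; exact h2

end Generic
end Loj

namespace Loj
open Polynomial

section PolyContra
variable {K : Type} [Field K] [LinearOrder K] [IsStrictOrderedRing K] {O : ValuationSubring K}

lemma lift_poly {n : ℕ} (k : Subfield K) (g : MvPolynomial (Fin n) K)
    (h : ∀ m, g.coeff m ∈ k) : ∃ g' : MvPolynomial (Fin n) k, g'.map (algebraMap k K) = g := by
  have : g ∈ Set.range (MvPolynomial.map (algebraMap k K) : MvPolynomial (Fin n) k → _) := by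
    rw [MvPolynomial.mem_range_map_iff_coeffs_subset]
    intro x hx
    obtain ⟨m, _, rfl⟩ := MvPolynomial.mem_coeffs_iff.1 hx
    exact ⟨⟨_, h m⟩, rfl⟩
  exact this

lemma poly_contra {n : ℕ} (hc : Conv O) (hivt : IVP K) (hminp : MinP K)
    (hunc : Uncountable (IsLocalRing.ResidueField O))
    (c : K) (hc0 : 0 < c) (hc1 : O.valuation c < 1)
    (harch : ∀ y, O.valuation y < 1 → ∃ N : ℕ, O.valuation y ^ N ≤ O.valuation c)
    (k0 : Subfield K) (hk0 : ∀ x ∈ k0, x ∈ O) (g : MvPolynomial (Fin n) K)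
    (hgk : ∀ m, g.coeff m ∈ k0) (y : Fin n → K) (hy : ∀ j, O.valuation (y j) < 1)
    (hgy : O.valuation (MvPolynomial.eval y g - c) ≤ O.valuation c ^ 2)
    (hdg : ∀ j, O.valuation (MvPolynomial.eval y (MvPolynomial.pderiv j g)) ≤ O.valuation c) :
    False := by
  classical
  have hvc : O.valuation c ≠ 0 := by simpa using hc0.ne'
  have hvcp : 0 < O.valuation c := zero_lt_iff.2 hvc
  -- countable field of definition
  set k1 : Subfield K := Subfield.closure (g.coeffs : Set K) with hk1
  have hk1c : ∀ m, g.coeff m ∈ k1 := by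
    intro m
    by_cases h : g.coeff m = 0
    · rw [h]; exact k1.zero_mem
    · exact Subfield.subset_closure (MvPolynomial.coeff_mem_coeffs m h)
  have hk10 : k1 ≤ k0 := by
    rw [hk1, Subfield.closure_le]
    intro x hx
    obtain ⟨m, _, rfl⟩ := MvPolynomial.mem_coeffs_iff.1 hx
    exact hgk m
  have hk1O : ∀ x ∈ k1, x ∈ O := fun x hx => hk0 x (hk10 hx)
  have hcount : Countable k1 := by
    rw [← Cardinal.mk_le_aleph0_iff]
    refine (Subfield.cardinalMk_closure_le_max _).trans ?_
    simp
  obtain ⟨b, hbO, hb⟩ := gen_exists k1 hk1O hunc n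
  set k2 : Subfield K := (IntermediateField.adjoin k1 (Set.range b)).toSubfield with hk2
  have hk12 : k1 ≤ k2 := by
    intro x hx
    exact (IntermediateField.adjoin k1 (Set.range b)).algebraMap_mem ⟨x, hx⟩
  have hbk2 : ∀ j, b j ∈ k2 := fun j => IntermediateField.subset_adjoin _ _ ⟨j, rfl⟩
  have hk2O : ∀ x ∈ k2, x ∈ O := by
    intro x hx
    obtain ⟨r, s, hrs⟩ := (IntermediateField.mem_adjoin_range_iff k1 b x).1 hx
    rw [hrs, ← O.valuation_le_one_iff, map_div₀]
    by_cases hs : s = 0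
    · rw [hs]; simp
    · rw [hb s hs, div_one]
      exact (O.valuation_le_one_iff _).2 (mv_mem hk1O r hbO)
  set k : Subfield K := (algebraicClosure k2 K).toSubfield with hk
  have hk2k : k2 ≤ k := fun x hx => (algebraicClosure k2 K).algebraMap_mem ⟨x, hx⟩
  have hkalg : ∀ x ∈ k, IsAlgebraic k2 x := fun x hx => mem_algebraicClosure_iff.1 hx
  have hkO : ∀ x ∈ k, x ∈ O := fun x hx => val_algebraic hk2O (hkalg x hx)
  have halg : ∀ x : K, IsAlgebraic k x → x ∈ k := by
    intro x hx
    have h1 : IsAlgebraic (algebraicClosure k2 K) x := hx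
    exact mem_algebraicClosure_iff.2 (h1.restrictScalars k2)
  -- algebraic independence
  have hind : AlgebraicIndependent k1 (fun o : Option (Fin n) => o.elim c b) := by
    have hbi : AlgebraicIndependent k1 b := by
      refine (injective_iff_map_eq_zero _).2 ?_
      intro p hp
      by_contra hne
      have h1 := hb p hne
      have h2 : MvPolynomial.aeval b p = 0 := hp
      rw [h2, map_zero] at h1
      exact zero_ne_one h1
    rw [hbi.option_iff_transcendental]
    intro hca
    have h1 : IsAlgebraic k2 c := by
      obtain ⟨r, hr0, hr⟩ := hca
      let ψ : Algebra.adjoin k1 (Set.range b) →+* k2 :=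
        { toFun := fun x => ⟨x, IntermediateField.algebra_adjoin_le_adjoin k1 _ x.2⟩
          map_one' := rfl
          map_mul' := fun _ _ => rfl
          map_zero' := rfl
          map_add' := fun _ _ => rfl }
      have hψ : Function.Injective ψ := fun s t h => Subtype.ext (by
        have := congrArg (fun q : k2 => (q : K)) h
        exact this)
      refine ⟨r.map ψ, (Polynomial.map_ne_zero_iff hψ).2 hr0, ?_⟩
      rw [aeval_def, eval₂_map]
      exact hr
    have h2 : c⁻¹ ∈ O := val_algebraic hk2O h1.inv
    have h3 := (O.valuation_le_one_iff _).2 h2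
    rw [map_inv₀, inv_le_one₀ hvcp] at h3
    exact absurd hc1 (not_lt.2 h3)
  -- the auxiliary function
  set s := ∑ j, y j ^ 2 with hs
  have hvs : O.valuation s < 1 := by
    apply Valuation.map_sum_lt' _ one_pos
    intro j _
    rw [map_pow]
    exact pow_lt_one₀ zero_le (hy j) two_ne_zero
  obtain ⟨N, hN⟩ := harch s hvs
  set G0 : MvPolynomial (Fin n) K := MvPolynomial.C c⁻¹ * (g - MvPolynomial.C c) ^ 2 +
    ∑ j, (MvPolynomial.pderiv j g) ^ 2 + (∑ j, MvPolynomial.X j ^ 2) ^ (2 * N) with hG0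
  set G1 : MvPolynomial (Fin n) K := ∑ j, MvPolynomial.C (c ^ 2 * b j) * MvPolynomial.X j with hG1
  obtain ⟨z, hz1, hzmin⟩ := hminp n (G0 + G1)
  have hG0e : ∀ w, MvPolynomial.eval w G0 = c⁻¹ * (MvPolynomial.eval w g - c) ^ 2 +
      ∑ j, (MvPolynomial.eval w (MvPolynomial.pderiv j g)) ^ 2 + (∑ j, w j ^ 2) ^ (2 * N) := by
    intro w
    rw [hG0]; simp
  have hG1e : ∀ w, MvPolynomial.eval w G1 = c ^ 2 * ∑ j, b j * w j := by
    intro w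
    rw [hG1, Finset.mul_sum]; simp [mul_assoc]
  have hG1v : ∀ w, (∀ j, w j ∈ O) → O.valuation (MvPolynomial.eval w G1) ≤ O.valuation c ^ 2 := by
    intro w hw
    rw [hG1e, map_mul, map_pow]
    apply mul_le_of_le_one_right'
    rw [O.valuation_le_one_iff]
    exact sum_mem (fun j _ => O.mul_mem _ _ (hbO j) (hw j))
  have hyO : ∀ j, y j ∈ O := fun j => (O.valuation_le_one_iff _).1 (hy j).le
  have hzO : ∀ j, z j ∈ O := fun j => hc (z j) 1 (by simpa using hz1 j) O.one_mem
  have hG0y : O.valuation (MvPolynomial.eval y G0) ≤ O.valuation c ^ 2 := by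
    rw [hG0e]
    refine (Valuation.map_add _ _ _).trans (max_le ((Valuation.map_add _ _ _).trans
      (max_le ?_ ?_)) ?_)
    · rw [map_mul, map_inv₀, map_pow]
      calc (O.valuation c)⁻¹ * O.valuation (MvPolynomial.eval y g - c) ^ 2 ≤
          (O.valuation c)⁻¹ * (O.valuation c ^ 2) ^ 2 := by gcongr
        _ = O.valuation c ^ 2 * O.valuation c := by field_simp
        _ ≤ O.valuation c ^ 2 := mul_le_of_le_one_right' hc1.le
    · apply Valuation.map_sum_le
      intro j _
      rw [map_pow]
      exact pow_le_pow_left' (hdg j) 2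
    · rw [map_pow, mul_comm, pow_mul]
      exact pow_le_pow_left' hN 2
  set M := MvPolynomial.eval y (G0 + G1) - MvPolynomial.eval z G1 with hM
  have hMv : O.valuation M ≤ O.valuation c ^ 2 := by
    rw [hM, map_add]
    exact (Valuation.map_sub _ _ _).trans (max_le ((Valuation.map_add _ _ _).trans
      (max_le hG0y (hG1v y hyO))) (hG1v z hzO))
  have hle : MvPolynomial.eval z G0 ≤ M := by
    have := hzmin y (fun j => (hc.abs_lt_one (hy j)).le)
    rw [map_add] at this
    rw [hM]; linarith
  rw [hG0e] at hle
  have t1 : 0 ≤ c⁻¹ * (MvPolynomial.eval z g - c) ^ 2 := by positivity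
  have t2 : 0 ≤ ∑ j, (MvPolynomial.eval z (MvPolynomial.pderiv j g)) ^ 2 := 
    Finset.sum_nonneg (fun j _ => sq_nonneg _)
  have t0 : 0 ≤ ∑ j, z j ^ 2 := Finset.sum_nonneg (fun j _ => sq_nonneg _)
  have t3 : 0 ≤ (∑ j, z j ^ 2) ^ (2 * N) := by positivity
  have hterm : ∀ t : K, 0 ≤ t → t ≤ M → O.valuation t ≤ O.valuation c ^ 2 := by
    intro t h1 h2
    refine (hc.val_le ?_).trans hMv
    rw [abs_of_nonneg h1, abs_of_nonneg (h1.trans h2)]; exact h2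
  have v1 := hterm _ t1 (by linarith)
  have v2 : ∀ j, O.valuation (MvPolynomial.eval z (MvPolynomial.pderiv j g)) ≤ O.valuation c := by
    intro j
    have h1 := Finset.single_le_sum (f := fun j => 
      (MvPolynomial.eval z (MvPolynomial.pderiv j g)) ^ 2) (fun j _ => sq_nonneg _)
      (Finset.mem_univ j)
    have h2 := hterm _ (sq_nonneg (MvPolynomial.eval z (MvPolynomial.pderiv j g)))
      (by linarith)
    rw [map_pow] at h2
    exact (pow_le_pow_iff_left₀ zero_le zero_le two_ne_zero).1 h2
  have v3 := hterm _ t3 (by linarith)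
  have hc2 : O.valuation c ^ 2 < 1 := pow_lt_one₀ zero_le hc1 two_ne_zero
  have hzm : ∀ j, O.valuation (z j) < 1 := by
    intro j
    rw [map_pow] at v3
    have h1 : O.valuation (∑ j, z j ^ 2) < 1 := by
      by_contra hcon
      push Not at hcon
      exact absurd (lt_of_le_of_lt v3 hc2) (not_lt.2 (one_le_pow₀ hcon))
    have h2 : O.valuation (z j ^ 2) < 1 := by
      refine lt_of_le_of_lt (hc.val_le ?_) h1
      rw [abs_of_nonneg (sq_nonneg _), abs_of_nonneg t0]
      exact Finset.single_le_sum (f := fun j => z j ^ 2) (fun j _ => sq_nonneg _)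
        (Finset.mem_univ j)
    rw [map_pow] at h2
    exact (pow_lt_one_iff_of_nonneg zero_le two_ne_zero).1 h2
  have v4 : O.valuation (MvPolynomial.eval z g - c) < O.valuation c := by
    rw [map_mul, map_inv₀, map_pow] at v1
    by_contra hcon
    push Not at hcon
    have h1 : (O.valuation c)⁻¹ * O.valuation c ^ 2 ≤ 
      (O.valuation c)⁻¹ * O.valuation (MvPolynomial.eval z g - c) ^ 2 := by gcongr
    have h2 : (O.valuation c)⁻¹ * O.valuation c ^ 2 = O.valuation c := by field_simp
    rw [h2] at h1
    have h3 := h1.trans v1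
    rw [pow_two] at h3
    exact absurd ((mul_lt_iff_lt_one_left hvcp).2 hc1) (not_lt.2 h3)
  -- criticality
  have hcrit := crit_mv (G0 + G1) z (fun j => hc.abs_lt_one (hzm j)) hzmin
  have hbA : ∀ j, b j ∈ IntermediateField.adjoin k1
      (Set.range (fun o : Option (Fin n) => o.elim c z)) := by
    set A := (IntermediateField.adjoin k1
      (Set.range (fun o : Option (Fin n) => o.elim c z))).toSubfield with hA
    intro j
    change b j ∈ A
    have hcA : c ∈ A := IntermediateField.subset_adjoin _ _ ⟨none, rfl⟩
    have hzA : ∀ i, z i ∈ A := fun i => IntermediateField.subset_adjoin _ _ ⟨some i, rfl⟩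
    have hkA : ∀ x ∈ k1, x ∈ A := fun x hx => IntermediateField.algebraMap_mem _ (⟨x, hx⟩ : k1)
    obtain ⟨gA, hgA⟩ := lift_poly A g (fun m => hkA _ (hk1c m))
    set GA : MvPolynomial (Fin n) A := MvPolynomial.C (⟨c, hcA⟩ : A)⁻¹ * (gA - MvPolynomial.C ⟨c, hcA⟩) ^ 2 +
      ∑ j, (MvPolynomial.pderiv j gA) ^ 2 + (∑ j, MvPolynomial.X j ^ 2) ^ (2 * N) with hGA
    have hGA0 : GA.map (algebraMap A K) = G0 := by
      rw [hGA, hG0]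
      simp only [map_add, map_mul, map_pow, map_sub, map_sum, MvPolynomial.map_C, MvPolynomial.map_X,
        ← MvPolynomial.pderiv_map, hgA, map_inv₀]
      rfl
    have hmem : MvPolynomial.eval z (MvPolynomial.pderiv j G0) ∈ A := by
      rw [← hGA0, MvPolynomial.pderiv_map, MvPolynomial.eval_map]
      have := MvPolynomial.hom_eval₂ (MvPolynomial.pderiv j GA) (RingHom.id A) (algebraMap A K)
        (fun i => (⟨z i, hzA i⟩ : A))
      rw [RingHom.comp_id] at this
      have h2 : MvPolynomial.eval₂ (algebraMap A K) z (MvPolynomial.pderiv j GA) =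
        algebraMap A K (MvPolynomial.eval₂ (RingHom.id A) (fun i => (⟨z i, hzA i⟩ : A))
          (MvPolynomial.pderiv j GA)) := this.symm
      rw [h2]
      exact Subtype.property _
    have h1 := hcrit j
    have h2 : MvPolynomial.eval z (MvPolynomial.pderiv j G1) = c ^ 2 * b j := by
      rw [hG1, map_sum, map_sum, Finset.sum_eq_single j]
      · simp
      · intro i _ hij
        rw [MvPolynomial.pderiv_C_mul, MvPolynomial.pderiv_X_of_ne hij]; simp
      · simp
    rw [map_add, map_add, h2] at h1
    have h3 : b j = - (MvPolynomial.eval z (MvPolynomial.pderiv j G0)) / c ^ 2 := by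
      field_simp; linear_combination h1
    rw [h3]
    exact A.div_mem (A.neg_mem hmem) (A.pow_mem hcA 2)
  obtain ⟨g', hg'⟩ := lift_poly k g (fun m => hk2k (hk12 (hk1c m)))
  have hae : ∀ q : MvPolynomial (Fin n) k, MvPolynomial.aeval z q =
      MvPolynomial.eval z (q.map (algebraMap k K)) := by
    intro q; rw [MvPolynomial.eval_map]; rfl
  refine final_contra hc hivt hkO halg c hc0 hc1 z hzO
    (trdeg_alg k1 k (hk12.trans hk2k) c b z (fun j => hk2k (hbk2 j)) hind hbA) g' ?_ ?_
  · rw [hae, hg']; exact v4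
  · intro j
    rw [hae, ← MvPolynomial.pderiv_map, hg']; exact v2 j

end PolyContra
end Loj


namespace Loj

section OO
variable {K : Type*} [Field K] [LinearOrder K] [IsStrictOrderedRing K]

/-- convex valuation ring attached to an infinitesimal -/
def OO (c : K) (hc0 : 0 < c) (hc : ∀ n : ℕ, (n : K) * c ≤ 1) : ValuationSubring K where
  carrier := {y | ∀ N : ℕ, |y| ^ N * c ≤ 1}
  mul_mem' := by
    intro x y hx hy N
    have h : |x * y| ≤ (max |x| |y|) ^ 2 := by
      rw [abs_mul, sq]; gcongr; exacts [le_max_left _ _, le_max_right _ _]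
    have h2 : (max |x| |y|) ^ (2 * N) * c ≤ 1 := by
      rcases max_choice |x| |y| with h | h <;> rw [h]
      exacts [hx _, hy _]
    refine le_trans ?_ h2
    rw [pow_mul]; gcongr
  one_mem' := by intro N; simpa using hc 1
  add_mem' := by
    intro x y hx hy N
    set M := max |x| |y| with hM
    have hM0 : 0 ≤ M := le_trans (abs_nonneg x) (le_max_left _ _)
    have h : |x + y| ≤ 2 * M := by
      refine (abs_add_le _ _).trans ?_
      rw [two_mul]; gcongr; exacts [le_max_left _ _, le_max_right _ _]
    have h2 : M ^ (2 * N) * c ≤ 1 := by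
      rcases max_choice |x| |y| with h | h <;> rw [hM, h]
      exacts [hx _, hy _]
    by_cases h3 : M ≤ 2
    · have h4 : |x + y| ≤ 4 := by linarith
      have := hc (4 ^ N)
      push_cast at this
      refine le_trans ?_ this
      gcongr
    · push Not at h3
      refine le_trans ?_ h2
      rw [pow_mul]; gcongr
      nlinarith
  zero_mem' := by
    intro N
    have h1 := hc 1
    cases N with
    | zero => simpa using h1
    | succ N => simp
  neg_mem' := by
    intro x hx N
    simpa [abs_neg] using hx N
  mem_or_inv_mem' := by
    intro x
    have key : ∀ y : K, |y| ≤ 1 → ∀ N : ℕ, |y| ^ N * c ≤ 1 := by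
      intro y hy N
      have h1 := hc 1
      have : |y| ^ N ≤ 1 := pow_le_one₀ (abs_nonneg _) hy
      have h0 := pow_nonneg (abs_nonneg y) N
      simp only [Nat.cast_one, one_mul] at h1
      nlinarith
    by_cases h : |x| ≤ 1
    · exact Or.inl (key x h)
    · push Not at h
      right
      apply key
      rw [abs_inv]
      exact inv_le_one_of_one_le₀ h.le

variable {c : K} {hc0 : 0 < c} {hc : ∀ n : ℕ, (n : K) * c ≤ 1}

lemma mem_OO {y : K} : y ∈ OO c hc0 hc ↔ ∀ N : ℕ, |y| ^ N * c ≤ 1 := Iff.rfl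

lemma OO_conv : Conv (OO c hc0 hc) := by
  intro x y h hy N
  refine le_trans ?_ (hy N)
  gcongr

lemma OO_lt {y : K} : (OO c hc0 hc).valuation y < 1 ↔ ∃ N : ℕ, |y| ^ N < c := by
  by_cases h0 : y = 0
  · subst h0
    simp only [map_zero, zero_lt_one, true_iff]
    exact ⟨1, by simpa using hc0⟩
  have hv : 0 < (OO c hc0 hc).valuation y := by
    rw [zero_lt_iff]; simpa using h0
  have : (1 ≤ (OO c hc0 hc).valuation y) ↔ y⁻¹ ∈ OO c hc0 hc := by
    rw [← ValuationSubring.valuation_le_one_iff, map_inv₀, inv_le_one₀ hv]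
  rw [← not_le, this, mem_OO]
  push Not
  refine exists_congr fun N => ?_
  have hp : 0 < |y| ^ N := pow_pos (abs_pos.2 h0) N
  rw [abs_inv, inv_pow, inv_mul_eq_div, one_lt_div hp]

lemma OO_val_c (hc' : c < 1) : (OO c hc0 hc).valuation c < 1 := by
  rw [OO_lt]
  refine ⟨2, ?_⟩
  rw [abs_of_pos hc0]
  nlinarith

lemma OO_arch (y : K) (h : (OO c hc0 hc).valuation y < 1) :
    ∃ N : ℕ, (OO c hc0 hc).valuation y ^ N ≤ (OO c hc0 hc).valuation c := by
  obtain ⟨N, hN⟩ := OO_lt.1 h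
  refine ⟨N, ?_⟩
  rw [← map_pow]
  apply OO_conv.val_le
  rw [abs_pow, abs_of_pos hc0]
  exact hN.le

end OO

/-- the hyperreals -/
abbrev HK : Type := Germ (hyperfilter ℕ : Filter ℕ) ℝ

/-- class of a sequence -/
noncomputable def cl : (ℕ → ℝ) →+* HK := Germ.coeRingHom (hyperfilter ℕ : Filter ℕ)

lemma cl_surj : Function.Surjective cl := fun q => by
  induction q using Germ.inductionOn with
  | _ f => exact ⟨f, rfl⟩

lemma cl_le {f g : ℕ → ℝ} : cl f ≤ cl g ↔ ∀ᶠ n in hyperfilter ℕ, f n ≤ g n := Iff.rfl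
lemma cl_eq {f g : ℕ → ℝ} : cl f = cl g ↔ ∀ᶠ n in hyperfilter ℕ, f n = g n := Germ.coe_eq
lemma cl_lt {f g : ℕ → ℝ} : cl f < cl g ↔ ∀ᶠ n in hyperfilter ℕ, f n < g n := Germ.coe_lt
lemma cl_abs (f : ℕ → ℝ) : |cl f| = cl (fun n => |f n|) := Germ.abs_def (cl f)

lemma poly_eval (Q : Polynomial (ℕ → ℝ)) (s : ℕ → ℝ) :
    (Q.map cl).eval (cl s) = cl (fun n => (Q.map (Pi.evalRingHom (fun _ => ℝ) n)).eval (s n)) := by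
  rw [Polynomial.eval_map, Polynomial.eval₂_at_apply]
  congr 1
  funext n
  rw [Polynomial.eval_map]
  exact (Polynomial.eval₂_at_apply (Pi.evalRingHom (fun _ => ℝ) n) s).symm

lemma mvpoly_eval {m : ℕ} (Q : MvPolynomial (Fin m) (ℕ → ℝ)) (s : Fin m → ℕ → ℝ) :
    MvPolynomial.eval (fun j => cl (s j)) (Q.map cl) =
      cl (fun n => MvPolynomial.eval (fun j => s j n) (Q.map (Pi.evalRingHom (fun _ => ℝ) n))) := by
  rw [MvPolynomial.eval_map]
  have h1 : cl (MvPolynomial.eval s Q) = MvPolynomial.eval₂ cl (fun j => cl (s j)) Q := by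
    rw [← MvPolynomial.eval₂_id, MvPolynomial.eval₂_comp_left]; rfl
  rw [← h1]
  congr 1
  funext n
  rw [MvPolynomial.eval_map]
  have h2 : (Pi.evalRingHom (fun _ => ℝ) n) (MvPolynomial.eval s Q) =
    MvPolynomial.eval₂ (Pi.evalRingHom (fun _ => ℝ) n) (fun j => s j n) Q := by
    rw [← MvPolynomial.eval₂_id, MvPolynomial.eval₂_comp_left]; rfl
  exact h2

lemma real_ivp (Q : Polynomial ℝ) (s t : ℝ) (h : Q.eval s * Q.eval t ≤ 0) :
    ∃ w ∈ Set.uIcc s t, Q.eval w = 0 := by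
  have hc : ContinuousOn (fun x => Q.eval x) (Set.uIcc s t) := Q.continuous.continuousOn
  have h0 : (0 : ℝ) ∈ Set.uIcc (Q.eval s) (Q.eval t) := by
    rw [Set.mem_uIcc]
    rcases mul_nonpos_iff.1 h with h | h
    · exact Or.inr ⟨h.2, h.1⟩
    · exact Or.inl ⟨h.1, h.2⟩
  obtain ⟨w, hw, h⟩ := intermediate_value_uIcc hc h0
  exact ⟨w, hw, h⟩

lemma HK_ivp : IVP HK := by
  intro Q s t h
  obtain ⟨Q, rfl⟩ := Polynomial.map_surjective _ cl_surj Q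
  obtain ⟨s, rfl⟩ := cl_surj s
  obtain ⟨t, rfl⟩ := cl_surj t
  rw [poly_eval, poly_eval, ← map_mul, ← map_zero cl, cl_le] at h
  have : ∀ n, ∃ w : ℝ, (Q.map (Pi.evalRingHom (fun _ => ℝ) n)).eval (s n) *
      (Q.map (Pi.evalRingHom (fun _ => ℝ) n)).eval (t n) ≤ 0 → w ∈ Set.uIcc (s n) (t n) ∧
      (Q.map (Pi.evalRingHom (fun _ => ℝ) n)).eval w = 0 := by
    intro n
    by_cases h : (Q.map (Pi.evalRingHom (fun _ => ℝ) n)).eval (s n) *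
      (Q.map (Pi.evalRingHom (fun _ => ℝ) n)).eval (t n) ≤ 0
    · obtain ⟨w, h1, h2⟩ := real_ivp _ _ _ h
      exact ⟨w, fun _ => ⟨h1, h2⟩⟩
    · exact ⟨0, fun h' => absurd h' h⟩
  choose w hw using this
  refine ⟨cl w, ?_, ?_⟩
  · rw [Set.mem_uIcc]
    by_cases hst : ∀ᶠ n in hyperfilter ℕ, s n ≤ t n
    · left
      constructor
      · rw [cl_le]; filter_upwards [h, hst] with n h1 h2
        have := (hw n h1).1
        rw [Set.uIcc_of_le h2] at this; exact this.1
      · rw [cl_le]; filter_upwards [h, hst] with n h1 h2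
        have := (hw n h1).1
        rw [Set.uIcc_of_le h2] at this; exact this.2
    · rw [← Ultrafilter.eventually_not] at hst
      right
      constructor
      · rw [cl_le]; filter_upwards [h, hst] with n h1 h2
        have := (hw n h1).1
        rw [Set.uIcc_of_ge (not_le.1 h2).le] at this; exact this.1
      · rw [cl_le]; filter_upwards [h, hst] with n h1 h2
        have := (hw n h1).1
        rw [Set.uIcc_of_ge (not_le.1 h2).le] at this; exact this.2
  · rw [poly_eval, ← map_zero cl, cl_eq]
    filter_upwards [h] with n h1
    exact (hw n h1).2

lemma real_minp {m : ℕ} (G : MvPolynomial (Fin m) ℝ) :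
    ∃ z : Fin m → ℝ, (∀ j, |z j| ≤ 1) ∧ ∀ y : Fin m → ℝ, (∀ j, |y j| ≤ 1) →
      MvPolynomial.eval z G ≤ MvPolynomial.eval y G := by
  have hK : IsCompact (Metric.closedBall (0 : Fin m → ℝ) 1) := isCompact_closedBall _ _
  have key : ∀ z : Fin m → ℝ, z ∈ Metric.closedBall (0 : Fin m → ℝ) 1 ↔ ∀ j, |z j| ≤ 1 := by
    intro z
    rw [mem_closedBall_zero_iff, pi_norm_le_iff_of_nonneg zero_le_one]; rfl
  obtain ⟨z, hz, hmin⟩ := hK.exists_isMinOn ⟨0, by simp⟩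
    (MvPolynomial.continuous_eval G).continuousOn
  exact ⟨z, (key z).1 hz, fun y hy => hmin ((key y).2 hy)⟩

lemma HK_minp : MinP HK := by
  intro m G
  obtain ⟨G, rfl⟩ := MvPolynomial.map_surjective _ cl_surj G
  choose z hz1 hz2 using fun n => real_minp (G.map (Pi.evalRingHom (fun _ => ℝ) n))
  refine ⟨fun j => cl (fun n => z n j), ?_, ?_⟩
  · intro j
    rw [cl_abs, ← map_one cl, cl_le]
    exact Eventually.of_forall fun n => hz1 n j
  · intro y hy
    choose y' hy' using fun j => cl_surj (y j)
    obtain rfl : (fun j => cl (y' j)) = y := funext hy'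
    rw [mvpoly_eval, mvpoly_eval, cl_le]
    have : ∀ j, ∀ᶠ n in hyperfilter ℕ, |y' j n| ≤ 1 := by
      intro j
      have := hy j
      rwa [cl_abs, ← map_one cl, cl_le] at this
    filter_upwards [eventually_all.2 this] with n hn
    exact hz2 n _ hn

lemma HK_unc (c : HK) (hc0 : 0 < c) (hc : ∀ n : ℕ, (n : HK) * c ≤ 1) :
    Uncountable (IsLocalRing.ResidueField (OO c hc0 hc)) := by
  let i : ℝ →+* HK := cl.comp (Pi.constRingHom ℕ ℝ)
  have hi : ∀ r, i r ∈ OO c hc0 hc := by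
    intro r N
    obtain ⟨k, hk⟩ := exists_nat_ge (|r| ^ N)
    refine le_trans ?_ (hc k)
    gcongr
    have : |i r| ^ N = cl (fun n => |r| ^ N) := by
      change |cl (fun _ => r)| ^ N = _
      rw [cl_abs, ← map_pow]; rfl
    rw [this, ← map_natCast cl, cl_le]
    exact Eventually.of_forall fun n => by simpa using hk
  let i' : ℝ →+* OO c hc0 hc := i.codRestrict (OO c hc0 hc) hi
  have := ((IsLocalRing.residue (OO c hc0 hc)).comp i').injective
  exact this.uncountable

end Loj


namespace Loj

section FC
open scoped NNReal ENNReal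
variable {ι : Type} [Fintype ι] [DecidableEq ι]

/-- substitution of elements of an algebra in a power series -/
noncomputable def fcs (p : FormalMultilinearSeries ℝ (ι → ℝ) ℝ) (A : Type) [NormedRing A] [NormedAlgebra ℝ A] :
    FormalMultilinearSeries ℝ (ι → A) A := fun n =>
  ∑ i : Fin n → ι, (p n (fun j => Pi.single (i j) 1)) •
    (ContinuousMultilinearMap.mkPiAlgebraFin ℝ n A).compContinuousLinearMap
      (fun j => ContinuousLinearMap.proj (R := ℝ) (φ := fun _ : ι => A) (i j))

variable {A : Type} [NormedRing A] [NormedAlgebra ℝ A]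

lemma fcs_apply (p : FormalMultilinearSeries ℝ (ι → ℝ) ℝ) (n : ℕ) (X : ι → A) :
    fcs p A n (fun _ => X) = ∑ i : Fin n → ι, (p n (fun j => Pi.single (i j) 1)) •
      (List.ofFn (fun j => X (i j))).prod := by
  simp [fcs]

lemma fcs_norm (p : FormalMultilinearSeries ℝ (ι → ℝ) ℝ) (n : ℕ) :
    ‖fcs p A n‖ ≤ (Fintype.card ι : ℝ) ^ n * ‖p n‖ * max 1 ‖(1 : A)‖ := by
  apply ContinuousMultilinearMap.opNorm_le_bound (by positivity)
  intro m
  have e : fcs p A n m = ∑ i : Fin n → ι, (p n (fun j => Pi.single (i j) 1)) •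
      (ContinuousMultilinearMap.mkPiAlgebraFin ℝ n A (fun j => m j (i j))) := by
    simp [fcs]
  rw [e]
  have : ∀ i ∈ (Finset.univ : Finset (Fin n → ι)), ‖(p n (fun j => Pi.single (i j) 1)) •
    (ContinuousMultilinearMap.mkPiAlgebraFin ℝ n A (fun j => m j (i j)))‖ ≤
      ‖p n‖ * (max 1 ‖(1 : A)‖ * ∏ j, ‖m j‖) := by
    intro i _
    rw [norm_smul]
    gcongr
    · refine ((p n).le_opNorm _).trans ?_
      have : ∏ j : Fin n, ‖(Pi.single (i j) 1 : ι → ℝ)‖ ≤ 1 := by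
        apply Finset.prod_le_one
        · intros; positivity
        · intro j _
          rw [pi_norm_le_iff_of_nonneg zero_le_one]
          intro l
          rw [Pi.single_apply]
          split_ifs <;> simp
      have h0 := norm_nonneg (p n)
      nlinarith
    · refine (ContinuousMultilinearMap.le_opNorm _ _).trans ?_
      gcongr
      · exact ContinuousMultilinearMap.norm_mkPiAlgebraFin_le
      · exact norm_le_pi_norm (m _) _
  refine (norm_sum_le _ _).trans ((Finset.sum_le_sum this).trans (le_of_eq ?_))
  simp
  ring

lemma fcs_radius (p : FormalMultilinearSeries ℝ (ι → ℝ) ℝ) (r : ℝ≥0)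
    (h : ((Fintype.card ι * r : ℝ≥0) : ℝ≥0∞) < p.radius) : (r : ℝ≥0∞) ≤ (fcs p A).radius := by
  obtain ⟨C, hC, hb⟩ := p.norm_mul_pow_le_of_lt_radius h
  apply FormalMultilinearSeries.le_radius_of_bound _ (C * max 1 ‖(1 : A)‖)
  intro n
  have h1 := fcs_norm (A := A) p n
  have h2 := hb n
  push_cast at h2
  calc ‖fcs p A n‖ * (r : ℝ) ^ n ≤ ((Fintype.card ι : ℝ) ^ n * ‖p n‖ * max 1 ‖(1 : A)‖) * (r : ℝ) ^ n := by
        gcongr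
    _ = (‖p n‖ * (Fintype.card ι * (r : ℝ)) ^ n) * max 1 ‖(1 : A)‖ := by rw [mul_pow]; ring
    _ ≤ _ := by gcongr

lemma fcs_analytic [CompleteSpace A] (p : FormalMultilinearSeries ℝ (ι → ℝ) ℝ) (r : ℝ≥0)
    (h : ((Fintype.card ι * r : ℝ≥0) : ℝ≥0∞) < p.radius) (X : ι → A) (hX : ‖X‖ < r) :
    AnalyticAt ℝ (fcs p A).sum X ∧ HasSum (fun n => fcs p A n (fun _ => X)) ((fcs p A).sum X) := by
  have h1 := fcs_radius (A := A) p r h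
  have hm : X ∈ Metric.eball (0 : ι → A) (fcs p A).radius := by
    refine Metric.eball_subset_eball h1 ?_
    rw [Metric.mem_eball, edist_zero_right]
    rw [← ofReal_norm, ENNReal.ofReal_lt_coe_iff (by positivity)]
    exact hX
  have h0 : 0 < (fcs p A).radius := lt_of_le_of_lt (zero_le) hm
  have hp := (fcs p A).hasFPowerSeriesOnBall h0
  refine ⟨hp.analyticAt_of_mem hm, (fcs p A).hasSum hm⟩

lemma prod_intertwine {V V' : Type} [NormedAddCommGroup V] [NormedSpace ℝ V]
    [NormedAddCommGroup V'] [NormedSpace ℝ V'] (ρ : V →L[ℝ] V') :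
    ∀ (n : ℕ) (X : Fin n → (V →L[ℝ] V)) (X' : Fin n → (V' →L[ℝ] V')),
    (∀ i v, ρ (X i v) = X' i (ρ v)) → ∀ v, ρ ((List.ofFn X).prod v) = (List.ofFn X').prod (ρ v)
  | 0, X, X', h, v => by simp
  | n+1, X, X', h, v => by
    rw [List.ofFn_succ, List.ofFn_succ, List.prod_cons, List.prod_cons]
    change ρ (X 0 _) = X' 0 _
    rw [h]
    exact congrArg (X' 0) (prod_intertwine ρ n (fun i => X i.succ) (fun i => X' i.succ) (fun i => h i.succ) v)

lemma fcs_intertwine {V V' : Type} [NormedAddCommGroup V] [NormedSpace ℝ V] [CompleteSpace V]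
    [NormedAddCommGroup V'] [NormedSpace ℝ V'] [CompleteSpace V'] (ρ : V →L[ℝ] V')
    (p : FormalMultilinearSeries ℝ (ι → ℝ) ℝ) (r : ℝ≥0)
    (h : ((Fintype.card ι * r : ℝ≥0) : ℝ≥0∞) < p.radius)
    (X : ι → (V →L[ℝ] V)) (hX : ‖X‖ < r) (X' : ι → (V' →L[ℝ] V')) (hX' : ‖X'‖ < r)
    (hρ : ∀ i v, ρ (X i v) = X' i (ρ v)) (v : V) :
    ρ ((fcs p (V →L[ℝ] V)).sum X v) = (fcs p (V' →L[ℝ] V')).sum X' (ρ v) := by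
  have h1 := (fcs_analytic p r h X hX).2
  have h2 := (fcs_analytic p r h X' hX').2
  have h3 := ((h1.mapL (ContinuousLinearMap.apply ℝ V v)).mapL ρ)
  have h4 := (h2.mapL (ContinuousLinearMap.apply ℝ V' (ρ v)))
  refine h3.unique ?_
  suffices hh : ∀ n, ρ ((ContinuousLinearMap.apply ℝ V v) (fcs p (V →L[ℝ] V) n fun _ => X)) =
      (ContinuousLinearMap.apply ℝ V' (ρ v)) (fcs p (V' →L[ℝ] V') n fun _ => X') by
    simp only [hh]; exact h4
  intro n
  rw [fcs_apply, fcs_apply]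
  simp only [map_sum, map_smul, ContinuousLinearMap.apply_apply]
  refine Finset.sum_congr rfl fun i _ => ?_
  rw [prod_intertwine ρ n _ (fun j => X' (i j)) (fun j => hρ (i j))]

lemma prod_smul_one : ∀ (n : ℕ) (c : Fin n → ℝ),
    (List.ofFn fun j => c j • (1 : A)).prod = (∏ j, c j) • (1 : A)
  | 0, c => by simp
  | n+1, c => by
    rw [List.ofFn_succ, List.prod_cons, prod_smul_one n, Fin.prod_univ_succ]
    simp [smul_smul, mul_comm]

lemma fcs_scalar (f : (ι → ℝ) → ℝ) (p : FormalMultilinearSeries ℝ (ι → ℝ) ℝ) (R : ℝ≥0∞)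
    (hp : HasFPowerSeriesOnBall f p 0 R) (r : ℝ≥0)
    (h : ((Fintype.card ι * r : ℝ≥0) : ℝ≥0∞) < p.radius) (hr : (r : ℝ≥0∞) ≤ R)
    (x : ι → ℝ) (hx : ‖x‖ < r) (v : ℝ) :
    (fcs p (ℝ →L[ℝ] ℝ)).sum (fun i => x i • (1 : ℝ →L[ℝ] ℝ)) v = f x * v := by
  have hX : ‖(fun i => x i • (1 : ℝ →L[ℝ] ℝ))‖ < r := by
    refine lt_of_le_of_lt ?_ hx
    rw [pi_norm_le_iff_of_nonneg (norm_nonneg _)]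
    intro i
    rw [norm_smul, norm_one, mul_one]
    exact norm_le_pi_norm x i
  have h1 := (fcs_analytic p r h _ hX).2.mapL (ContinuousLinearMap.apply ℝ ℝ v)
  have hm : x ∈ Metric.eball (0 : ι → ℝ) R := by
    refine Metric.eball_subset_eball hr ?_
    rw [Metric.mem_eball, edist_zero_right]
    rw [← ofReal_norm, ENNReal.ofReal_lt_coe_iff (by positivity)]
    exact hx
  have h2 := (hp.hasSum hm).mul_right v
  rw [zero_add] at h2
  refine h1.unique ?_
  have h5 : ∀ n, (ContinuousLinearMap.apply ℝ ℝ v) (fcs p (ℝ →L[ℝ] ℝ) n fun _ i => x i • 1) =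
      p n (fun _ => x) * v := by
    intro n
    have hpx : p n (fun _ => x) = ∑ i : Fin n → ι, (∏ j, x (i j)) * p n (fun j => Pi.single (i j) 1) := by
      have hx' : (fun _ : Fin n => x) = fun _ : Fin n => ∑ i : ι, x i • (Pi.single i 1 : ι → ℝ) := by
        funext _
        conv_lhs => rw [← Finset.univ_sum_single x]
        refine Finset.sum_congr rfl fun i _ => ?_
        rw [← Pi.single_smul, smul_eq_mul, mul_one]
      rw [hx']
      have := (p n).toMultilinearMap.map_sum (fun (_ : Fin n) (i : ι) => x i • (Pi.single i 1 : ι → ℝ))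
      refine this.trans (Finset.sum_congr rfl fun i _ => ?_)
      exact (p n).map_smul_univ (fun j => x (i j)) (fun j => (Pi.single (i j) 1 : ι → ℝ))
    rw [hpx, fcs_apply]
    simp only [map_sum, map_smul, ContinuousLinearMap.apply_apply]
    rw [Finset.sum_mul]
    refine Finset.sum_congr rfl fun i _ => ?_
    have : (List.ofFn (fun j => x (i j) • (1 : ℝ →L[ℝ] ℝ))).prod = (∏ j, x (i j)) • 1 := by
      exact prod_smul_one n _
    rw [this]
    simp
    ring
  simpa only [h5] using h2

end FC
end Loj


namespace Loj

section Div
open scoped NNReal ENNReal Topology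

/-- shift operator -/
noncomputable def shiftL (D : ℕ) : (Fin (D+1) → ℝ) →L[ℝ] (Fin (D+1) → ℝ) :=
  ContinuousLinearMap.pi (fun i => Fin.cases 0 (fun j => ContinuousLinearMap.proj j.castSucc) i)

lemma shiftL_zero (D : ℕ) (v : Fin (D+1) → ℝ) : shiftL D v 0 = 0 := rfl
lemma shiftL_succ (D : ℕ) (v : Fin (D+1) → ℝ) (j : Fin D) : shiftL D v j.succ = v j.castSucc := rfl

/-- scaled companion operator -/
noncomputable def compL (D : ℕ) (ε : ℝ) (l : Fin (D+1) → ℝ) : (Fin (D+1) → ℝ) →L[ℝ] (Fin (D+1) → ℝ) :=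
  ε • shiftL D - (ε⁻¹) ^ D • ∑ j, (l j * ε ^ (j : ℕ)) •
    (ContinuousLinearMap.proj (R := ℝ) (φ := fun _ : Fin (D+1) => ℝ) (Fin.last D)).smulRight
      (Pi.single j 1 : Fin (D+1) → ℝ)

/-- extended companion operator -/
noncomputable def compL' (D : ℕ) (ε : ℝ) (l : Fin (D+1) → ℝ) (t : ℝ) :
    ((Fin (D+1) → ℝ) × ℝ) →L[ℝ] ((Fin (D+1) → ℝ) × ℝ) :=
  (ContinuousLinearMap.inl ℝ (Fin (D+1) → ℝ) ℝ).comp ((compL D ε l).comp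
    (ContinuousLinearMap.fst ℝ (Fin (D+1) → ℝ) ℝ)) +
  t • (ContinuousLinearMap.inr ℝ (Fin (D+1) → ℝ) ℝ).comp (ContinuousLinearMap.snd ℝ (Fin (D+1) → ℝ) ℝ) +
  ε • (ContinuousLinearMap.inr ℝ (Fin (D+1) → ℝ) ℝ).comp
    ((ContinuousLinearMap.proj (R := ℝ) (φ := fun _ : Fin (D+1) => ℝ) (Fin.last D)).comp
      (ContinuousLinearMap.fst ℝ (Fin (D+1) → ℝ) ℝ))

lemma compL'_apply (D : ℕ) (ε : ℝ) (l : Fin (D+1) → ℝ) (t : ℝ) (u : (Fin (D+1) → ℝ) × ℝ) :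
    compL' D ε l t u = (compL D ε l u.1, t * u.2 + ε * u.1 (Fin.last D)) := by
  simp [compL']

/-- evaluation functional -/
noncomputable def evL (D : ℕ) (ε t : ℝ) : (Fin (D+1) → ℝ) →L[ℝ] ℝ :=
  ∑ j : Fin (D+1), ((t * ε⁻¹) ^ (j : ℕ)) • (ContinuousLinearMap.proj (R := ℝ) (φ := fun _ : Fin (D+1) => ℝ) j)

lemma evL_apply (D : ℕ) (ε t : ℝ) (v) : evL D ε t v = ∑ j : Fin (D+1), (t * ε⁻¹) ^ (j : ℕ) * v j := by
  simp [evL]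

lemma evL_comp (D : ℕ) (ε t : ℝ) (hε : ε ≠ 0) (l : Fin (D+1) → ℝ) (v : Fin (D+1) → ℝ) :
    evL D ε t (compL D ε l v) = t * evL D ε t v -
      (t ^ (D+1) + ∑ j, l j * t ^ (j : ℕ)) * (ε⁻¹) ^ D * v (Fin.last D) := by
  have h1 : evL D ε t (shiftL D v) * ε = t * ∑ j : Fin D, (t * ε⁻¹) ^ (j : ℕ) * v j.castSucc := by
    rw [evL_apply, Fin.sum_univ_succ, shiftL_zero, mul_zero, zero_add, Finset.sum_mul, Finset.mul_sum]
    refine Finset.sum_congr rfl fun j _ => ?_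
    rw [shiftL_succ, Fin.val_succ, pow_succ]
    field_simp
  have h2 : evL D ε t v = (∑ j : Fin D, (t * ε⁻¹) ^ (j : ℕ) * v j.castSucc) + (t * ε⁻¹) ^ D * v (Fin.last D) := by
    rw [evL_apply, Fin.sum_univ_castSucc]; simp
  have h3 : ∀ j : Fin (D+1), evL D ε t (Pi.single j 1) = (t * ε⁻¹) ^ (j : ℕ) := by
    intro j
    rw [evL_apply, Finset.sum_eq_single j]
    · simp
    · intro b _ hb; simp [Pi.single_eq_of_ne hb]
    · simp
  have h4 : evL D ε t (compL D ε l v) = evL D ε t (shiftL D v) * ε -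
      (ε⁻¹) ^ D * (∑ j, l j * t ^ (j : ℕ)) * v (Fin.last D) := by
    simp only [compL, sub_apply, smul_apply, map_sub, map_smul, _root_.sum_apply, map_sum,
      ContinuousLinearMap.smulRight_apply, h3, smul_eq_mul, ContinuousLinearMap.proj_apply]
    rw [mul_comm ε, mul_assoc, Finset.sum_mul]
    congr 2
    refine Finset.sum_congr rfl fun j _ => ?_
    rw [mul_pow]
    have : ε ^ (j : ℕ) * ε⁻¹ ^ (j : ℕ) = 1 := by rw [← mul_pow, mul_inv_cancel₀ hε, one_pow]
    linear_combination (l j * v (Fin.last D) * t ^ (j : ℕ)) * this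
  rw [h4, h1, h2, mul_pow]
  ring

/-- functional on the extended space -/
noncomputable def evL' (D : ℕ) (ε t P : ℝ) : ((Fin (D+1) → ℝ) × ℝ) →L[ℝ] ℝ :=
  (evL D ε t).comp (ContinuousLinearMap.fst ℝ _ _) + (P * (ε⁻¹) ^ (D+1)) • ContinuousLinearMap.snd ℝ _ _

lemma evL'_apply (D : ℕ) (ε t P : ℝ) (u) :
    evL' D ε t P u = evL D ε t u.1 + P * (ε⁻¹) ^ (D+1) * u.2 := by
  simp [evL']

lemma evL'_comp (D : ℕ) (ε t : ℝ) (hε : ε ≠ 0) (l : Fin (D+1) → ℝ) (u : (Fin (D+1) → ℝ) × ℝ) :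
    evL' D ε t (t ^ (D+1) + ∑ j, l j * t ^ (j : ℕ)) (compL' D ε l t u) =
      t * evL' D ε t (t ^ (D+1) + ∑ j, l j * t ^ (j : ℕ)) u := by
  rw [evL'_apply, evL'_apply, compL'_apply, evL_comp D ε t hε]
  simp only
  have : ε⁻¹ * ε = 1 := inv_mul_cancel₀ hε
  rw [pow_succ (ε⁻¹)]
  linear_combination ((t ^ (D+1) + ∑ j, l j * t ^ (j : ℕ)) * ε⁻¹ ^ D * u.1 (Fin.last D)) * this

/-- substituted tuple -/
noncomputable def subX {n : ℕ} {V : Type} [NormedAddCommGroup V] [NormedSpace ℝ V] (x : Fin n → ℝ)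
    (C : V →L[ℝ] V) : Option (Fin n) → (V →L[ℝ] V) := fun o => o.elim C (fun i => x i • 1)

lemma subX_analytic {n : ℕ} {V Z : Type} [NormedAddCommGroup V] [NormedSpace ℝ V]
    [NormedAddCommGroup Z] [NormedSpace ℝ Z] (x : Z → Fin n → ℝ) (C : Z → (V →L[ℝ] V)) (z : Z)
    (hx : AnalyticAt ℝ x z) (hC : AnalyticAt ℝ C z) : AnalyticAt ℝ (fun z => subX (x z) (C z)) z := by
  rw [analyticAt_pi_iff]
  intro o
  cases o with
  | none => exact hC
  | some i =>
    have := (analyticAt_pi_iff.1 hx) i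
    exact this.smul analyticAt_const

lemma subX_norm {n : ℕ} {V : Type} [NormedAddCommGroup V] [NormedSpace ℝ V] (C : V →L[ℝ] V) :
    ‖subX (0 : Fin n → ℝ) C‖ ≤ ‖C‖ := by
  rw [pi_norm_le_iff_of_nonneg (norm_nonneg _)]
  intro o
  cases o with
  | none => exact le_rfl
  | some i => simp [subX]

lemma compL_analytic (D : ℕ) (ε : ℝ) (l : Fin (D+1) → ℝ) : AnalyticAt ℝ (compL D ε) l := by
  unfold compL
  refine analyticAt_const.fun_sub (AnalyticAt.fun_const_smul ?_)
  refine Finset.analyticAt_fun_sum _ fun j _ => ?_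
  have h : AnalyticAt ℝ (fun l : Fin (D+1) → ℝ => l j) l :=
    (ContinuousLinearMap.proj (R := ℝ) (φ := fun _ : Fin (D+1) => ℝ) j).analyticAt l
  exact (h.mul analyticAt_const).smul analyticAt_const

lemma compL'_analytic {Z : Type} [NormedAddCommGroup Z] [NormedSpace ℝ Z] (D : ℕ) (ε : ℝ)
    (l : Z → (Fin (D+1) → ℝ)) (t : Z → ℝ) (z : Z) (hl : AnalyticAt ℝ l z) (ht : AnalyticAt ℝ t z) :
    AnalyticAt ℝ (fun z => compL' D ε (l z) (t z)) z := by
  unfold compL'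
  refine AnalyticAt.fun_add (AnalyticAt.fun_add ?_ ?_) analyticAt_const
  · have h1 : AnalyticAt ℝ (fun z => compL D ε (l z)) z := (compL_analytic D ε (l z)).fun_comp hl
    let L1 : ((Fin (D+1) → ℝ) →L[ℝ] (Fin (D+1) → ℝ)) →L[ℝ] _ :=
      (ContinuousLinearMap.compL ℝ ((Fin (D+1) → ℝ) × ℝ) (Fin (D+1) → ℝ) ((Fin (D+1) → ℝ) × ℝ)
        (ContinuousLinearMap.inl ℝ (Fin (D+1) → ℝ) ℝ)).comp
      ((ContinuousLinearMap.compL ℝ ((Fin (D+1) → ℝ) × ℝ) (Fin (D+1) → ℝ) (Fin (D+1) → ℝ)).flip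
        (ContinuousLinearMap.fst ℝ (Fin (D+1) → ℝ) ℝ))
    exact AnalyticAt.fun_comp (f := fun z => compL D ε (l z)) (L1.analyticAt (compL D ε (l z))) h1
  · exact ht.fun_smul analyticAt_const

lemma compL_zero (D : ℕ) (ε : ℝ) : compL D ε 0 = ε • shiftL D := by
  simp [compL]

lemma compL'_zero (D : ℕ) (ε : ℝ) : compL' D ε 0 0 = ε • compL' D 1 0 0 := by
  simp only [compL', compL_zero]
  ext <;> simp

set_option maxHeartbeats 400000 in
theorem gen_div (n d : ℕ) (h : (Fin n → ℝ) × ℝ → ℝ) (hh : AnalyticAt ℝ h 0) :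
    ∃ (r : (Fin n → ℝ) × (Fin d → ℝ) → (Fin d → ℝ)) (q : ((Fin n → ℝ) × (Fin d → ℝ)) × ℝ → ℝ),
      AnalyticAt ℝ r 0 ∧ AnalyticAt ℝ q 0 ∧ ∀ᶠ z : ((Fin n → ℝ) × (Fin d → ℝ)) × ℝ in 𝓝 0,
        h (z.1.1, z.2) = (∑ j, r z.1 j * z.2 ^ (j : ℕ)) +
          q z * (z.2 ^ d + ∑ j, z.1.2 j * z.2 ^ (j : ℕ)) := by
  rcases d with _ | D
  · refine ⟨fun _ => 0, fun z => h (z.1.1, z.2), analyticAt_const, ?_, ?_⟩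
    · have : AnalyticAt ℝ h ((0 : ((Fin n → ℝ) × (Fin 0 → ℝ)) × ℝ).1.1,
        (0 : ((Fin n → ℝ) × (Fin 0 → ℝ)) × ℝ).2) := hh
      refine this.fun_comp (f := fun z : ((Fin n → ℝ) × (Fin 0 → ℝ)) × ℝ => (z.1.1, z.2)) ?_
      exact (analyticAt_fst.fun_comp analyticAt_fst).prod analyticAt_snd
    · exact Eventually.of_forall fun z => by simp
  -- transport to a pi type
  let L : (Option (Fin n) → ℝ) →L[ℝ] ((Fin n → ℝ) × ℝ) :=
    (ContinuousLinearMap.pi fun i => ContinuousLinearMap.proj (some i)).prod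
      (ContinuousLinearMap.proj none)
  have hL : ∀ x, L x = (fun i => x (some i), x none) := fun x => rfl
  let f : (Option (Fin n) → ℝ) → ℝ := fun x => h (L x)
  have hf : AnalyticAt ℝ f 0 := by
    have : AnalyticAt ℝ h (L 0) := by rw [map_zero]; exact hh
    exact this.fun_comp (L.analyticAt 0)
  obtain ⟨p, R, hp⟩ := hf
  obtain ⟨r, hr0, hr1, hr2⟩ : ∃ r : ℝ≥0, 0 < r ∧
      ((Fintype.card (Option (Fin n)) * r : ℝ≥0) : ℝ≥0∞) < p.radius ∧ (r : ℝ≥0∞) ≤ R := by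
    obtain ⟨s, hs0, hs⟩ := ENNReal.lt_iff_exists_nnreal_btwn.1 hp.r_pos
    have hs0 : 0 < s := by simpa using hs0
    have hc : (0 : ℝ≥0) < Fintype.card (Option (Fin n)) := by simp
    refine ⟨s / Fintype.card (Option (Fin n)), by positivity, ?_, ?_⟩
    · rw [mul_div_cancel₀ _ hc.ne']
      exact hs.trans_le hp.r_le
    · refine le_trans ?_ hs.le
      rw [ENNReal.coe_le_coe]
      refine div_le_self (zero_le) ?_
      simp
  obtain ⟨ε, hε0, hε1, hε2⟩ : ∃ ε : ℝ, 0 < ε ∧ ε * ‖shiftL D‖ < r ∧ ε * ‖compL' D 1 0 0‖ < r := by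
    have hr0' : (0 : ℝ) < r := hr0
    set M := ‖shiftL D‖ + ‖compL' D 1 0 0‖ + 1 with hM
    have h1 := norm_nonneg (shiftL D)
    have h2 := norm_nonneg (compL' D 1 0 0)
    have hM0 : 0 < M := by linarith
    refine ⟨r / M, by positivity, ?_, ?_⟩
    · rw [div_mul_eq_mul_div, div_lt_iff₀ hM0]; nlinarith
    · rw [div_mul_eq_mul_div, div_lt_iff₀ hM0]; nlinarith
  let e0 : Fin (D+1) → ℝ := Pi.single 0 1
  let X : (Fin n → ℝ) × (Fin (D+1) → ℝ) → _ := fun z => subX z.1 (compL D ε z.2)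
  let X' : ((Fin n → ℝ) × (Fin (D+1) → ℝ)) × ℝ → _ := fun z => subX z.1.1 (compL' D ε z.1.2 z.2)
  have hXa : AnalyticAt ℝ X 0 :=
    subX_analytic _ _ _ analyticAt_fst ((compL_analytic D ε _).fun_comp analyticAt_snd)
  have hXa' : AnalyticAt ℝ X' 0 := by
    refine subX_analytic _ _ _ (analyticAt_fst.fun_comp analyticAt_fst) ?_
    exact compL'_analytic D ε _ _ _ (analyticAt_snd.fun_comp analyticAt_fst) analyticAt_snd
  have hX0 : ‖X 0‖ < r := by
    refine (subX_norm _).trans_lt ?_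
    change ‖compL D ε 0‖ < r
    rw [compL_zero, norm_smul, Real.norm_of_nonneg hε0.le]; exact hε1
  have hX0' : ‖X' 0‖ < r := by
    refine (subX_norm _).trans_lt ?_
    change ‖compL' D ε 0 0‖ < r
    rw [compL'_zero, norm_smul, Real.norm_of_nonneg hε0.le]; exact hε2
  have hF := (fcs_analytic p r hr1 (X 0) hX0).1.fun_comp hXa
  have hF' := (fcs_analytic p r hr1 (X' 0) hX0').1.fun_comp hXa'
  refine ⟨fun z j => ε⁻¹ ^ (j : ℕ) * (fcs p _).sum (X z) e0 j,
    fun z => ε⁻¹ ^ (D+1) * ((fcs p _).sum (X' z) (e0, 0)).2, ?_, ?_, ?_⟩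
  · rw [analyticAt_pi_iff]
    intro j
    refine analyticAt_const.mul ?_
    exact (((ContinuousLinearMap.proj (R := ℝ) (φ := fun _ : Fin (D+1) => ℝ) j).comp
      (ContinuousLinearMap.apply ℝ _ e0)).analyticAt _).fun_comp hF
  · refine analyticAt_const.mul ?_
    exact (((ContinuousLinearMap.snd ℝ (Fin (D+1) → ℝ) ℝ).comp
      (ContinuousLinearMap.apply ℝ _ (e0, 0))).analyticAt _).fun_comp hF'
  · have c1 : ∀ᶠ z : ((Fin n → ℝ) × (Fin (D+1) → ℝ)) × ℝ in 𝓝 0, ‖X z.1‖ < r := by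
      have : ContinuousAt (fun z : ((Fin n → ℝ) × (Fin (D+1) → ℝ)) × ℝ => ‖X z.1‖) 0 :=
        (ContinuousAt.comp' (f := fun z : ((Fin n → ℝ) × (Fin (D+1) → ℝ)) × ℝ => z.1) hXa.continuousAt
          continuousAt_fst).norm
      exact this.eventually_lt continuousAt_const hX0
    have c2 : ∀ᶠ z in 𝓝 0, ‖X' z‖ < r :=
      hXa'.continuousAt.norm.eventually_lt continuousAt_const hX0'
    let y : ((Fin n → ℝ) × (Fin (D+1) → ℝ)) × ℝ → Option (Fin n) → ℝ := fun z o => o.elim z.2 z.1.1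
    have c3 : ∀ᶠ z in 𝓝 0, ‖y z‖ < r := by
      have : Continuous y := by
        refine continuous_pi fun o => ?_
        cases o with
        | none => exact continuous_snd
        | some i => exact (continuous_apply i).comp (continuous_fst.comp continuous_fst)
      have hy0 : y 0 = 0 := by
        funext o; cases o <;> rfl
      refine this.continuousAt.norm.eventually_lt continuousAt_const ?_
      rw [hy0, norm_zero]; exact hr0
    filter_upwards [c1, c2, c3] with z h1 h2 h3
    have i1 := fcs_intertwine (ContinuousLinearMap.fst ℝ (Fin (D+1) → ℝ) ℝ) p r hr1 (X' z) h2 (X z.1) h1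
      (by
        intro o v
        cases o with
        | none =>
          change (compL' D ε z.1.2 z.2 v).1 = compL D ε z.1.2 v.1
          rw [compL'_apply]
        | some i => rfl) (e0, 0)
    have hX3 : ‖(fun i => y z i • (1 : ℝ →L[ℝ] ℝ))‖ < r := by
      refine lt_of_le_of_lt ?_ h3
      rw [pi_norm_le_iff_of_nonneg (norm_nonneg _)]
      intro i
      rw [norm_smul, norm_one, mul_one]
      exact norm_le_pi_norm (y z) i
    have i2 := fcs_intertwine (evL' D ε z.2 (z.2 ^ (D+1) + ∑ j, z.1.2 j * z.2 ^ (j : ℕ))) p r hr1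
      (X' z) h2 _ hX3
      (by
        intro o v
        cases o with
        | none => exact evL'_comp D ε z.2 hε0.ne' z.1.2 v
        | some i =>
          change evL' D ε z.2 _ (z.1.1 i • v) = z.1.1 i • _
          rw [map_smul]; rfl) (e0, 0)
    rw [fcs_scalar f p R hp r hr1 hr2 (y z) h3, evL'_apply, evL'_apply] at i2
    have e1 : evL D ε z.2 e0 = 1 := by
      rw [evL_apply, Finset.sum_eq_single 0]
      · simp [e0]
      · intro b _ hb; simp [e0, Pi.single_eq_of_ne hb]
      · simp
    have e2 : f (y z) = h (z.1.1, z.2) := rfl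
    have i1' : ((fcs p _).sum (X' z) (e0, 0)).1 = (fcs p _).sum (X z.1) e0 := i1
    rw [i1', evL_apply] at i2
    simp only [e1, e2, mul_zero, add_zero, mul_one] at i2
    rw [← i2]
    congr 1
    · refine Finset.sum_congr rfl fun j _ => ?_
      rw [mul_pow]; ring
    · ring

end Div
end Loj


namespace Loj

section Weier
open scoped NNReal ENNReal Topology ContDiff

lemma poly_small : ∀ (d : ℕ) (μ : Fin d → ℝ) (C : ℝ),
    (∀ᶠ t in 𝓝[≠] (0:ℝ), |∑ j, μ j * t ^ (j : ℕ)| ≤ C * |t| ^ d) → μ = 0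
  | 0, μ, C, h => Subsingleton.elim _ _
  | d+1, μ, C, h => by
    have hm0 : μ 0 = 0 := by
      have h1 : Tendsto (fun t : ℝ => |∑ j, μ j * t ^ (j : ℕ)|) (𝓝[≠] 0) (𝓝 |∑ j, μ j * (0:ℝ) ^ (j : ℕ)|) := by
        have : Continuous (fun t : ℝ => |∑ j, μ j * t ^ (j : ℕ)|) := by fun_prop
        exact this.continuousAt.tendsto.mono_left nhdsWithin_le_nhds
      have h2 : Tendsto (fun t : ℝ => C * |t| ^ (d+1)) (𝓝[≠] 0) (𝓝 (C * |(0:ℝ)| ^ (d+1))) := by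
        have : Continuous (fun t : ℝ => C * |t| ^ (d+1)) := by fun_prop
        exact this.continuousAt.tendsto.mono_left nhdsWithin_le_nhds
      have h3 := le_of_tendsto_of_tendsto h1 h2 h
      rw [Fin.sum_univ_succ] at h3
      simpa using h3
    have ih := poly_small d (fun j => μ j.succ) C (by
      filter_upwards [h, self_mem_nhdsWithin] with t ht ht0
      have ht0 : 0 < |t| := abs_pos.2 ht0
      rw [Fin.sum_univ_succ, hm0, zero_mul, zero_add] at ht
      have e : ∑ j : Fin d, μ j.succ * t ^ (j.succ : ℕ) = (∑ j : Fin d, μ j.succ * t ^ (j : ℕ)) * t := by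
        rw [Finset.sum_mul]
        refine Finset.sum_congr rfl fun j _ => ?_
        rw [Fin.val_succ, pow_succ]; ring
      rw [e, abs_mul, pow_succ, ← mul_assoc] at ht
      exact le_of_mul_le_mul_right ht ht0)
    funext j
    refine Fin.cases hm0 (fun j => ?_) j
    exact congrFun ih j

variable {n : ℕ}

theorem weier_aux (g : (Fin n → ℝ) × ℝ → ℝ) (hg : AnalyticAt ℝ g 0)
    (hreg : ¬ ∀ᶠ t : ℝ in 𝓝 0, g (0, t) = 0) :
    ∃ (d : ℕ) (r : (Fin n → ℝ) × (Fin d → ℝ) → (Fin d → ℝ)) (q : ((Fin n → ℝ) × (Fin d → ℝ)) × ℝ → ℝ),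
      AnalyticAt ℝ r 0 ∧ AnalyticAt ℝ q 0 ∧ (∀ᶠ z : ((Fin n → ℝ) × (Fin d → ℝ)) × ℝ in 𝓝 0,
        g (z.1.1, z.2) = (∑ j, r z.1 j * z.2 ^ (j : ℕ)) +
          q z * (z.2 ^ d + ∑ j, z.1.2 j * z.2 ^ (j : ℕ))) ∧ r 0 = 0 ∧ q 0 ≠ 0 ∧
      (fderiv ℝ r 0 ∘L .inr ℝ (Fin n → ℝ) (Fin d → ℝ)).IsInvertible := by
  have ha : AnalyticAt ℝ (fun t : ℝ => g (0, t)) 0 := by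
    have : AnalyticAt ℝ g ((0 : Fin n → ℝ), (0:ℝ)) := hg
    exact AnalyticAt.fun_comp (f := fun t : ℝ => ((0 : Fin n → ℝ), t)) this
      (analyticAt_const.prod analyticAt_id)
  obtain ⟨d, u, hu, hu0, hgu⟩ := ha.exists_eventuallyEq_pow_smul_nonzero_iff.2 hreg
  simp only [sub_zero, smul_eq_mul] at hgu
  obtain ⟨r, q, hr, hq, hd⟩ := gen_div n d g hg
  have hqt : ContinuousAt (fun t : ℝ => q (0, t)) 0 := by
    have : ContinuousAt q ((0 : (Fin n → ℝ) × (Fin d → ℝ)), (0:ℝ)) := hq.continuousAt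
    exact ContinuousAt.comp' (f := fun t : ℝ => ((0 : (Fin n → ℝ) × (Fin d → ℝ)), t)) this (by fun_prop)
  have hd0 : ∀ᶠ t : ℝ in 𝓝 0, t ^ d * u t = (∑ j, r 0 j * t ^ (j : ℕ)) + q (0, t) * t ^ d := by
    have hT : Tendsto (fun t : ℝ => ((0 : (Fin n → ℝ) × (Fin d → ℝ)), t)) (𝓝 0) (𝓝 0) := by
      have : Continuous (fun t : ℝ => ((0 : (Fin n → ℝ) × (Fin d → ℝ)), t)) := by fun_prop
      exact this.tendsto 0
    filter_upwards [hT.eventually hd, hgu] with t h1 h2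
    rw [← h2]
    simpa using h1
  have hr0 : r 0 = 0 := by
    apply poly_small d (r 0) (|u 0 - q 0| + 1)
    have h1 : ContinuousAt (fun t : ℝ => |u t - q (0, t)|) 0 := (hu.continuousAt.sub hqt).abs
    have h2 : ∀ᶠ t : ℝ in 𝓝 0, |u t - q (0, t)| < |u 0 - q 0| + 1 := by
      refine h1.eventually_lt continuousAt_const ?_
      exact lt_add_one _
    refine Filter.Eventually.filter_mono nhdsWithin_le_nhds ?_
    filter_upwards [hd0, h2] with t h3 h4
    have : ∑ j, r 0 j * t ^ (j : ℕ) = (u t - q (0, t)) * t ^ d := by linear_combination -h3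
    rw [this, abs_mul, abs_pow]
    gcongr
  have hq0 : q 0 = u 0 := by
    have h1 : Tendsto (fun t : ℝ => q (0, t)) (𝓝[≠] 0) (𝓝 (q 0)) :=
      hqt.tendsto.mono_left nhdsWithin_le_nhds
    have h2 : Tendsto u (𝓝[≠] 0) (𝓝 (u 0)) := hu.continuousAt.tendsto.mono_left nhdsWithin_le_nhds
    refine tendsto_nhds_unique h1 (h2.congr' ?_)
    filter_upwards [Filter.Eventually.filter_mono nhdsWithin_le_nhds hd0, self_mem_nhdsWithin] with t h3 h4
    have : t ^ d ≠ 0 := pow_ne_zero _ h4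
    rw [hr0] at h3
    simp only [Pi.zero_apply, zero_mul, Finset.sum_const_zero, zero_add] at h3
    rw [mul_comm] at h3
    exact mul_right_cancel₀ this h3
  refine ⟨d, r, q, hr, hq, hd, hr0, hq0 ▸ hu0, ?_⟩
  set B := fderiv ℝ r 0 ∘L .inr ℝ (Fin n → ℝ) (Fin d → ℝ) with hB
  have hinj : Function.Injective B := by
    rw [injective_iff_map_eq_zero]
    intro μ hμ
    obtain ⟨K, U, hU, hK⟩ := (hq.contDiffAt (n := 1)).exists_lipschitzOnWith
    -- directional derivative
    have hder : HasDerivAt (fun s : ℝ => r (0, s • μ)) 0 0 := by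
      have h1 : HasFDerivAt r (fderiv ℝ r 0) ((0 : Fin n → ℝ), (0 : ℝ) • μ) := by
        rw [zero_smul]; exact hr.differentiableAt.hasFDerivAt
      have h2 : HasDerivAt (fun s : ℝ => ((0 : Fin n → ℝ), s • μ)) ((0 : Fin n → ℝ), μ) 0 := by
        refine (hasDerivAt_const _ _).prodMk ?_
        simpa using (hasDerivAt_id (0:ℝ)).smul_const μ
      have h3 := h1.comp_hasDerivAt (0:ℝ) h2
      have h4 : fderiv ℝ r 0 ((0 : Fin n → ℝ), μ) = 0 := hμ
      rw [h4] at h3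
      exact h3
    have hsl : Tendsto (fun s : ℝ => s⁻¹ • r (0, s • μ)) (𝓝[≠] 0) (𝓝 0) := by
      have := hder.tendsto_slope_zero
      have e : r ((0 : Fin n → ℝ), (0 : Fin d → ℝ)) = 0 := hr0
      simpa [e] using this
    have hT : Tendsto (fun p : ℝ × ℝ => (((0 : Fin n → ℝ), p.2 • μ), p.1)) (𝓝 (0, 0)) (𝓝 0) := by
      have : Continuous (fun p : ℝ × ℝ => (((0 : Fin n → ℝ), p.2 • μ), p.1)) := by fun_prop
      have h := this.tendsto (0, 0)
      simp only [zero_smul] at h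
      exact h
    have hT0 : Tendsto (fun t : ℝ => ((0 : (Fin n → ℝ) × (Fin d → ℝ)), t)) (𝓝 0) (𝓝 0) := by
      have : Continuous (fun t : ℝ => ((0 : (Fin n → ℝ) × (Fin d → ℝ)), t)) := by fun_prop
      exact this.tendsto 0
    have e1 := hT.eventually hd
    have e2 := hT.eventually hU
    rw [nhds_prod_eq] at e1 e2
    have e1' := e1.curry
    have e2' := e2.curry
    have e3 := hT0.eventually hd
    have e4 := hT0.eventually hU
    have e5 : ∀ᶠ t : ℝ in 𝓝 0, |q 0| / 2 < |q (0, t)| := by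
      refine continuousAt_const.eventually_lt hqt.abs ?_
      have : 0 < |q 0| := abs_pos.2 (hq0 ▸ hu0)
      change |q 0| / 2 < |q 0|
      linarith
    apply poly_small d μ (K * ‖μ‖ * (2 / |q 0|))
    refine Filter.Eventually.filter_mono nhdsWithin_le_nhds ?_
    filter_upwards [e1', e2', e3, e4, e5] with t h1 h2 h3 h4 h5
    set M := ∑ j, μ j * t ^ (j : ℕ) with hM
    have hqp : 0 < |q 0| := abs_pos.2 (hq0 ▸ hu0)
    have key : |q (0, t)| * |M| ≤ K * ‖μ‖ * |t| ^ d := by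
      have hlim : Tendsto (fun s : ℝ => (∑ j, |(s⁻¹ • r (0, s • μ)) j| * |t| ^ (j : ℕ)) +
          K * ‖μ‖ * |t| ^ d + K * (|s| * ‖μ‖) * |M|) (𝓝[≠] 0)
          (𝓝 ((∑ j : Fin d, |(0 : Fin d → ℝ) j| * |t| ^ (j : ℕ)) +
          K * ‖μ‖ * |t| ^ d + K * (|(0:ℝ)| * ‖μ‖) * |M|)) := by
        have hs0 : Tendsto (fun s : ℝ => |s|) (𝓝[≠] 0) (𝓝 |(0:ℝ)|) :=
          (continuous_abs.tendsto 0).mono_left nhdsWithin_le_nhds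
        refine Tendsto.add (Tendsto.add (tendsto_finsetSum _ fun j _ => ?_) tendsto_const_nhds) ?_
        · exact ((tendsto_pi_nhds.1 hsl j).abs).mul_const _
        · exact ((hs0.mul_const _).const_mul _).mul_const _
      simp only [Pi.zero_apply, abs_zero, zero_mul, Finset.sum_const_zero, zero_add, mul_zero, add_zero] at hlim
      refine ge_of_tendsto hlim ?_
      filter_upwards [Filter.Eventually.filter_mono nhdsWithin_le_nhds h1,
        Filter.Eventually.filter_mono nhdsWithin_le_nhds h2, self_mem_nhdsWithin] with s k1 k2 k3
      have k3 : s ≠ 0 := k3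
      have hsp : 0 < |s| := abs_pos.2 k3
      have l1 : |q ((0, s • μ), t) - q (0, t)| ≤ K * (|s| * ‖μ‖) := by
        have := hK.dist_le_mul _ k2 _ h4
        rw [Real.dist_eq] at this
        refine this.trans (le_of_eq ?_)
        rw [Prod.dist_eq, Prod.dist_eq]
        simp [norm_smul]
        exact Or.inl (by positivity)
      have l2 : ∑ j, (s • μ) j * t ^ (j : ℕ) = s * M := by
        rw [hM, Finset.mul_sum]
        refine Finset.sum_congr rfl fun j _ => ?_
        simp [mul_assoc]
      have l3 : g (0, t) = q (0, t) * t ^ d := by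
        have := h3
        rw [hr0] at this
        simpa using this
      rw [l2, l3] at k1
      have l4 : s * (q (0, t) * M) = - (∑ j, r (0, s • μ) j * t ^ (j : ℕ))
          - (q ((0, s • μ), t) - q (0, t)) * t ^ d - s * ((q ((0, s • μ), t) - q (0, t)) * M) := by
        linear_combination -k1
      have l5 : q (0, t) * M = - (∑ j, (s⁻¹ • r (0, s • μ)) j * t ^ (j : ℕ))
          - s⁻¹ * (q ((0, s • μ), t) - q (0, t)) * t ^ d - ((q ((0, s • μ), t) - q (0, t)) * M) := by
        have e : ∑ j, (s⁻¹ • r (0, s • μ)) j * t ^ (j : ℕ) = s⁻¹ * ∑ j, r (0, s • μ) j * t ^ (j : ℕ) := by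
          rw [Finset.mul_sum]
          refine Finset.sum_congr rfl fun j _ => ?_
          simp [mul_assoc]
        rw [e]
        have hs : s⁻¹ * s = 1 := inv_mul_cancel₀ k3
        linear_combination s⁻¹ * l4 - (q (0, t) * M + (q ((0, s • μ), t) - q (0, t)) * M) * hs
      rw [← abs_mul, l5]
      refine (abs_sub _ _).trans (add_le_add ((abs_sub _ _).trans (add_le_add ?_ ?_)) ?_)
      · rw [abs_neg]
        refine (Finset.abs_sum_le_sum_abs _ _).trans (le_of_eq ?_)
        simp only [abs_mul, abs_pow]
      · rw [abs_mul, abs_mul, abs_pow, abs_inv]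
        refine mul_le_mul_of_nonneg_right ?_ (by positivity)
        rw [inv_mul_le_iff₀ hsp]
        linarith
      · rw [abs_mul]; gcongr
    have : |q 0| / 2 * |M| ≤ K * ‖μ‖ * |t| ^ d := by
      refine le_trans ?_ key
      gcongr
    have h6 : |M| = (|q 0| / 2 * |M|) * (2 / |q 0|) := by field_simp
    rw [h6]
    calc (|q 0| / 2 * |M|) * (2 / |q 0|) ≤ (K * ‖μ‖ * |t| ^ d) * (2 / |q 0|) := by gcongr
      _ = _ := by ring
  exact ⟨(LinearEquiv.ofInjectiveEndo (B : (Fin d → ℝ) →ₗ[ℝ] (Fin d → ℝ)) hinj).toContinuousLinearEquiv, by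
    ext; rfl⟩

theorem weier (g : (Fin n → ℝ) × ℝ → ℝ) (hg : AnalyticAt ℝ g 0)
    (hreg : ¬ ∀ᶠ t : ℝ in 𝓝 0, g (0, t) = 0) :
    ∃ (d : ℕ) (lam : (Fin n → ℝ) → (Fin d → ℝ)), AnalyticAt ℝ lam 0 ∧
      (∃ C : ℝ, ∀ᶠ z : (Fin n → ℝ) × ℝ in 𝓝 0,
        |z.2 ^ d + ∑ j, lam z.1 j * z.2 ^ (j : ℕ)| ≤ C * |g z|) ∧
      ∀ h : (Fin n → ℝ) × ℝ → ℝ, AnalyticAt ℝ h 0 → ∃ r : (Fin n → ℝ) → (Fin d → ℝ),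
        AnalyticAt ℝ r 0 ∧ ∀ᶠ z : (Fin n → ℝ) × ℝ in 𝓝 0,
          z.2 ^ d + ∑ j, lam z.1 j * z.2 ^ (j : ℕ) = 0 → h z = ∑ j, r z.1 j * z.2 ^ (j : ℕ) := by
  obtain ⟨d, r, q, hr, hq, hd, hr0, hq0, hinv⟩ := weier_aux g hg hreg
  have cdf : ContDiffAt ℝ ω r 0 := hr.contDiffAt
  let lam := cdf.implicitFunction (by simp) hinv
  have hl : AnalyticAt ℝ lam 0 :=
    analyticWithinAt_univ.1 (contDiffWithinAt_omega_iff_analyticWithinAt.1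
      (contDiffWithinAt_univ.2 (cdf.contDiffAt_implicitFunction (by simp) hinv)))
  have hl0 : lam 0 = 0 := cdf.implicitFunction_apply_self (by simp) hinv
  have hle : ∀ᶠ x in 𝓝 0, r (x, lam x) = 0 := by
    have := cdf.eventually_apply_implicitFunction (by simp) hinv
    rw [hr0] at this
    exact this
  have hT1 : Tendsto (fun z : (Fin n → ℝ) × ℝ => z.1) (𝓝 0) (𝓝 0) := continuous_fst.tendsto 0
  have hA : AnalyticAt ℝ (fun x : Fin n → ℝ => (x, lam x)) 0 := analyticAt_id.prod hl
  have hA0 : (fun x : Fin n → ℝ => (x, lam x)) 0 = 0 := by simp [hl0]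
  have hT2 : Tendsto (fun z : (Fin n → ℝ) × ℝ => ((z.1, lam z.1), z.2)) (𝓝 0) (𝓝 0) := by
    have h1 : ContinuousAt (fun z : (Fin n → ℝ) × ℝ => ((z.1, lam z.1), z.2)) 0 := by
      refine ContinuousAt.prodMk ?_ continuousAt_snd
      exact ContinuousAt.comp' (f := fun z : (Fin n → ℝ) × ℝ => z.1) (x := 0)
        (g := fun x : Fin n → ℝ => (x, lam x)) hA.continuousAt continuousAt_fst
    have h2 := h1.tendsto
    have e : (((0 : (Fin n → ℝ) × ℝ).1, lam (0 : (Fin n → ℝ) × ℝ).1), (0 : (Fin n → ℝ) × ℝ).2) = 0 := by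
      simp [hl0]
    rwa [e] at h2
  refine ⟨d, lam, hl, ⟨2 / |q 0|, ?_⟩, ?_⟩
  · have hqp : 0 < |q 0| := abs_pos.2 hq0
    have e5 : ∀ᶠ z in 𝓝 0, |q 0| / 2 < |q z| := by
      refine continuousAt_const.eventually_lt hq.continuousAt.abs ?_
      linarith
    filter_upwards [hT2.eventually hd, hT2.eventually e5, hT1.eventually hle] with z h1 h2 h3
    simp only [h3, Pi.zero_apply, zero_mul, Finset.sum_const_zero, zero_add] at h1
    have : g z = _ := h1
    rw [this, abs_mul]
    have h0 := abs_nonneg (z.2 ^ d + ∑ j, lam z.1 j * z.2 ^ (j : ℕ))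
    calc |z.2 ^ d + ∑ j, lam z.1 j * z.2 ^ (j : ℕ)|
        = 2 / |q 0| * (|q 0| / 2 * |z.2 ^ d + ∑ j, lam z.1 j * z.2 ^ (j : ℕ)|) := by field_simp
      _ ≤ _ := by gcongr
  · intro h hh
    obtain ⟨r', q', hr', hq', hd'⟩ := gen_div n d h hh
    refine ⟨fun x => r' (x, lam x), ?_, ?_⟩
    · exact AnalyticAt.fun_comp (f := fun x : Fin n → ℝ => (x, lam x)) (by rw [hl0]; exact hr') hA
    · filter_upwards [hT2.eventually hd'] with z h1 h2
      rw [h2, mul_zero, add_zero] at h1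
      exact h1

end Weier
end Loj


namespace Loj

section LemA
open scoped Topology

variable {c : HK} {hc0 : 0 < c} {hc : ∀ n : ℕ, (n : HK) * c ≤ 1}

lemma inf_tendsto {s : ℕ → ℝ} (h : (OO c hc0 hc).valuation (cl s) < 1) :
    Tendsto s (hyperfilter ℕ : Filter ℕ) (𝓝 0) := by
  obtain ⟨N, hN⟩ := OO_lt.1 h
  rw [Metric.tendsto_nhds]
  intro ε hε
  obtain ⟨m, hm⟩ := exists_nat_gt ((ε ^ N)⁻¹)
  have hεN : 0 < ε ^ N := pow_pos hε N
  have h2 := hc m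
  by_contra hcon
  have h3 : ∀ᶠ n in (hyperfilter ℕ : Filter ℕ), ¬ dist (s n) 0 < ε := Ultrafilter.eventually_not.2 hcon
  have h4 : cl (fun _ => ε ^ N) ≤ |cl s| ^ N := by
    rw [cl_abs, ← map_pow, cl_le]
    filter_upwards [h3] with n hn
    simp only [dist_zero_right, norm_eq_abs, not_lt] at hn
    simp only [Pi.pow_apply]
    gcongr
  have h5 : (1:HK) < (m : HK) * cl (fun _ => ε ^ N) := by
    rw [← map_natCast cl, ← map_mul, ← map_one cl, cl_lt]
    refine Filter.Eventually.of_forall fun n => ?_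
    simp only [Pi.one_apply, Pi.mul_apply, Pi.natCast_apply]
    rw [inv_lt_iff_one_lt_mul₀ hεN] at hm
    linarith
  have h6 : (m : HK) * cl (fun _ => ε ^ N) ≤ m * c := by
    have : (0:HK) ≤ m := Nat.cast_nonneg m
    gcongr
    exact (h4.trans hN.le)
  exact absurd (h5.trans_le (h6.trans h2)) (lt_irrefl _)

lemma bdd_mem {s : ℕ → ℝ} {r : ℝ} (h : Tendsto s (hyperfilter ℕ : Filter ℕ) (𝓝 r)) :
    cl s ∈ OO c hc0 hc := by
  obtain ⟨m, hm⟩ := exists_nat_gt |r|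
  refine OO_conv (cl s) (m : HK) ?_ (natCast_mem _ m)
  rw [cl_abs, ← map_natCast cl, cl_abs, cl_le]
  filter_upwards [h.abs.eventually (gt_mem_nhds hm)] with n hn
  simp only [Pi.natCast_apply, Nat.abs_cast]
  exact hn.le

lemma v_le_mul {s g : ℕ → ℝ} {C : ℝ}
    (h : ∀ᶠ n in (hyperfilter ℕ : Filter ℕ), |s n| ≤ C * |g n|) :
    (OO c hc0 hc).valuation (cl s) ≤ (OO c hc0 hc).valuation (cl g) := by
  have h1 : (OO c hc0 hc).valuation (cl s) ≤ (OO c hc0 hc).valuation (cl (fun _ => C) * cl g) := by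
    apply OO_conv.val_le
    rw [← map_mul, cl_abs, cl_abs, cl_le]
    filter_upwards [h] with n hn
    simp only [Pi.mul_apply, abs_mul]
    refine hn.trans ?_
    gcongr
    exact le_abs_self C
  refine h1.trans ?_
  rw [map_mul]
  have : (OO c hc0 hc).valuation (cl (fun _ => C)) ≤ 1 :=
    ((OO c hc0 hc).valuation_le_one_iff _).2 (bdd_mem tendsto_const_nhds)
  exact mul_le_of_le_one_left' this

/-- ring of functions analytic at zero -/
def AR (n : ℕ) : Subring ((Fin n → ℝ) → ℝ) where
  carrier := {h | AnalyticAt ℝ h 0}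
  mul_mem' := fun ha hb => AnalyticAt.mul ha hb
  one_mem' := analyticAt_const
  add_mem' := fun ha hb => AnalyticAt.add ha hb
  zero_mem' := analyticAt_const
  neg_mem' := fun ha => AnalyticAt.neg ha

/-- precomposition with a sequence -/
def preE {n : ℕ} (a : ℕ → (Fin n → ℝ)) : AR n →+* (ℕ → ℝ) where
  toFun h := fun k => h.1 (a k)
  map_one' := rfl
  map_mul' _ _ := rfl
  map_zero' := rfl
  map_add' _ _ := rfl

/-- evaluation in the hyperreals -/
noncomputable def evA {n : ℕ} (a : ℕ → (Fin n → ℝ)) : AR n →+* HK := cl.comp (preE a)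

/-- the field generated by values -/
noncomputable def kA {n : ℕ} (a : ℕ → (Fin n → ℝ)) : Subfield HK :=
  Subfield.closure ((evA a).range : Set HK)

lemma ev_mem_kA {n : ℕ} (a : ℕ → (Fin n → ℝ)) (h : AR n) : evA a h ∈ kA a :=
  Subfield.subset_closure ⟨h, rfl⟩

variable (hc0 hc) in
/-- good sequences -/
def Good {n : ℕ} (a : ℕ → (Fin n → ℝ)) : Prop :=
  Tendsto a (hyperfilter ℕ : Filter ℕ) (𝓝 0) ∧
    ∀ h : (Fin n → ℝ) → ℝ, AnalyticAt ℝ h 0 → cl (fun k => h (a k)) = 0 ∨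
      ¬ (OO c hc0 hc).valuation (cl (fun k => h (a k))) < 1

lemma ev_tendsto {n : ℕ} {a : ℕ → (Fin n → ℝ)} (ha : Tendsto a (hyperfilter ℕ : Filter ℕ) (𝓝 0))
    {h : (Fin n → ℝ) → ℝ} (hh : AnalyticAt ℝ h 0) :
    Tendsto (fun k => h (a k)) (hyperfilter ℕ : Filter ℕ) (𝓝 (h 0)) :=
  hh.continuousAt.tendsto.comp ha

lemma Good.kA_le {n : ℕ} {a : ℕ → (Fin n → ℝ)} (ha : Good hc0 hc a) :
    ∀ x ∈ kA a, x ∈ OO c hc0 hc := by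
  intro x hx
  rw [kA, Subfield.mem_closure_iff, Subring.closure_eq] at hx
  obtain ⟨y, ⟨h1, rfl⟩, z, ⟨h2, rfl⟩, rfl⟩ := hx
  have e1 : evA a h1 ∈ OO c hc0 hc := bdd_mem (ev_tendsto ha.1 h1.2)
  rcases ha.2 h2.1 h2.2 with h | h
  · have : evA a h2 = 0 := h
    rw [this, div_zero]; exact zero_mem _
  · have h : ¬ (OO c hc0 hc).valuation (evA a h2) < 1 := h
    rw [← ValuationSubring.valuation_le_one_iff] at e1 ⊢
    rw [map_div₀]
    exact div_le_one_of_le₀ (e1.trans (not_lt.1 h)) zero_le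

lemma exists_dir {n : ℕ} {g : (Fin n → ℝ) → ℝ} (hg : AnalyticAt ℝ g 0)
    (h0 : ¬ ∀ᶠ y in 𝓝 0, g y = 0) : ∃ p : Fin n → ℝ, ¬ ∀ᶠ s : ℝ in 𝓝 0, g (s • p) = 0 := by
  by_contra hcon
  push Not at hcon
  apply h0
  obtain ⟨r, hr, hb⟩ := Metric.eventually_nhds_iff.1 hg.eventually_analyticAt
  refine Metric.eventually_nhds_iff.2 ⟨r, hr, fun y hy => ?_⟩
  have hA : AnalyticOnNhd ℝ (fun s : ℝ => g (s • y)) (Set.Icc 0 1) := by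
    intro s hs
    have : AnalyticAt ℝ g (s • y) := by
      apply hb
      rw [dist_zero_right] at hy ⊢
      rw [norm_smul, norm_eq_abs, abs_of_nonneg hs.1]
      have := norm_nonneg y
      nlinarith [hs.2]
    exact AnalyticAt.fun_comp (f := fun s : ℝ => s • y) this (analyticAt_id.fun_smul analyticAt_const)
  have := hA.eqOn_zero_of_preconnected_of_eventuallyEq_zero isPreconnected_Icc
    (z₀ := 0) (by simp) (hcon y) (x := 1) (by simp)
  simpa using this

/-- linear change of variables -/
noncomputable def Lmap {n : ℕ} (j : Fin (n+1)) (p : Fin (n+1) → ℝ) :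
    ((Fin n → ℝ) × ℝ) →ₗ[ℝ] (Fin (n+1) → ℝ) where
  toFun z := fun i => (j.insertNth (0:ℝ) z.1 : Fin (n+1) → ℝ) i + z.2 * p i
  map_add' x y := by
    funext i
    refine Fin.succAboveCases j ?_ (fun i => ?_) i <;> simp <;> ring
  map_smul' s x := by
    funext i
    refine Fin.succAboveCases j ?_ (fun i => ?_) i <;> simp <;> ring

lemma Lmap_same {n : ℕ} (j : Fin (n+1)) (p : Fin (n+1) → ℝ) (z) : Lmap j p z j = z.2 * p j := by
  simp [Lmap]

lemma Lmap_succ {n : ℕ} (j : Fin (n+1)) (p : Fin (n+1) → ℝ) (z) (i : Fin n) :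
    Lmap j p z (j.succAbove i) = z.1 i + z.2 * p (j.succAbove i) := by
  simp [Lmap]

lemma Lmap_an {n : ℕ} (j : Fin (n+1)) (p : Fin (n+1) → ℝ) :
    AnalyticAt ℝ (Lmap j p) 0 :=
  (Lmap j p).toContinuousLinearMap.analyticAt 0

end LemA
end Loj


namespace Loj

section LemA2
open scoped Topology
open Polynomial

variable {c : HK} {hc0 : 0 < c} {hc : ∀ n : ℕ, (n : HK) * c ≤ 1}

lemma v_norm {n : ℕ} {y : ℕ → (Fin n → ℝ)}
    (h : ∀ i, (OO c hc0 hc).valuation (cl (fun k => y k i)) < 1) :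
    (OO c hc0 hc).valuation (cl (fun k => ‖y k‖)) < 1 := by
  have h1 : (OO c hc0 hc).valuation (∑ i, |cl (fun k => y k i)|) < 1 := by
    refine Valuation.map_sum_lt _ one_ne_zero fun i _ => ?_
    have := OO_conv.val_le (O := OO c hc0 hc) (x := |cl (fun k => y k i)|) (y := cl (fun k => y k i))
      (by rw [abs_abs])
    exact this.trans_lt (h i)
  refine lt_of_le_of_lt (OO_conv.val_le ?_) h1
  have e : ∑ i, |cl (fun k => y k i)| = cl (fun k => ∑ i, |y k i|) := by
    simp only [cl_abs]
    rw [← map_sum]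
    congr 1
    funext k
    simp
  rw [e, cl_abs, cl_abs, cl_le]
  refine Filter.Eventually.of_forall fun k => ?_
  simp only [abs_norm]
  refine le_trans ?_ (le_abs_self _)
  exact pi_norm_le_iff_of_nonneg (Finset.sum_nonneg fun _ _ => abs_nonneg _) |>.2 fun i =>
    Finset.single_le_sum (f := fun i => |y k i|) (fun _ _ => abs_nonneg _) (Finset.mem_univ i)

lemma inf_tendsto_vec {n : ℕ} {x a : ℕ → (Fin n → ℝ)}
    (hx : Tendsto x (hyperfilter ℕ : Filter ℕ) (𝓝 0))
    (h : ∀ i, (OO c hc0 hc).valuation (cl (fun k => x k i - a k i)) < 1) :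
    Tendsto a (hyperfilter ℕ : Filter ℕ) (𝓝 0) := by
  rw [tendsto_pi_nhds] at hx ⊢
  intro i
  have := (hx i).sub (inf_tendsto (h i))
  simpa using this

lemma lemA_step {n : ℕ}
    (ih : ∀ x : ℕ → (Fin n → ℝ), Tendsto x (hyperfilter ℕ : Filter ℕ) (𝓝 0) →
      ∃ a, Good hc0 hc a ∧ ∀ i, (OO c hc0 hc).valuation (cl (fun k => x k i - a k i)) < 1)
    (x : ℕ → (Fin (n+1) → ℝ)) (hx : Tendsto x (hyperfilter ℕ : Filter ℕ) (𝓝 0))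
    (g : (Fin (n+1) → ℝ) → ℝ) (hg : AnalyticAt ℝ g 0) (hg0 : cl (fun k => g (x k)) ≠ 0)
    (hgv : (OO c hc0 hc).valuation (cl (fun k => g (x k))) < 1) :
    ∃ a, Good hc0 hc a ∧ ∀ i, (OO c hc0 hc).valuation (cl (fun k => x k i - a k i)) < 1 := by
  obtain ⟨p, hp⟩ := exists_dir hg (fun h => hg0 (by
    rw [← map_zero cl, cl_eq]
    exact hx.eventually h))
  have hgz : g 0 = 0 := tendsto_nhds_unique (ev_tendsto hx hg) (inf_tendsto hgv)
  have hp0 : p ≠ 0 := by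
    rintro rfl
    apply hp
    simp [hgz]
  obtain ⟨j, hj⟩ : ∃ j, p j ≠ 0 := by
    by_contra h
    push Not at h
    exact hp0 (funext h)
  have hL := Lmap_an j p
  have hL0 : Lmap j p 0 = 0 := map_zero _
  have hLc : Tendsto (Lmap j p) (𝓝 0) (𝓝 0) := by
    have := hL.continuousAt.tendsto
    rwa [hL0] at this
  have hcompL : ∀ h : (Fin (n+1) → ℝ) → ℝ, AnalyticAt ℝ h 0 → AnalyticAt ℝ (fun z => h (Lmap j p z)) 0 :=
    fun h hh => AnalyticAt.fun_comp (f := fun z => Lmap j p z) (by rw [hL0]; exact hh) hL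
  obtain ⟨d, lam, hlam, ⟨C, hC⟩, hdiv⟩ := weier (fun z => g (Lmap j p z)) (hcompL g hg) (by
    intro h
    apply hp
    filter_upwards [h] with t ht
    rw [← ht]
    congr 1
    funext i
    refine Fin.succAboveCases j ?_ (fun i => ?_) i
    · rw [Lmap_same]; simp
    · rw [Lmap_succ]; simp)
  let t : ℕ → ℝ := fun k => x k j / p j
  let x' : ℕ → (Fin n → ℝ) := fun k i => x k (j.succAbove i) - t k * p (j.succAbove i)
  have hLx : ∀ k, Lmap j p (x' k, t k) = x k := by
    intro k
    funext i
    refine Fin.succAboveCases j ?_ (fun i => ?_) i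
    · rw [Lmap_same]; simp [t]; field_simp
    · rw [Lmap_succ]; simp [x']
  have hxi := tendsto_pi_nhds.1 hx
  have ht : Tendsto t (hyperfilter ℕ : Filter ℕ) (𝓝 0) := by
    simpa using (hxi j).div_const (p j)
  have hx' : Tendsto x' (hyperfilter ℕ : Filter ℕ) (𝓝 0) := by
    rw [tendsto_pi_nhds]
    intro i
    simpa using (hxi (j.succAbove i)).sub (ht.mul_const (p (j.succAbove i)))
  obtain ⟨a', ha', hxa⟩ := ih x' hx'
  have hk := ha'.kA_le
  have hlj : ∀ i, AnalyticAt ℝ (fun y => lam y i) 0 := fun i => analyticAt_pi_iff.1 hlam i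
  let lc : Fin d → kA a' := fun i => ⟨_, ev_mem_kA a' ⟨fun y => lam y i, hlj i⟩⟩
  let Q : (kA a')[X] := X ^ d + ∑ i : Fin d, Polynomial.C (lc i) * X ^ (i : ℕ)
  have hQ : Q ≠ 0 := by
    apply Monic.ne_zero
    apply monic_X_pow_add
    refine (degree_sum_fin_lt _)
  have hQe : ∀ s : ℕ → ℝ, aeval (cl s) Q = cl (fun k => s k ^ d + ∑ i, lam (a' k) i * s k ^ (i : ℕ)) := by
    intro s
    have e : (fun k => s k ^ d + ∑ i, lam (a' k) i * s k ^ (i : ℕ)) =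
      s ^ d + ∑ i, (fun k => lam (a' k) i) * s ^ (i : ℕ) := by
      funext k; simp
    rw [e]
    simp only [Q, map_add, map_sum, map_mul, map_pow, aeval_X, aeval_C]
    rfl
  have htO : cl t ∈ OO c hc0 hc := bdd_mem ht
  have hQt : (OO c hc0 hc).valuation (aeval (cl t) Q) < 1 := by
    have e : aeval (cl t) Q = cl (fun k => t k ^ d + ∑ i, lam (x' k) i * t k ^ (i : ℕ)) -
        ∑ i, cl (fun k => lam (x' k) i - lam (a' k) i) * cl t ^ (i : ℕ) := by
      rw [hQe]
      simp only [← map_pow, ← map_mul]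
      rw [← map_sum, ← map_sub]
      congr 1
      funext k
      simp [sub_mul]
      ring
    rw [e]
    refine Valuation.map_sub_lt _ ?_ (Valuation.map_sum_lt _ one_ne_zero fun i _ => ?_)
    · refine lt_of_le_of_lt (v_le_mul (C := C) (g := fun k => g (x k)) ?_) hgv
      filter_upwards [(hx'.prodMk_nhds ht).eventually hC] with k hk
      simpa [hLx] using hk
    · rw [map_mul, map_pow]
      have h1 : (OO c hc0 hc).valuation (cl t) ^ (i : ℕ) ≤ 1 :=
        pow_le_one' (((OO c hc0 hc).valuation_le_one_iff _).2 htO) _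
      refine lt_of_le_of_lt (mul_le_of_le_one_right' h1) ?_
      obtain ⟨K, U, hU, hK⟩ := ((hlj i).contDiffAt (n := 1)).exists_lipschitzOnWith
      refine lt_of_le_of_lt (v_le_mul (C := K) (g := fun k => ‖fun i => x' k i - a' k i‖) ?_) (v_norm hxa)
      filter_upwards [hx'.eventually hU, ha'.1.eventually hU] with k h1 h2
      have := hK.dist_le_mul _ h1 _ h2
      rw [Real.dist_eq, dist_eq_norm] at this
      rw [abs_norm]
      exact this
  obtain ⟨w, hw0, hw⟩ := hensel OO_conv HK_ivp hk htO hQ hQt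
  obtain ⟨om, rfl⟩ := cl_surj w
  have hwt : (OO c hc0 hc).valuation (cl (fun k => t k - om k)) < 1 := by
    rw [← map_sub] at hw; exact hw
  have hom : Tendsto om (hyperfilter ℕ : Filter ℕ) (𝓝 0) := by
    have := ht.sub (inf_tendsto hwt)
    simpa using this
  have hao : Tendsto (fun k => (a' k, om k)) (hyperfilter ℕ : Filter ℕ) (𝓝 0) := ha'.1.prodMk_nhds hom
  refine ⟨fun k => Lmap j p (a' k, om k), ⟨hLc.comp hao, ?_⟩, ?_⟩
  · intro h hh
    obtain ⟨r, hr, hre⟩ := hdiv _ (hcompL h hh)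
    have hrj : ∀ i, AnalyticAt ℝ (fun y => r y i) 0 := fun i => analyticAt_pi_iff.1 hr i
    have hz : cl (fun k => h (Lmap j p (a' k, om k))) =
        ∑ i, evA a' ⟨fun y => r y i, hrj i⟩ * cl om ^ (i : ℕ) := by
      have : ∑ i, evA a' ⟨fun y => r y i, hrj i⟩ * cl om ^ (i : ℕ) =
          cl (fun k => ∑ i, r (a' k) i * om k ^ (i : ℕ)) := by
        have e : (fun k => ∑ i, r (a' k) i * om k ^ (i : ℕ)) =
          ∑ i, (fun k => r (a' k) i) * om ^ (i : ℕ) := by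
          funext k; simp
        rw [e, map_sum]
        simp only [map_mul, map_pow]
        rfl
      rw [this, cl_eq]
      rw [hQe, ← map_zero cl, cl_eq] at hw0
      filter_upwards [hw0, hao.eventually hre] with k h1 h2
      exact h2 h1
    have halg : cl (fun k => h (Lmap j p (a' k, om k))) ∈ algebraicClosure (kA a') HK := by
      rw [hz]
      refine sum_mem fun i _ => mul_mem ?_ (pow_mem ?_ _)
      · exact (algebraicClosure (kA a') HK).algebraMap_mem ⟨_, ev_mem_kA a' ⟨fun y => r y i, hrj i⟩⟩
      · rw [mem_algebraicClosure_iff]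
        exact ⟨Q, hQ, hw0⟩
    by_contra hcon
    push Not at hcon
    obtain ⟨h1, h2⟩ := hcon
    have h3 := val_algebraic hk (mem_algebraicClosure_iff.1 (inv_mem halg))
    rw [← ValuationSubring.valuation_le_one_iff, map_inv₀] at h3
    have h4 : 0 < (OO c hc0 hc).valuation (cl (fun k => h (Lmap j p (a' k, om k)))) := by
      simpa [zero_lt_iff] using h1
    have := (inv_le_one₀ h4).1 h3
    exact absurd h2 (not_lt.2 this)
  · intro i
    have hmul : ∀ i, (OO c hc0 hc).valuation (cl (fun k => (t k - om k) * p i)) < 1 := by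
      intro i
      refine lt_of_le_of_lt (v_le_mul (C := |p i|) (g := fun k => t k - om k) ?_) hwt
      refine Filter.Eventually.of_forall fun k => ?_
      rw [abs_mul, mul_comm]
    refine Fin.succAboveCases j ?_ (fun i => ?_) i
    · have : (fun k => x k j - Lmap j p (a' k, om k) j) = fun k => (t k - om k) * p j := by
        funext k
        rw [← hLx, Lmap_same, Lmap_same]; ring
      rw [this]; exact hmul _
    · have : (fun k => x k (j.succAbove i) - Lmap j p (a' k, om k) (j.succAbove i)) =
          (fun k => x' k i - a' k i) + fun k => (t k - om k) * p (j.succAbove i) := by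
        funext k
        rw [← hLx, Lmap_succ, Lmap_succ]; simp only [Pi.add_apply]; ring
      rw [this, map_add]
      exact Valuation.map_add_lt _ (hxa i) (hmul _)

theorem lemA : ∀ (n : ℕ) (x : ℕ → (Fin n → ℝ)), Tendsto x (hyperfilter ℕ : Filter ℕ) (𝓝 0) →
      ∃ a, Good hc0 hc a ∧ ∀ i, (OO c hc0 hc).valuation (cl (fun k => x k i - a k i)) < 1
  | 0, x, hx => by
    refine ⟨x, ⟨hx, fun h hh => ?_⟩, fun i => i.elim0⟩
    by_contra hcon
    push Not at hcon
    obtain ⟨h1, h2⟩ := hcon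
    apply h1
    have h3 := tendsto_nhds_unique (ev_tendsto hx hh) (inf_tendsto h2)
    rw [← map_zero cl, cl_eq]
    refine Filter.Eventually.of_forall fun k => ?_
    rw [Subsingleton.elim (x k) 0, h3]; rfl
  | n+1, x, hx => by
    by_cases hgood : Good hc0 hc x
    · exact ⟨x, hgood, fun i => by
        have : (fun k => x k i - x k i) = 0 := by funext k; simp
        rw [this]; simp⟩
    · have : ∃ g : (Fin (n+1) → ℝ) → ℝ, AnalyticAt ℝ g 0 ∧ cl (fun k => g (x k)) ≠ 0 ∧
          (OO c hc0 hc).valuation (cl (fun k => g (x k))) < 1 := by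
        by_contra hcon
        push Not at hcon
        refine hgood ⟨hx, fun h hh => ?_⟩
        by_cases h0 : cl (fun k => h (x k)) = 0
        · exact Or.inl h0
        · exact Or.inr (not_lt.2 (hcon h hh h0))
      obtain ⟨g, h1, h2, h3⟩ := this
      exact lemA_step (lemA n) x hx g h1 h2 h3

end LemA2
end Loj


namespace Loj

section Taylor
open scoped Topology
open MvPolynomial

variable {n : ℕ}

/-- evaluation at a real point -/
def pt (a : Fin n → ℝ) : AR n →+* ℝ where
  toFun h := h.1 a
  map_one' := rfl
  map_mul' _ _ := rfl
  map_zero' := rfl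
  map_add' _ _ := rfl

/-- value of a polynomial with analytic coefficients -/
noncomputable def pv (P : MvPolynomial (Fin n) (AR n)) (a y : Fin n → ℝ) : ℝ := eval y (P.map (pt a))

lemma pv_C (h : AR n) (a y : Fin n → ℝ) : pv (C h) a y = h.1 a := by
  simp [pv, pt]
lemma pv_add (P Q : MvPolynomial (Fin n) (AR n)) (a y : Fin n → ℝ) :
    pv (P + Q) a y = pv P a y + pv Q a y := by simp [pv]
lemma pv_mul (P Q : MvPolynomial (Fin n) (AR n)) (a y : Fin n → ℝ) :
    pv (P * Q) a y = pv P a y * pv Q a y := by simp [pv]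
lemma pv_X (j : Fin n) (a y : Fin n → ℝ) : pv (X j) a y = y j := by simp [pv]
lemma pv_zero (a y : Fin n → ℝ) : pv 0 a y = 0 := by simp [pv]
lemma pv_one (a y : Fin n → ℝ) : pv 1 a y = 1 := by simp [pv]
lemma pv_sum {ι : Type*} (s : Finset ι) (P : ι → MvPolynomial (Fin n) (AR n)) (a y : Fin n → ℝ) :
    pv (∑ i ∈ s, P i) a y = ∑ i ∈ s, pv (P i) a y := by simp [pv]

lemma pv_an (P : MvPolynomial (Fin n) (AR n)) :
    AnalyticAt ℝ (fun z : (Fin n → ℝ) × (Fin n → ℝ) => pv P z.1 z.2) 0 := by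
  induction P using MvPolynomial.induction_on with
  | C h =>
    simp only [pv_C]
    have : AnalyticAt ℝ h.1 (0 : (Fin n → ℝ) × (Fin n → ℝ)).1 := h.2
    exact AnalyticAt.fun_comp (f := fun z : (Fin n → ℝ) × (Fin n → ℝ) => z.1) this analyticAt_fst
  | add P Q hP hQ => simp only [pv_add]; exact hP.fun_add hQ
  | mul_X P j hP =>
    simp only [pv_mul, pv_X]
    refine hP.fun_mul ?_
    exact AnalyticAt.fun_comp (g := fun y : Fin n → ℝ => y j)
      (f := fun z : (Fin n → ℝ) × (Fin n → ℝ) => z.2)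
      ((ContinuousLinearMap.proj (R := ℝ) (φ := fun _ : Fin n => ℝ) j).analyticAt _) analyticAt_snd

lemma pv_deriv (P : MvPolynomial (Fin n) (AR n)) (a y : Fin n → ℝ) (j : Fin n) (s : ℝ) :
    HasDerivAt (fun s : ℝ => pv P a (y + s • Pi.single j 1)) (pv (pderiv j P) a (y + s • Pi.single j 1)) s := by
  induction P using MvPolynomial.induction_on with
  | C h => simp only [pv_C, pderiv_C, pv_zero]; exact hasDerivAt_const _ _
  | add P Q hP hQ => simp only [pv_add, map_add]; exact hP.add hQ
  | mul_X P i hP =>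
    simp only [pv_mul, pderiv_mul, pv_X, pv_add]
    refine hP.mul ?_
    rw [pderiv_X]
    by_cases h : i = j
    · subst h
      simp only [Pi.single_eq_same, pv_one, Pi.add_apply, Pi.smul_apply, smul_eq_mul, mul_one]
      exact (hasDerivAt_id s).const_add _
    · rw [Pi.single_eq_of_ne' (Ne.symm h) , pv_zero]
      have : ∀ s : ℝ, (y + s • (Pi.single j (1:ℝ) : Fin n → ℝ)) i = y i := by
        intro s; simp [Pi.single_eq_of_ne h]
      simp only [this]
      exact hasDerivAt_const _ _

lemma pv_int (P : MvPolynomial (Fin n) (AR n)) : ∃ J : MvPolynomial (Fin n) (AR n),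
    ∀ (a y : Fin n → ℝ) (s : ℝ), HasDerivAt (fun s : ℝ => s * pv J a (s • y)) (pv P a (s • y)) s := by
  induction P using MvPolynomial.induction_on' with
  | monomial β h =>
    refine ⟨monomial β (h * ⟨fun _ => ((∑ i, β i : ℕ) + 1 : ℝ)⁻¹, analyticAt_const⟩), fun a y s => ?_⟩
    have e : ∀ (h : AR n) (s : ℝ), pv (monomial β h) a (s • y) =
        h.1 a * (s ^ (∑ i, β i) * ∏ i, y i ^ β i) := by
      intro h s
      simp only [pv, map_monomial, eval_monomial, Finsupp.prod_fintype, pow_zero, implies_true]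
      congr 1
      simp only [Pi.smul_apply, smul_eq_mul, mul_pow, Finset.prod_mul_distrib]
      rw [Finset.prod_pow_eq_pow_sum]
    simp only [e]
    set N := ∑ i, β i
    have h1 := ((hasDerivAt_id s).fun_pow (N+1)).const_mul (h.1 a * ((N:ℝ)+1)⁻¹ * ∏ i, y i ^ β i)
    have h2 : (N:ℝ) + 1 ≠ 0 := by positivity
    refine (h1.congr_deriv ?_).congr_of_eventuallyEq (Filter.Eventually.of_forall fun s => ?_)
    · simp; field_simp
    · simp only [id]
      change s * (h.1 a * ((N:ℝ)+1)⁻¹ * _) = _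
      ring
  | add P Q hP hQ =>
    obtain ⟨J, hJ⟩ := hP
    obtain ⟨J', hJ'⟩ := hQ
    refine ⟨J + J', fun a y s => ?_⟩
    simp only [pv_add, mul_add]
    exact (hJ a y s).add (hJ' a y s)

/-- partial derivative -/
noncomputable def pd (f : (Fin n → ℝ) → ℝ) (j : Fin n) : (Fin n → ℝ) → ℝ :=
  fun x => fderiv ℝ f x (Pi.single j 1)

lemma pd_an {f : (Fin n → ℝ) → ℝ} (hf : AnalyticAt ℝ f 0) (j : Fin n) : AnalyticAt ℝ (pd f j) 0 := by
  exact AnalyticAt.fun_comp (g := fun L : (Fin n → ℝ) →L[ℝ] ℝ => L (Pi.single j 1)) (f := fderiv ℝ f)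
    ((ContinuousLinearMap.apply ℝ ℝ (Pi.single j 1 : Fin n → ℝ)).analyticAt _) hf.fderiv

lemma fderiv_eq_pd (f : (Fin n → ℝ) → ℝ) (x y : Fin n → ℝ) : fderiv ℝ f x y = ∑ j, y j * pd f j x := by
  conv_lhs => rw [pi_eq_sum_univ' y]
  rw [map_sum]
  refine Finset.sum_congr rfl fun j _ => ?_
  rw [map_smul]; rfl

lemma taylor : ∀ (N : ℕ) (f : (Fin n → ℝ) → ℝ), AnalyticAt ℝ f 0 →
    ∃ (P : MvPolynomial (Fin n) (AR n)) (K : ℝ), 0 ≤ K ∧ ∃ δ > 0, ∀ a y : Fin n → ℝ, ‖a‖ < δ → ‖y‖ < δ →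
      |f (a + y) - pv P a y| ≤ K * ‖y‖ ^ N
  | 0, f, hf => by
    have h1 : ∀ᶠ x in 𝓝 0, |f x| < |f 0| + 1 :=
      hf.continuousAt.abs.eventually_lt continuousAt_const (lt_add_one _)
    obtain ⟨δ, hδ, hb⟩ := Metric.eventually_nhds_iff.1 h1
    refine ⟨0, |f 0| + 1, by positivity, δ / 2, by positivity, fun a y ha hy => ?_⟩
    rw [pv_zero, sub_zero, pow_zero, mul_one]
    apply (hb _).le
    rw [dist_zero_right]
    linarith [norm_add_le a y]
  | N+1, f, hf => by
    choose P K hK δ hδ hb using fun j => taylor N (pd f j) (pd_an hf j)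
    choose J hJ using fun j => pv_int (P j)
    obtain ⟨δ0, hδ0, hb0⟩ := Metric.eventually_nhds_iff.1 hf.eventually_analyticAt
    have hmin : ∃ ε > 0, ε ≤ δ0 / 2 ∧ ∀ j, ε ≤ δ j := by
      have h0 : 0 < δ0 / 2 := by positivity
      have h1 : ∀ᶠ ε in 𝓝[>] (0:ℝ), ε ≤ δ0 / 2 ∧ ∀ j, ε ≤ δ j := by
        refine Filter.Eventually.filter_mono nhdsWithin_le_nhds ?_
        exact (eventually_le_nhds h0).and (eventually_all.2 fun j => eventually_le_nhds (hδ j))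
      obtain ⟨ε, h2, h3⟩ := (h1.and self_mem_nhdsWithin).exists
      exact ⟨ε, h3, h2⟩
    obtain ⟨ε, hε, hε0, hεj⟩ := hmin
    refine ⟨C ⟨f, hf⟩ + ∑ j, X j * J j, ∑ j, K j, Finset.sum_nonneg fun j _ => hK j, ε, hε,
      fun a y ha hy => ?_⟩
    have hder : ∀ s ∈ Set.Icc (0:ℝ) 1, HasDerivAt (fun s : ℝ => f (a + s • y) -
        pv (C ⟨f, hf⟩ + ∑ j, X j * J j) a (s • y))
        (∑ j, y j * (pd f j (a + s • y) - pv (P j) a (s • y))) s := by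
      intro s hs
      have hsy : ‖s • y‖ ≤ ‖y‖ := by
        rw [norm_smul, norm_eq_abs, abs_of_nonneg hs.1]
        exact mul_le_of_le_one_left (norm_nonneg _) hs.2
      have hfa : HasFDerivAt f (fderiv ℝ f (a + s • y)) (a + s • y) := by
        refine (hb0 ?_).differentiableAt.hasFDerivAt
        rw [dist_zero_right]
        linarith [norm_add_le a (s • y)]
      have h1 : HasDerivAt (fun s : ℝ => a + s • y) y s := by
        simpa using ((hasDerivAt_id s).smul_const y).const_add a
      have h2 := hfa.comp_hasDerivAt s h1
      have h3 : HasDerivAt (fun s : ℝ => pv (C ⟨f, hf⟩ + ∑ j, X j * J j) a (s • y))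
          (∑ j, y j * pv (P j) a (s • y)) s := by
        simp only [pv_add, pv_C, pv_sum, pv_mul, pv_X]
        refine HasDerivAt.const_add _ ?_
        refine HasDerivAt.fun_sum fun j _ => ?_
        refine ((hJ j a y s).const_mul (y j)).congr_of_eventuallyEq (Filter.Eventually.of_forall fun s => ?_)
        simp only [Pi.smul_apply, smul_eq_mul]; ring
      refine (h2.sub h3).congr_deriv ?_
      rw [fderiv_eq_pd, ← Finset.sum_sub_distrib]
      refine Finset.sum_congr rfl fun j _ => by ring
    have hbd : ∀ s ∈ Set.Ico (0:ℝ) 1,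
        ‖∑ j, y j * (pd f j (a + s • y) - pv (P j) a (s • y))‖ ≤ (∑ j, K j) * ‖y‖ ^ (N+1) := by
      intro s hs
      have hsy : ‖s • y‖ ≤ ‖y‖ := by
        rw [norm_smul, norm_eq_abs, abs_of_nonneg hs.1]
        exact mul_le_of_le_one_left (norm_nonneg _) hs.2.le
      rw [Finset.sum_mul]
      refine (norm_sum_le _ _).trans (Finset.sum_le_sum fun j _ => ?_)
      rw [norm_mul, pow_succ, ← mul_assoc, mul_comm]
      have h1 := hb j a (s • y) (ha.trans_le (hεj j)) ((hsy.trans_lt hy).trans_le (hεj j))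
      have h2 : ‖y j‖ ≤ ‖y‖ := norm_le_pi_norm y j
      refine mul_le_mul (h1.trans ?_) h2 (norm_nonneg _) (mul_nonneg (hK j) (by positivity))
      have := hK j
      gcongr
    have := norm_image_sub_le_of_norm_deriv_le_segment_01' (fun s hs => (hder s hs).hasDerivWithinAt) hbd
    have h0 : pv (C ⟨f, hf⟩ + ∑ j, X j * J j) a 0 = f a := by
      simp only [pv_add, pv_C, pv_sum, pv_mul, pv_X]
      simp
    simpa [h0] using this

lemma taylor2 {N : ℕ} (hN : 1 ≤ N) {f : (Fin n → ℝ) → ℝ} (hf : AnalyticAt ℝ f 0) :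
    ∃ (P : MvPolynomial (Fin n) (AR n)) (K : ℝ), ∃ δ > 0, ∀ a y : Fin n → ℝ, ‖a‖ < δ → ‖y‖ < δ →
      ∀ s, 0 < s → s < δ → ‖y‖ ^ N ≤ s → |f (a + y) - pv P a y| ≤ K * s ^ 2 ∧
      ∀ j, |pd f j (a + y) - pv (pderiv j P) a y| ≤ K * s := by
  obtain ⟨P, K, hK, δ, hδ, hb⟩ := taylor (N * 2) f hf
  have hψ : ∀ j, AnalyticAt ℝ (fun z : (Fin n → ℝ) × (Fin n → ℝ) =>
      pd f j (z.1 + z.2) - pv (pderiv j P) z.1 z.2) 0 := by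
    intro j
    refine AnalyticAt.fun_sub ?_ (pv_an _)
    refine AnalyticAt.fun_comp (g := pd f j) (f := fun z : (Fin n → ℝ) × (Fin n → ℝ) => z.1 + z.2) ?_
      (analyticAt_fst.fun_add analyticAt_snd)
    simpa using pd_an hf j
  choose M U hU hM using fun j => ((hψ j).contDiffAt (n := 1)).exists_lipschitzOnWith
  have hmin : ∃ ε > 0, ε ≤ δ ∧ ε ≤ 1 ∧ (∀ x : Fin n → ℝ, ‖x‖ < ε → AnalyticAt ℝ f x) ∧
      ∀ j, ∀ z : (Fin n → ℝ) × (Fin n → ℝ), ‖z‖ < ε → z ∈ U j := by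
    have h2 : ∀ᶠ z in 𝓝 (0 : (Fin n → ℝ) × (Fin n → ℝ)), ∀ j, z ∈ U j := eventually_all.2 hU
    obtain ⟨ε1, h1, hb1⟩ := Metric.eventually_nhds_iff.1 hf.eventually_analyticAt
    obtain ⟨ε2, h2, hb2⟩ := Metric.eventually_nhds_iff.1 h2
    simp only [dist_zero_right] at hb1 hb2
    refine ⟨min (min δ 1) (min ε1 ε2), by positivity, ?_, ?_, ?_, ?_⟩
    · exact (min_le_left _ _).trans (min_le_left _ _)
    · exact (min_le_left _ _).trans (min_le_right _ _)
    · exact fun x hx => hb1 (hx.trans_le ((min_le_right _ _).trans (min_le_left _ _)))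
    · exact fun j z hz => hb2 (hz.trans_le ((min_le_right _ _).trans (min_le_right _ _))) j
  obtain ⟨ε, hε, hεδ, hε1, hfa, hz⟩ := hmin
  refine ⟨P, K + K * 4 ^ N + ∑ j, (M j : ℝ), ε / 3, by positivity, fun a y ha hy s hs0 hs hys => ?_⟩
  have hMn : 0 ≤ ∑ j, (M j : ℝ) := Finset.sum_nonneg fun j _ => (M j).2
  have hs1 : s ≤ 1 := by linarith
  have hφ : |f (a + y) - pv P a y| ≤ K * s ^ 2 := by
    refine (hb a y (by linarith) (by linarith)).trans ?_
    rw [pow_mul]; gcongr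
  have hs2 : 0 < s ^ 2 := by positivity
  constructor
  · refine hφ.trans ?_
    have : 0 ≤ K * 4 ^ N := by positivity
    nlinarith
  intro j
  set e : Fin n → ℝ := Pi.single j 1 with he
  have hen : ‖e‖ = 1 := by rw [he, Pi.norm_single, norm_one]
  have hφ2 : |f (a + (y + s • e)) - pv P a (y + s • e)| ≤ K * 4 ^ N * s ^ 2 := by
    have h1 : ‖y + s • e‖ ≤ ‖y‖ + s := by
      refine (norm_add_le _ _).trans ?_
      rw [norm_smul, hen, norm_eq_abs, abs_of_pos hs0, mul_one]
    refine (hb a _ (by linarith) (by linarith)).trans ?_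
    rw [mul_assoc]
    refine mul_le_mul_of_nonneg_left ?_ hK
    have h2 : ‖y + s • e‖ ≤ 2 * max ‖y‖ s := by
      linarith [le_max_left ‖y‖ s, le_max_right ‖y‖ s]
    have h3 : max ‖y‖ s ^ N ≤ s := by
      rcases max_choice ‖y‖ s with h | h <;> rw [h]
      · exact hys
      · exact pow_le_of_le_one hs0.le hs1 (by omega)
    have h4 : 0 ≤ max ‖y‖ s := le_trans hs0.le (le_max_right _ _)
    calc ‖y + s • e‖ ^ (N * 2) ≤ (2 * max ‖y‖ s) ^ (N * 2) := by gcongr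
      _ = 4 ^ N * (max ‖y‖ s ^ N) ^ 2 := by
        rw [mul_pow, pow_mul, pow_mul, ← pow_mul, mul_comm N 2, pow_mul]; norm_num
      _ ≤ 4 ^ N * s ^ 2 := by gcongr
  set D := pd f j (a + y) - pv (pderiv j P) a y with hD
  have hder : ∀ u ∈ Set.Icc (0:ℝ) s, HasDerivAt (fun u : ℝ => f (a + (y + u • e)) - pv P a (y + u • e) - u * D)
      (pd f j (a + (y + u • e)) - pv (pderiv j P) a (y + u • e) - D) u := by
    intro u hu
    have h1 : ‖u • e‖ ≤ s := by
      rw [norm_smul, hen, norm_eq_abs, abs_of_nonneg hu.1, mul_one]; exact hu.2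
    have hfa' : HasFDerivAt f (fderiv ℝ f (a + (y + u • e))) (a + (y + u • e)) := by
      refine (hfa _ ?_).differentiableAt.hasFDerivAt
      linarith [norm_add_le a (y + u • e), norm_add_le y (u • e)]
    have h2 : HasDerivAt (fun u : ℝ => a + (y + u • e)) e u := by
      simpa using (((hasDerivAt_id u).smul_const e).const_add y).const_add a
    have h3 := hfa'.comp_hasDerivAt u h2
    have h4 : HasDerivAt (fun u : ℝ => u * D) D u := by simpa using (hasDerivAt_id u).mul_const D
    exact (h3.sub (pv_deriv P a y j u)).sub h4
  have hbd : ∀ u ∈ Set.Ico (0:ℝ) s,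
      ‖pd f j (a + (y + u • e)) - pv (pderiv j P) a (y + u • e) - D‖ ≤ M j * s := by
    intro u hu
    have h1 : ‖u • e‖ ≤ s := by
      rw [norm_smul, hen, norm_eq_abs, abs_of_nonneg hu.1, mul_one]; exact hu.2.le
    have hz1 : (a, y + u • e) ∈ U j := by
      apply hz
      rw [Prod.norm_mk, max_lt_iff]
      exact ⟨by linarith, by linarith [norm_add_le y (u • e)]⟩
    have hz2 : (a, y) ∈ U j := by
      apply hz
      rw [Prod.norm_mk, max_lt_iff]
      exact ⟨by linarith, by linarith⟩
    have := (hM j).dist_le_mul _ hz1 _ hz2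
    rw [Real.dist_eq, Prod.dist_eq] at this
    refine this.trans ?_
    refine mul_le_mul_of_nonneg_left ?_ (M j).2
    simpa [hs0.le] using h1
  have hmv := norm_image_sub_le_of_norm_deriv_le_segment' (fun u hu => (hder u hu).hasDerivWithinAt) hbd
    s ⟨hs0.le, le_refl s⟩
  simp only [zero_smul, add_zero, zero_mul, sub_zero] at hmv
  have hMj : (M j : ℝ) ≤ ∑ j, (M j : ℝ) :=
    Finset.single_le_sum (f := fun j => (M j : ℝ)) (fun j _ => (M j).2) (Finset.mem_univ j)
  rw [norm_eq_abs] at hmv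
  have k1 : s * |D| ≤ s * ((K + K * 4 ^ N + ∑ j, (M j : ℝ)) * s) := by
    rw [← abs_of_pos hs0, ← abs_mul, abs_of_pos hs0]
    have k2 := abs_le.1 hmv
    have k3 := abs_le.1 hφ
    have k4 := abs_le.1 hφ2
    have k5 : (M j : ℝ) * s * s ≤ (∑ j, (M j : ℝ)) * s * s := by gcongr
    rw [abs_le]
    constructor <;> nlinarith
  exact le_of_mul_le_mul_left k1 hs0

end Taylor
end Loj


namespace Loj

section Main
open scoped Topology
open MvPolynomial

lemma pv_cl {n : ℕ} (P : MvPolynomial (Fin n) (AR n)) (a y : ℕ → (Fin n → ℝ)) :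
    eval (fun j => cl (fun k => y k j)) (P.map (evA a)) = cl (fun k => pv P (a k) (y k)) := by
  have h := mvpoly_eval (P.map (preE a)) (fun j k => y k j)
  rw [MvPolynomial.map_map] at h
  rw [evA, h]
  congr 1
  funext k
  rw [MvPolynomial.map_map]
  rfl

lemma core {n : ℕ} {f : (Fin n → ℝ) → ℝ} (hf : AnalyticAt ℝ f 0) {x : ℕ → (Fin n → ℝ)}
    (hx : Tendsto x (hyperfilter ℕ : Filter ℕ) (𝓝 0)) {cs : ℕ → ℝ} (hcs0 : ∀ k, 0 < cs k)
    (hcs : Tendsto cs (hyperfilter ℕ : Filter ℕ) (𝓝 0))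
    (hfx : ∀ᶠ k in (hyperfilter ℕ : Filter ℕ), f (x k) = cs k)
    (hd : ∀ j, ∀ M : ℕ, ∀ᶠ k in (hyperfilter ℕ : Filter ℕ), |pd f j (x k) / cs k| ^ M * cs k ≤ 1) : False := by
  have hc0 : 0 < cl cs := by
    rw [← map_zero cl, cl_lt]; exact Filter.Eventually.of_forall hcs0
  have hc : ∀ m : ℕ, (m : HK) * cl cs ≤ 1 := by
    intro m
    rw [← map_natCast cl, ← map_mul, ← map_one cl, cl_le]
    have h1 := hcs.const_mul (m : ℝ)
    rw [mul_zero] at h1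
    filter_upwards [h1.eventually (gt_mem_nhds zero_lt_one)] with k hk
    exact hk.le
  have hc1 : cl cs < 1 := by
    rw [← map_one cl, cl_lt]
    exact hcs.eventually (gt_mem_nhds zero_lt_one)
  set c := cl cs with hcdef
  obtain ⟨a, ha, hxa⟩ := lemA (hc0 := hc0) (hc := hc) n x hx
  set y : ℕ → (Fin n → ℝ) := fun k => x k - a k with hy
  have hyv : ∀ j, (OO c hc0 hc).valuation (cl (fun k => y k j)) < 1 := hxa
  have hyn := v_norm hyv
  have hyt : Tendsto y (hyperfilter ℕ : Filter ℕ) (𝓝 0) := by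
    simpa using hx.sub ha.1
  obtain ⟨N, hN⟩ := OO_lt.1 hyn
  have hN1 : |cl (fun k => ‖y k‖)| ^ (N+1) ≤ c := by
    refine le_trans ?_ hN.le
    exact pow_le_pow_of_le_one (abs_nonneg _) (OO_conv.abs_lt_one hyn).le (Nat.le_succ N)
  rw [cl_abs, ← map_pow, hcdef, cl_le] at hN1
  obtain ⟨P, K, δ, hδ, hb⟩ := taylor2 (N := N+1) (by omega) hf
  have hev : ∀ᶠ k in (hyperfilter ℕ : Filter ℕ), |f (x k) - pv P (a k) (y k)| ≤ K * cs k ^ 2 ∧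
      ∀ j, |pd f j (x k) - pv (pderiv j P) (a k) (y k)| ≤ K * cs k := by
    have e1 := (Metric.tendsto_nhds.1 ha.1) δ hδ
    have e2 := (Metric.tendsto_nhds.1 hyt) δ hδ
    filter_upwards [e1, e2, hcs.eventually (gt_mem_nhds hδ), hN1] with k h1 h2 h3 h4
    rw [dist_zero_right] at h1 h2
    have := hb (a k) (y k) h1 h2 (cs k) (hcs0 k) h3 (by simpa using h4)
    rwa [show a k + y k = x k by simp [hy]] at this
  refine poly_contra (O := OO c hc0 hc) OO_conv HK_ivp HK_minp (HK_unc c hc0 hc) c hc0 (OO_val_c hc1) OO_arch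
    (kA a) ha.kA_le (P.map (evA a)) ?_ (fun j => cl (fun k => y k j)) hyv ?_ ?_
  · intro m
    rw [coeff_map]
    exact ev_mem_kA a _
  · rw [pv_cl, ← map_pow]
    have e1 : cl (fun k => pv P (a k) (y k)) - c = cl (fun k => pv P (a k) (y k) - cs k) :=
      (map_sub cl _ _).symm
    have e2 : c ^ 2 = cl (fun k => cs k ^ 2) := (map_pow cl _ _).symm
    rw [e1, e2]
    refine v_le_mul (C := K) ?_
    filter_upwards [hev, hfx] with k h1 h2
    have := h1.1
    rw [h2, abs_sub_comm] at this
    simpa using this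
  · intro j
    rw [pderiv_map, pv_cl]
    have e : cl (fun k => pv (pderiv j P) (a k) (y k)) = cl (fun k => pd f j (x k)) -
        cl (fun k => pd f j (x k) - pv (pderiv j P) (a k) (y k)) := by
      rw [← map_sub]; congr 1; funext k; simp
    rw [e]
    refine Valuation.map_sub_le _ ?_ ?_
    · have e2 : cl (fun k => pd f j (x k)) = cl (fun k => pd f j (x k) / cs k) * c := by
        refine Eq.trans ?_ (map_mul cl _ _)
        congr 1
        funext k
        simp only [Pi.mul_apply]
        rw [div_mul_cancel₀ _ (hcs0 k).ne']
      rw [e2, map_mul]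
      refine mul_le_of_le_one_left' (((OO c hc0 hc).valuation_le_one_iff _).2 ?_)
      intro M
      rw [cl_abs, hcdef, ← map_pow, ← map_mul, ← map_one cl, cl_le]
      filter_upwards [hd j M] with k hk
      simpa using hk
    · refine v_le_mul (C := K) ?_
      filter_upwards [hev] with k h1
      rw [abs_of_pos (hcs0 k)]
      exact h1.2 j

lemma real_est {q c B e : ℝ} {M : ℕ} (hq : 0 ≤ q) (hc0 : 0 < c) (hc1 : c ≤ 1) (hM : e * M ≤ 1)
    (h : q ^ 2 < c ^ (2 - e)) (hB : 0 ≤ B) (hBc : B ^ (2 * M) * c ≤ 1) : (B * q / c) ^ M * c ≤ 1 := by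
  have h1 : (q / c) ^ 2 ≤ c ^ (-e) := by
    rw [div_pow, div_le_iff₀ (by positivity)]
    refine h.le.trans (le_of_eq ?_)
    rw [← rpow_natCast c 2, ← rpow_add hc0]
    congr 1; push_cast; ring
  have h2 : ((B * q / c) ^ M * c) ^ 2 ≤ 1 := by
    calc ((B * q / c) ^ M * c) ^ 2 = (B ^ (2 * M) * c) * (((q / c) ^ 2) ^ M * c) := by ring
      _ ≤ 1 * ((c ^ (-e)) ^ M * c) := by gcongr
      _ = c ^ (1 - e * M) := by
        rw [one_mul, ← rpow_natCast (c ^ (-e)), ← rpow_mul hc0.le]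
        nth_rewrite 2 [← rpow_one c]
        rw [← rpow_add hc0]
        congr 1; ring
      _ ≤ 1 := rpow_le_one hc0.le hc1 (by linarith)
  have h3 : 0 ≤ (B * q / c) ^ M * c := by positivity
  nlinarith

end Main
end Loj

theorem stmt_17 (k : ℕ) (W : EuclideanSpace ℝ (Fin k) → ℝ)
    (hW : AnalyticAt ℝ W 0) (hcrit : gradient W 0 = 0) :
    ∃ α ∈ Set.Ioo (1 : ℝ) 2, ∃ δ > 0, ∀ x : EuclideanSpace ℝ (Fin k), ‖x‖ < δ →
      ‖gradient W x‖ ^ 2 ≥ |W x - W 0| ^ α := by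
  by_contra hcon
  push Not at hcon
  have hn : ∀ n : ℕ, ∃ x : EuclideanSpace ℝ (Fin k), ‖x‖ < 1 / ((n:ℝ) + 1) ∧
      ‖gradient W x‖ ^ 2 < |W x - W 0| ^ ((2:ℝ) - 1 / ((n:ℝ) + 2)) := by
    intro n
    have h1 : (0:ℝ) < 1 / ((n:ℝ) + 2) := by positivity
    have h2 : 1 / ((n:ℝ) + 2) < 1 := by
      rw [div_lt_one (by positivity)]
      have : (0:ℝ) ≤ n := Nat.cast_nonneg n
      linarith
    exact hcon _ ⟨by linarith, by linarith⟩ _ (by positivity)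
  choose x hx1 hx2 using hn
  have hx : Tendsto x (hyperfilter ℕ : Filter ℕ) (nhds 0) := by
    refine Tendsto.mono_left ?_ Nat.hyperfilter_le_atTop
    exact squeeze_zero_norm (fun n => (hx1 n).le) tendsto_one_div_add_atTop_nhds_zero_nat
  set cs : ℕ → ℝ := fun n => |W (x n) - W 0| with hcsd
  have hcs0 : ∀ n, 0 < cs n := by
    intro n
    refine lt_of_le_of_ne (abs_nonneg _) fun h => ?_
    have h3 := hx2 n
    have h1 : |W (x n) - W 0| = 0 := h.symm
    have h2 : (2:ℝ) - 1 / ((n:ℝ) + 2) ≠ 0 := by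
      have h2 : 1 / ((n:ℝ) + 2) < 1 := by
        rw [div_lt_one (by positivity)]
        have : (0:ℝ) ≤ n := Nat.cast_nonneg n
        linarith
      linarith
    rw [h1, zero_rpow h2] at h3
    exact absurd h3 (not_lt.2 (by positivity))
  have hcs : Tendsto cs (hyperfilter ℕ : Filter ℕ) (nhds 0) := by
    have h1 : Tendsto (fun n => W (x n)) (hyperfilter ℕ : Filter ℕ) (nhds (W 0)) :=
      hW.continuousAt.tendsto.comp hx
    have := (h1.sub_const (W 0)).abs
    simpa using this
  obtain ⟨σ, hσ, hσc⟩ : ∃ σ : ℝ, |σ| = 1 ∧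
      ∀ᶠ n in (hyperfilter ℕ : Filter ℕ), σ * (W (x n) - W 0) = cs n := by
    by_cases h : ∀ᶠ n in (hyperfilter ℕ : Filter ℕ), 0 ≤ W (x n) - W 0
    · refine ⟨1, abs_one, ?_⟩
      filter_upwards [h] with n hn
      rw [one_mul, hcsd]; simp only [abs_of_nonneg hn]
    · refine ⟨-1, by simp, ?_⟩
      filter_upwards [Ultrafilter.eventually_not.2 h] with n hn
      rw [hcsd]; simp only [abs_of_neg (not_le.1 hn)]; ring
  let E := EuclideanSpace.equiv (Fin k) ℝ
  let f : (Fin k → ℝ) → ℝ := fun y => σ * (W (E.symm y) - W 0)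
  have hE0 : E.symm 0 = 0 := map_zero _
  have hWE : AnalyticAt ℝ (fun y => W (E.symm y)) 0 :=
    AnalyticAt.fun_comp (f := fun y => E.symm y) (by rw [hE0]; exact hW)
      ((E.symm : (Fin k → ℝ) →L[ℝ] EuclideanSpace ℝ (Fin k)).analyticAt 0)
  have hf : AnalyticAt ℝ f 0 := analyticAt_const.fun_mul (hWE.fun_sub analyticAt_const)
  have hEx : Tendsto (fun n => E (x n)) (hyperfilter ℕ : Filter ℕ) (nhds 0) := by
    have := (E.continuous.tendsto 0).comp hx
    rwa [map_zero] at this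
  have hdW : ∀ᶠ n in (hyperfilter ℕ : Filter ℕ), AnalyticAt ℝ W (x n) :=
    hx.eventually hW.eventually_analyticAt
  refine Loj.core hf hEx hcs0 hcs ?_ ?_
  · filter_upwards [hσc] with n h
    simpa [f] using h
  · intro j M
    set B := ‖E.symm (Pi.single j 1)‖ with hB
    have h1 : Tendsto (fun n => B ^ (2 * M) * cs n) (hyperfilter ℕ : Filter ℕ) (nhds 0) := by
      simpa using hcs.const_mul (B ^ (2 * M))
    have h2 : ∀ᶠ n in (hyperfilter ℕ : Filter ℕ), M ≤ n :=
      Filter.Eventually.filter_mono Nat.hyperfilter_le_atTop (eventually_ge_atTop M)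
    filter_upwards [h1.eventually (gt_mem_nhds zero_lt_one), h2, hdW,
      hcs.eventually (gt_mem_nhds zero_lt_one)] with n k1 k2 k3 k4
    have hpd : |Loj.pd f j (E (x n))| ≤ B * ‖gradient W (x n)‖ := by
      have hxe : E.symm (E (x n)) = x n := E.symm_apply_apply _
      have d1 : HasFDerivAt W (fderiv ℝ W (x n)) (E.symm (E (x n))) := by
        rw [hxe]; exact k3.differentiableAt.hasFDerivAt
      have d2 : HasFDerivAt f (σ • (fderiv ℝ W (x n) ∘L
          (E.symm : (Fin k → ℝ) →L[ℝ] EuclideanSpace ℝ (Fin k)))) (E (x n)) :=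
        ((d1.comp (E (x n)) E.symm.hasFDerivAt).sub_const (W 0)).const_mul σ
      rw [Loj.pd, d2.fderiv]
      have hgn : ‖gradient W (x n)‖ = ‖fderiv ℝ W (x n)‖ := by
        rw [gradient, LinearIsometryEquiv.norm_map]
      rw [hgn, mul_comm]
      change |σ * fderiv ℝ W (x n) (E.symm (Pi.single j 1))| ≤ _
      rw [abs_mul, hσ, one_mul]
      exact ContinuousLinearMap.le_opNorm (fderiv ℝ W (x n)) _
    have hest := Loj.real_est (M := M) (norm_nonneg (gradient W (x n))) (hcs0 n) k4.le (e := 1 / ((n:ℝ) + 2))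
      (by
        rw [div_mul_eq_mul_div, one_mul, div_le_one (by positivity)]
        have : (M:ℝ) ≤ n := by exact_mod_cast k2
        linarith) (hx2 n) (norm_nonneg _) k1.le
    refine le_trans ?_ hest
    have := hcs0 n
    rw [abs_div, abs_of_pos this]
    gcongr
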